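/- Let k be the field with two elements and G = S_8 the symmetric group on eight letters. Let M and N be finitely generated left kG-modules. If Ext_{kG}^m(M, N) ≠ 0 for some m > 0, then there exists an integer t with 0 ≤ t ≤ 419 and an integer m_0 such that Ext_{kG}^m(M, N) ≠ 0 for every m ≥ m_0 with m ≡ t (mod 420). -/

import Mathlib

open TensorProduct

noncomputable section
namespace S8

abbrev kk := ZMod 2

structure GM (L : Type) [Group L] where
  V : Type
  [acg : AddCommGroup V]
  [mod : Module kk V]
  ρ : Representation kk L V

attribute [instance] GM.acg GM.mod

section basic
variable {L : Type} [Group L] 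

/-- diagonal tensor product -/
abbrev tens (X Y : GM L) : GM L := ⟨TensorProduct kk X.V Y.V, X.ρ.tprod Y.ρ⟩

notation:70 X:70 "⊠" Y:71 => tens X Y

abbrev triv (L : Type) [Group L] : GM L := ⟨kk, Representation.trivial kk L kk⟩

abbrev res {H : Type} [Group H] (θ : H →* L) (X : GM L) : GM H := ⟨X.V, X.ρ.comp θ⟩

def Inv (X : GM L) (x : X.V) : Prop := ∀ g, X.ρ g x = x

def Eqv (X Y : GM L) (f : X.V →ₗ[kk] Y.V) : Prop := ∀ g x, f (X.ρ g x) = Y.ρ g (f x)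

lemma add_self_kk {V : Type} [AddCommGroup V] [Module kk V] (x : V) : x + x = 0 := by
  have : (1 + 1 : kk) • x = 0 := by rw [show (1 + 1 : kk) = 0 from rfl, zero_smul]
  simpa [add_smul] using this

lemma neg_kk {V : Type} [AddCommGroup V] [Module kk V] (x : V) : -x = x := by
  rw [neg_eq_iff_add_eq_zero]; exact add_self_kk x

lemma sub_kk {V : Type} [AddCommGroup V] [Module kk V] (x y : V) : x - y = x + y := by
  rw [sub_eq_add_neg, neg_kk]

@[simp] lemma ρ_one (X : GM L) (x : X.V) : X.ρ 1 x = x := by simp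

lemma ρ_mul (X : GM L) (g h : L) (x : X.V) : X.ρ (g * h) x = X.ρ g (X.ρ h x) := by simp

@[simp] lemma ρ_inv_self (X : GM L) (g : L) (x : X.V) : X.ρ g⁻¹ (X.ρ g x) = x := by
  rw [← ρ_mul]; simp

@[simp] lemma ρ_self_inv (X : GM L) (g : L) (x : X.V) : X.ρ g (X.ρ g⁻¹ x) = x := by
  rw [← ρ_mul]; simp

lemma tens_ρ (X Y : GM L) (g : L) (x : X.V) (y : Y.V) :
    (X ⊠ Y).ρ g (x ⊗ₜ[kk] y) = (X.ρ g x) ⊗ₜ[kk] (Y.ρ g y) := by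
  simp [tens]

lemma Inv.add {X : GM L} {x y : X.V} (hx : Inv X x) (hy : Inv X y) : Inv X (x + y) := by
  intro g; rw [map_add, hx, hy]

lemma Inv.smul {X : GM L} {x : X.V} (c : kk) (hx : Inv X x) : Inv X (c • x) := by
  intro g; rw [map_smul, hx]

lemma Inv.zero {X : GM L} : Inv X 0 := fun _ => map_zero _

lemma Inv.tmul {X Y : GM L} {x : X.V} {y : Y.V} (hx : Inv X x) (hy : Inv Y y) :
    Inv (X ⊠ Y) (x ⊗ₜ[kk] y) := by
  intro g; rw [tens_ρ, hx, hy]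

lemma Inv.map {X Y : GM L} {f : X.V →ₗ[kk] Y.V} (hf : Eqv X Y f) {x : X.V} (hx : Inv X x) :
    Inv Y (f x) := by
  intro g; rw [← hf, hx]

lemma Inv.of_map {X Y : GM L} {f : X.V →ₗ[kk] Y.V} (hf : Eqv X Y f)
    (hi : Function.Injective f) {x : X.V} (hx : Inv Y (f x)) : Inv X x := by
  intro g; apply hi; rw [hf, hx]

lemma Inv.res {H : Type} [Group H] (θ : H →* L) {X : GM L} {x : X.V} (hx : Inv X x) :
    Inv (res θ X) x := fun h => hx (θ h)

lemma Eqv.res {H : Type} [Group H] (θ : H →* L) {X Y : GM L} {f : X.V →ₗ[kk] Y.V}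
    (hf : Eqv X Y f) : Eqv (res θ X) (res θ Y) f := fun h => hf (θ h)

lemma Eqv.id (X : GM L) : Eqv X X LinearMap.id := fun _ _ => rfl

lemma Eqv.comp {X Y Z : GM L} {f : X.V →ₗ[kk] Y.V} {h : Y.V →ₗ[kk] Z.V}
    (hh : Eqv Y Z h) (hf : Eqv X Y f) : Eqv X Z (h ∘ₗ f) := by
  intro g x; simp only [LinearMap.comp_apply]; rw [hf, hh]

lemma Eqv.add {X Y : GM L} {f h : X.V →ₗ[kk] Y.V}
    (hf : Eqv X Y f) (hh : Eqv X Y h) : Eqv X Y (f + h) := by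
  intro g x; simp only [LinearMap.add_apply]; rw [hf, hh, map_add]

lemma Eqv.zero {X Y : GM L} : Eqv X Y 0 := by
  intro g x; simp

lemma Eqv.map {X Y X' Y' : GM L} {f : X.V →ₗ[kk] Y.V} {f' : X'.V →ₗ[kk] Y'.V}
    (hf : Eqv X Y f) (hf' : Eqv X' Y' f') : Eqv (X ⊠ X') (Y ⊠ Y') (TensorProduct.map f f') := by
  intro g x
  induction x using TensorProduct.induction_on with
  | zero => simp
  | add x y hx hy => simp only [map_add, hx, hy]
  | tmul x y => rw [tens_ρ, map_tmul, map_tmul, tens_ρ, hf, hf']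

lemma Eqv.symm {X Y : GM L} {e : X.V ≃ₗ[kk] Y.V} (he : Eqv X Y e.toLinearMap) :
    Eqv Y X e.symm.toLinearMap := by
  intro g y
  apply e.injective
  have := he g (e.symm y)
  simp at this
  simp [this]

lemma eqv_assoc (X Y Z : GM L) :
    Eqv ((X ⊠ Y) ⊠ Z) (X ⊠ (Y ⊠ Z)) (TensorProduct.assoc kk X.V Y.V Z.V).toLinearMap := by
  intro g x
  rw [← LinearMap.comp_apply, ← LinearMap.comp_apply]
  congr 1
  apply TensorProduct.ext_threefold
  intro x y z
  simp

lemma eqv_comm (X Y : GM L) :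
    Eqv (X ⊠ Y) (Y ⊠ X) (TensorProduct.comm kk X.V Y.V).toLinearMap := by
  intro g x
  rw [← LinearMap.comp_apply, ← LinearMap.comp_apply]
  congr 1
  apply TensorProduct.ext'
  intro x y
  simp

lemma eqv_rid (X : GM L) :
    Eqv (X ⊠ triv L) X (TensorProduct.rid kk X.V).toLinearMap := by
  intro g x
  rw [← LinearMap.comp_apply, ← LinearMap.comp_apply]
  congr 1
  apply TensorProduct.ext'
  intro x y
  simp

/-- right multiplication by an element. -/
abbrev rmul (V : Type) {W : Type} [AddCommGroup V] [Module kk V] [AddCommGroup W] [Module kk W]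
    (w : W) : V →ₗ[kk] (V ⊗[kk] W) := (TensorProduct.mk kk V W).flip w

lemma eqv_rmul (X : GM L) {Y : GM L} {y : Y.V} (hy : Inv Y y) : Eqv X (X ⊠ Y) (rmul X.V y) := by
  intro g x
  simp only [rmul, LinearMap.flip_apply, TensorProduct.mk_apply]
  rw [tens_ρ, hy]

end basic

section norm
variable {L : Type} [Group L] [Fintype L]

def nm (X : GM L) : X.V →ₗ[kk] X.V := ∑ g, X.ρ g

lemma nm_apply (X : GM L) (x : X.V) : nm X x = ∑ g, X.ρ g x := by
  simp [nm]

def IsNm (X : GM L) (x : X.V) : Prop := ∃ z, nm X z = x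

lemma inv_nm (X : GM L) (z : X.V) : Inv X (nm X z) := by
  intro g
  rw [nm_apply, map_sum]
  simp_rw [← ρ_mul]
  exact Fintype.sum_equiv (Equiv.mulLeft g) _ _ (fun _ => rfl)

lemma IsNm.inv {X : GM L} {x : X.V} (h : IsNm X x) : Inv X x := by
  obtain ⟨z, rfl⟩ := h; exact inv_nm X z

lemma nm_map {X Y : GM L} {f : X.V →ₗ[kk] Y.V} (hf : Eqv X Y f) (z : X.V) :
    f (nm X z) = nm Y (f z) := by
  rw [nm_apply, nm_apply, map_sum]
  exact Finset.sum_congr rfl (fun g _ => hf g z)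

lemma IsNm.map {X Y : GM L} {f : X.V →ₗ[kk] Y.V} (hf : Eqv X Y f) {x : X.V} (h : IsNm X x) :
    IsNm Y (f x) := by
  obtain ⟨z, rfl⟩ := h; exact ⟨f z, (nm_map hf z).symm⟩

lemma IsNm.add {X : GM L} {x y : X.V} (hx : IsNm X x) (hy : IsNm X y) : IsNm X (x + y) := by
  obtain ⟨a, rfl⟩ := hx; obtain ⟨b, rfl⟩ := hy; exact ⟨a + b, map_add _ _ _⟩

lemma IsNm.smul {X : GM L} {x : X.V} (c : kk) (hx : IsNm X x) : IsNm X (c • x) := by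
  obtain ⟨a, rfl⟩ := hx; exact ⟨c • a, map_smul _ _ _⟩

lemma IsNm.zero {X : GM L} : IsNm X 0 := ⟨0, map_zero _⟩

lemma IsNm.of_add {X : GM L} {x y : X.V} (h : IsNm X (x + y)) (hy : IsNm X y) : IsNm X x := by
  have := h.add hy
  rwa [add_assoc, add_self_kk, add_zero] at this

lemma IsNm.tmul {X Y : GM L} {x : X.V} {y : Y.V} (hx : IsNm X x) (hy : Inv Y y) :
    IsNm (X ⊠ Y) (x ⊗ₜ[kk] y) := IsNm.map (eqv_rmul X hy) hx

/-- every invariant is a norm -/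
def TZ (X : GM L) : Prop := ∀ x, Inv X x → IsNm X x

lemma TZ.of_equiv {X Y : GM L} {e : X.V ≃ₗ[kk] Y.V} (he : Eqv X Y e.toLinearMap) (h : TZ X) :
    TZ Y := by
  intro y hy
  have := (h _ (hy.map he.symm)).map he
  simpa using this

def Null (X Y : GM L) (f : X.V →ₗ[kk] Y.V) : Prop :=
  ∃ φ : X.V →ₗ[kk] Y.V, ∀ v, f v = ∑ g, Y.ρ g (φ (X.ρ g⁻¹ v))

/-- averaging operator -/
def avg (X Y : GM L) (φ : X.V →ₗ[kk] Y.V) : X.V →ₗ[kk] Y.V := ∑ g, Y.ρ g ∘ₗ φ ∘ₗ X.ρ g⁻¹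

lemma avg_apply (X Y : GM L) (φ : X.V →ₗ[kk] Y.V) (v : X.V) :
    avg X Y φ v = ∑ g, Y.ρ g (φ (X.ρ g⁻¹ v)) := by simp [avg]

lemma null_avg (X Y : GM L) (φ : X.V →ₗ[kk] Y.V) : Null X Y (avg X Y φ) :=
  ⟨φ, avg_apply X Y φ⟩

lemma Null.eq_avg {X Y : GM L} {f : X.V →ₗ[kk] Y.V} (h : Null X Y f) : ∃ φ, f = avg X Y φ := by
  obtain ⟨φ, h⟩ := h
  exact ⟨φ, LinearMap.ext fun v => by rw [h, avg_apply]⟩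

lemma Null.eqv {X Y : GM L} {f : X.V →ₗ[kk] Y.V} (h : Null X Y f) : Eqv X Y f := by
  obtain ⟨φ, h⟩ := h
  intro g v
  rw [h, h, map_sum]
  refine Fintype.sum_equiv (Equiv.mulLeft g⁻¹) _ _ (fun l => ?_)
  simp only [Equiv.coe_mulLeft]
  rw [← ρ_mul, ← ρ_mul]
  simp

lemma Null.isNm {X Y : GM L} {f : X.V →ₗ[kk] Y.V} (h : Null X Y f) {x : X.V} (hx : Inv X x) :
    IsNm Y (f x) := by
  obtain ⟨φ, h⟩ := h
  refine ⟨φ x, ?_⟩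
  rw [h, nm_apply]
  exact Finset.sum_congr rfl (fun g _ => by rw [hx])

lemma Null.comp_left {X Y Z : GM L} {f : X.V →ₗ[kk] Y.V} {h : Y.V →ₗ[kk] Z.V}
    (hh : Eqv Y Z h) (hf : Null X Y f) : Null X Z (h ∘ₗ f) := by
  obtain ⟨φ, hf⟩ := hf
  refine ⟨h ∘ₗ φ, fun v => ?_⟩
  simp only [LinearMap.comp_apply, hf, map_sum]
  exact Finset.sum_congr rfl (fun g _ => hh _ _)

lemma Null.comp_right {X Y Z : GM L} {f : X.V →ₗ[kk] Y.V} {h : Y.V →ₗ[kk] Z.V}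
    (hh : Null Y Z h) (hf : Eqv X Y f) : Null X Z (h ∘ₗ f) := by
  obtain ⟨φ, hh⟩ := hh
  refine ⟨φ ∘ₗ f, fun v => ?_⟩
  simp only [LinearMap.comp_apply, hh]
  exact Finset.sum_congr rfl (fun g _ => by rw [hf])

lemma Null.add {X Y : GM L} {f h : X.V →ₗ[kk] Y.V} (hf : Null X Y f) (hh : Null X Y h) :
    Null X Y (f + h) := by
  obtain ⟨φ, hf⟩ := hf
  obtain ⟨ψ, hh⟩ := hh
  refine ⟨φ + ψ, fun v => ?_⟩
  simp [hf, hh, Finset.sum_add_distrib]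

lemma Null.zero {X Y : GM L} : Null X Y 0 := ⟨0, fun v => by simp⟩

lemma Null.map_left {X Y X' Y' : GM L} {f : X.V →ₗ[kk] Y.V} {h : X'.V →ₗ[kk] Y'.V}
    (hf : Null X Y f) (hh : Eqv X' Y' h) :
    Null (X ⊠ X') (Y ⊠ Y') (TensorProduct.map f h) := by
  obtain ⟨φ, hf⟩ := hf
  refine ⟨TensorProduct.map φ h, fun v => ?_⟩
  induction v using TensorProduct.induction_on with
  | zero => simp
  | add x y hx hy => simp only [map_add, hx, hy, Finset.sum_add_distrib]
  | tmul x y =>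
    simp only [map_tmul, hf, TensorProduct.sum_tmul]
    refine Finset.sum_congr rfl (fun g _ => ?_)
    rw [tens_ρ, map_tmul, tens_ρ, hh, ρ_self_inv]

lemma Null.map_right {X Y X' Y' : GM L} {f : X.V →ₗ[kk] Y.V} {h : X'.V →ₗ[kk] Y'.V}
    (hf : Eqv X Y f) (hh : Null X' Y' h) :
    Null (X ⊠ X') (Y ⊠ Y') (TensorProduct.map f h) := by
  obtain ⟨φ, hh⟩ := hh
  refine ⟨TensorProduct.map f φ, fun v => ?_⟩
  induction v using TensorProduct.induction_on with
  | zero => simp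
  | add x y hx hy => simp only [map_add, hx, hy, Finset.sum_add_distrib]
  | tmul x y =>
    simp only [map_tmul, hh, TensorProduct.tmul_sum]
    refine Finset.sum_congr rfl (fun g _ => ?_)
    rw [tens_ρ, map_tmul, tens_ρ, hf, ρ_self_inv]

/-- multiplication by a norm is null -/
lemma null_rmul (X : GM L) {Y : GM L} {y : Y.V} (hy : IsNm Y y) : Null X (X ⊠ Y) (rmul X.V y) := by
  obtain ⟨z, rfl⟩ := hy
  refine ⟨rmul X.V z, fun v => ?_⟩
  simp only [rmul, LinearMap.flip_apply, TensorProduct.mk_apply, nm_apply, tmul_sum]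
  exact Finset.sum_congr rfl (fun g _ => by rw [tens_ρ, ρ_self_inv])

lemma IsNm.tmul_right {X Y : GM L} {x : X.V} {y : Y.V} (hx : Inv X x) (hy : IsNm Y y) :
    IsNm (X ⊠ Y) (x ⊗ₜ[kk] y) := (null_rmul X hy).isNm hx

/-- congruence of tensor products of maps modulo null maps -/
lemma Null.map_add {X Y X' Y' : GM L} {f f' : X.V →ₗ[kk] Y.V} {h h' : X'.V →ₗ[kk] Y'.V}
    (hf : Null X Y (f + f')) (hf' : Eqv X Y f') (hh : Eqv X' Y' h) (hn : Null X' Y' (h + h')) :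
    Null (X ⊠ X') (Y ⊠ Y') (TensorProduct.map f h + TensorProduct.map f' h') := by
  have h1 := (hf.map_left hh).add (Null.map_right hf' hn)
  convert h1 using 1
  rw [TensorProduct.map_add_left, TensorProduct.map_add_right]
  rw [add_assoc, ← add_assoc (TensorProduct.map f' h), add_self_kk, zero_add]

lemma sum_coset {H : Type} [Group H] [Fintype H] (θ : H →* L) (hθ : Function.Injective θ) :
    ∃ (S : Finset L), ∀ (V : Type) [AddCommGroup V] (f : L → V),
      ∑ l, f l = ∑ h, ∑ r ∈ S, f (θ h * r) := by
  classical
  obtain ⟨S, hS, -⟩ := (θ.range).exists_isComplement_right 1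
  refine ⟨Set.toFinset S, fun V _ f => ?_⟩
  have hb : Function.Bijective (fun x : H × S => θ x.1 * x.2) :=
    Function.Bijective.comp hS
      (Equiv.prodCongr (MonoidHom.ofInjective hθ).toEquiv (Equiv.refl S)).bijective
  rw [← Fintype.sum_bijective _ hb (fun x => f (θ x.1 * x.2)) f (fun _ => rfl)]
  rw [Fintype.sum_prod_type]
  refine Finset.sum_congr rfl (fun h _ => ?_)
  rw [← Finset.sum_coe_sort (Set.toFinset S)]
  exact Fintype.sum_equiv (Equiv.subtypeEquivRight (by simp)) _ _ (fun _ => rfl)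

lemma IsNm.res {H : Type} [Group H] [Fintype H] {θ : H →* L} (hθ : Function.Injective θ)
    {X : GM L} {x : X.V} (hx : IsNm X x) : IsNm (res θ X) x := by
  obtain ⟨z, rfl⟩ := hx
  obtain ⟨S, hS⟩ := sum_coset θ hθ
  refine ⟨∑ r ∈ S, X.ρ r z, ?_⟩
  rw [nm_apply, nm_apply, hS]
  refine Finset.sum_congr rfl (fun h _ => ?_)
  rw [map_sum]
  refine Finset.sum_congr rfl (fun r _ => ?_)
  rw [ρ_mul]; rfl

lemma Null.res {H : Type} [Group H] [Fintype H] {θ : H →* L} (hθ : Function.Injective θ)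
    {X Y : GM L} {f : X.V →ₗ[kk] Y.V} (hf : Null X Y f) : Null (res θ X) (res θ Y) f := by
  obtain ⟨φ, hf⟩ := hf
  obtain ⟨S, hS⟩ := sum_coset θ hθ
  refine ⟨∑ r ∈ S, Y.ρ r ∘ₗ φ ∘ₗ X.ρ r⁻¹, fun v => ?_⟩
  rw [hf, hS]
  refine Finset.sum_congr rfl (fun h _ => ?_)
  simp only [LinearMap.sum_apply, map_sum, LinearMap.comp_apply, mul_inv_rev]
  refine Finset.sum_congr rfl (fun r _ => ?_)
  rw [ρ_mul, ρ_mul]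
  simp

end norm
end S8
end
open TensorProduct
noncomputable section
namespace S8

/-- Linearly split short exact sequence of modules. -/
structure SES {L : Type} [Group L] (A B C : GM L) where
  i : A.V →ₗ[kk] B.V
  p : B.V →ₗ[kk] C.V
  r : B.V →ₗ[kk] A.V
  s : C.V →ₗ[kk] B.V
  hi : Eqv A B i
  hp : Eqv B C p
  ri : ∀ a, r (i a) = a
  ps : ∀ c, p (s c) = c
  split : ∀ b, i (r b) + s (p b) = b

namespace SES
variable {L : Type} [Group L] {A B C : GM L} (E : SES A B C)

lemma inj : Function.Injective E.i := Function.LeftInverse.injective E.ri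

lemma pi (a : A.V) : E.p (E.i a) = 0 := by
  have h := E.split (E.i a)
  rw [E.ri] at h
  have h2 : E.s (E.p (E.i a)) = 0 := by simpa using h
  rw [← E.ps (E.p (E.i a)), h2, map_zero]

lemma ir {b : B.V} (h : E.p b = 0) : E.i (E.r b) = b := by
  have := E.split b
  rwa [h, map_zero, add_zero] at this

lemma inv_r {b : B.V} (h : E.p b = 0) (hb : Inv B b) : Inv A (E.r b) := by
  apply Inv.of_map E.hi E.inj
  rwa [E.ir h]

def tl (X : GM L) : SES (X ⊠ A) (X ⊠ B) (X ⊠ C) where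
  i := TensorProduct.map LinearMap.id E.i
  p := TensorProduct.map LinearMap.id E.p
  r := TensorProduct.map LinearMap.id E.r
  s := TensorProduct.map LinearMap.id E.s
  hi := (Eqv.id X).map E.hi
  hp := (Eqv.id X).map E.hp
  ri := by
    intro a
    induction a using TensorProduct.induction_on with
    | zero => simp
    | add x y hx hy => simp only [map_add, hx, hy]
    | tmul x y => simp [E.ri]
  ps := by
    intro a
    induction a using TensorProduct.induction_on with
    | zero => simp
    | add x y hx hy => simp only [map_add, hx, hy]
    | tmul x y => simp [E.ps]
  split := by
    intro a
    induction a using TensorProduct.induction_on with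
    | zero => simp
    | add x y hx hy =>
      conv_rhs => rw [← hx, ← hy]
      simp only [map_add]
      abel
    | tmul x y => simp only [map_tmul, LinearMap.id_apply]; rw [← tmul_add, E.split]

def tr (X : GM L) : SES (A ⊠ X) (B ⊠ X) (C ⊠ X) where
  i := TensorProduct.map E.i LinearMap.id
  p := TensorProduct.map E.p LinearMap.id
  r := TensorProduct.map E.r LinearMap.id
  s := TensorProduct.map E.s LinearMap.id
  hi := E.hi.map (Eqv.id X)
  hp := E.hp.map (Eqv.id X)
  ri := by
    intro a
    induction a using TensorProduct.induction_on with
    | zero => simp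
    | add x y hx hy => simp only [map_add, hx, hy]
    | tmul x y => simp [E.ri]
  ps := by
    intro a
    induction a using TensorProduct.induction_on with
    | zero => simp
    | add x y hx hy => simp only [map_add, hx, hy]
    | tmul x y => simp [E.ps]
  split := by
    intro a
    induction a using TensorProduct.induction_on with
    | zero => simp
    | add x y hx hy =>
      conv_rhs => rw [← hx, ← hy]
      simp only [map_add]
      abel
    | tmul x y => simp only [map_tmul, LinearMap.id_apply]; rw [← add_tmul, E.split]

def res {H : Type} [Group H] (θ : H →* L) : SES (res θ A) (res θ B) (res θ C) where
  i := E.i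
  p := E.p
  r := E.r
  s := E.s
  hi := E.hi.res θ
  hp := E.hp.res θ
  ri := E.ri
  ps := E.ps
  split := E.split

variable [Fintype L]

lemma middle {b : B.V} (hb : Inv B b) (h : IsNm C (E.p b)) :
    ∃ a, Inv A a ∧ IsNm B (b + E.i a) := by
  obtain ⟨c, hc⟩ := h
  have h0 : E.p (b + nm B (E.s c)) = 0 := by
    rw [map_add, nm_map E.hp, E.ps, hc, add_self_kk]
  refine ⟨E.r (b + nm B (E.s c)), E.inv_r h0 (hb.add (inv_nm _ _)), ?_⟩
  rw [E.ir h0, ← add_assoc, add_self_kk, zero_add]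
  exact ⟨_, rfl⟩

lemma middle_hom {X : GM L} {f : X.V →ₗ[kk] B.V} (hf : Eqv X B f) (h : Null X C (E.p ∘ₗ f)) :
    ∃ ν, Eqv X A ν ∧ Null X B (f + E.i ∘ₗ ν) := by
  obtain ⟨φ, hφ⟩ := h.eq_avg
  have hn := null_avg X B (E.s ∘ₗ φ)
  have h0 : ∀ x, E.p ((f + avg X B (E.s ∘ₗ φ)) x) = 0 := by
    intro x
    have h1 := LinearMap.congr_fun hφ x
    simp only [LinearMap.comp_apply] at h1
    rw [LinearMap.add_apply, map_add, h1, avg_apply, avg_apply, map_sum]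
    have : ∀ g, E.p (B.ρ g ((E.s ∘ₗ φ) (X.ρ g⁻¹ x))) = C.ρ g (φ (X.ρ g⁻¹ x)) := by
      intro g; rw [E.hp, LinearMap.comp_apply, E.ps]
    simp only [this, add_self_kk]
  have he := hf.add hn.eqv
  refine ⟨E.r ∘ₗ (f + avg X B (E.s ∘ₗ φ)), ?_, ?_⟩
  · intro g x
    apply E.inj
    simp only [LinearMap.comp_apply]
    rw [E.ir (h0 _), E.hi, E.ir (h0 _), he]
  · have : f + E.i ∘ₗ E.r ∘ₗ (f + avg X B (E.s ∘ₗ φ)) = avg X B (E.s ∘ₗ φ) := by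
      apply LinearMap.ext
      intro x
      simp only [LinearMap.add_apply, LinearMap.comp_apply]
      have := E.ir (h0 x)
      simp only [LinearMap.add_apply] at this
      rw [this, ← add_assoc, add_self_kk, zero_add]
    rw [this]; exact hn

end SES

section Fn

/-- functions on a set -/
def fnRep (L S : Type) [Group L] [MulAction L S] : Representation kk L (S → kk) where
  toFun g := LinearMap.funLeft kk kk (fun s => g⁻¹ • s)
  map_one' := by ext; simp [LinearMap.funLeft]
  map_mul' g h := by
    apply LinearMap.ext; intro f; funext s
    simp [LinearMap.funLeft, mul_smul]

@[simp] lemma fnRep_apply {L S : Type} [Group L] [MulAction L S] (g : L) (f : S → kk) (s : S) :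
    fnRep L S g f s = f (g⁻¹ • s) := rfl

abbrev Fn (L S : Type) [Group L] [MulAction L S] : GM L := ⟨S → kk, fnRep L S⟩

lemma Fn_ρ {L S : Type} [Group L] [MulAction L S] (g : L) (f : S → kk) (s : S) :
    (Fn L S).ρ g f s = f (g⁻¹ • s) := rfl

variable (L : Type) [Group L]

abbrev FF : GM L := Fn L L

lemma FF_ρ (g : L) (f : L → kk) (s : L) :
    (FF L).ρ g f s = f (g⁻¹ * s) := rfl

abbrev cst : Submodule kk (L → kk) := Submodule.span kk {1}

lemma cst_le (g : L) : cst L ≤ (cst L).comap ((FF L).ρ g) := by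
  rw [Submodule.span_le, Set.singleton_subset_iff]
  change (FF L).ρ g 1 ∈ cst L
  have : (FF L).ρ g 1 = 1 := by funext s; rfl
  rw [this]
  exact Submodule.mem_span_singleton_self 1

def qRep : Representation kk L ((L → kk) ⧸ cst L) where
  toFun g := Submodule.mapQ _ _ ((FF L).ρ g) (cst_le L g)
  map_one' := by
    apply Submodule.linearMap_qext; apply LinearMap.ext; intro f
    simp
  map_mul' g h := by
    apply Submodule.linearMap_qext; apply LinearMap.ext; intro f
    simp

abbrev QQ : GM L := ⟨(L → kk) ⧸ cst L, qRep L⟩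

def qm : (L → kk) →ₗ[kk] (QQ L).V := (cst L).mkQ

lemma qm_surj : Function.Surjective (qm L) := (cst L).mkQ_surjective

lemma qm_eqv : Eqv (FF L) (QQ L) (qm L) := fun _ _ => rfl

def qsec : (QQ L).V →ₗ[kk] (L → kk) :=
  (cst L).liftQ (LinearMap.id + (LinearMap.toSpanSingleton kk (L → kk) 1) ∘ₗ (LinearMap.proj 1)) (by
    rw [Submodule.span_le, Set.singleton_subset_iff]
    change _ = _
    simp [add_self_kk])

lemma qsec_qm (f : L → kk) : qsec L (qm L f) = f + f 1 • 1 := by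
  simp [qsec, qm]

lemma qm_one : qm L 1 = 0 := by
  simp [qm]

lemma qm_qsec (q : (QQ L).V) : qm L (qsec L q) = q := by
  obtain ⟨f, rfl⟩ := qm_surj L q
  rw [qsec_qm, map_add, map_smul, qm_one]; simp

def sQ : SES (triv L) (FF L) (QQ L) where
  i := LinearMap.toSpanSingleton kk (L → kk) 1
  p := qm L
  r := LinearMap.proj 1
  s := qsec L
  hi := by
    intro g x; funext s; simp
  hp := qm_eqv L
  ri := by intro a; simp
  ps := qm_qsec L
  split := by
    intro b
    rw [qsec_qm]
    simp
    rw [add_comm b, ← add_assoc, add_self_kk, zero_add]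

lemma sQ_i_one : (sQ L).i (1 : kk) = (1 : L → kk) := by simp [sQ]

lemma inv_one : Inv (FF L) (1 : L → kk) := by
  intro g; funext s; simp

lemma inv_triv (c : kk) : Inv (triv L) c := by intro g; simp

variable [Fintype L]

lemma null_FF : Null (FF L) (FF L) LinearMap.id := by
  classical
  refine ⟨LinearMap.mulLeft kk (Pi.single (1 : L) (1 : kk) : L → kk), fun f => ?_⟩
  funext s
  rw [Finset.sum_apply, Finset.sum_eq_single s]
  · rw [FF_ρ]; simp
  · intro g _ hg
    rw [FF_ρ]
    have : g⁻¹ * s ≠ 1 := by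
      intro h; apply hg; rw [inv_mul_eq_one] at h; exact h
    simp [this]
  · simp

lemma TZ_FF {H : Type} [Group H] [Fintype H] (θ : H →* L) (hθ : Function.Injective θ) (X : GM H) :
    TZ (X ⊠ res θ (FF L)) := by
  intro x hx
  have := (Null.map_right (Eqv.id X) ((null_FF L).res hθ)).isNm hx
  simpa using this

lemma null_of_factor_FF {X Y Z : GM L} {f : X.V →ₗ[kk] (Y ⊠ FF L).V}
    {h : (Y ⊠ FF L).V →ₗ[kk] Z.V} (hf : Eqv X (Y ⊠ FF L) f) (hh : Eqv (Y ⊠ FF L) Z h) :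
    Null X Z (h ∘ₗ f) := by
  have h1 := Null.map_right (Eqv.id Y) (null_FF L)
  rw [TensorProduct.map_id] at h1
  exact Null.comp_right (f := f) (h := h) (by simpa using h1.comp_left hh) hf

def AA : ℕ → GM L
  | 0 => triv L
  | n + 1 => AA n ⊠ QQ L

end Fn
end S8
end
open TensorProduct
set_option linter.unusedSectionVars false
noncomputable section
namespace S8

section iso
variable {L : Type} [Group L]

def Iso (X Y : GM L) : Prop := ∃ e : X.V ≃ₗ[kk] Y.V, Eqv X Y e.toLinearMap

lemma Iso.refl (X : GM L) : Iso X X := ⟨LinearEquiv.refl _ _, fun _ _ => rfl⟩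
lemma Iso.symm {X Y : GM L} (h : Iso X Y) : Iso Y X := by
  obtain ⟨e, he⟩ := h; exact ⟨e.symm, he.symm⟩
lemma Iso.trans {X Y Z : GM L} (h : Iso X Y) (h' : Iso Y Z) : Iso X Z := by
  obtain ⟨e, he⟩ := h; obtain ⟨e', he'⟩ := h'; exact ⟨e.trans e', he'.comp he⟩
lemma Iso.tens {X Y X' Y' : GM L} (h : Iso X Y) (h' : Iso X' Y') : Iso (X ⊠ X') (Y ⊠ Y') := by
  obtain ⟨e, he⟩ := h; obtain ⟨e', he'⟩ := h'
  exact ⟨TensorProduct.congr e e', he.map he'⟩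
lemma Iso.assoc (X Y Z : GM L) : Iso ((X ⊠ Y) ⊠ Z) (X ⊠ (Y ⊠ Z)) := ⟨_, eqv_assoc X Y Z⟩
lemma Iso.comm (X Y : GM L) : Iso (X ⊠ Y) (Y ⊠ X) := ⟨_, eqv_comm X Y⟩
lemma Iso.rid (X : GM L) : Iso (X ⊠ triv L) X := ⟨_, eqv_rid X⟩
lemma Iso.right_comm (X Y Z : GM L) : Iso ((X ⊠ Y) ⊠ Z) ((X ⊠ Z) ⊠ Y) :=
  (Iso.assoc X Y Z).trans (((Iso.refl X).tens (Iso.comm Y Z)).trans (Iso.assoc X Z Y).symm)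
lemma Iso.TZ [Fintype L] {X Y : GM L} (h : Iso X Y) (hX : TZ X) : TZ Y := by
  obtain ⟨e, he⟩ := h; exact TZ.of_equiv he hX

lemma AA_add (m n : ℕ) : Iso (AA L m ⊠ AA L n) (AA L (m + n)) := by
  induction n with
  | zero => exact Iso.rid _
  | succ n ih => exact (Iso.assoc _ _ _).symm.trans (ih.tens (Iso.refl (QQ L)))

end iso

section swap
variable {L : Type} [Group L] [Fintype L]

def SwapOK (X : GM L) : Prop :=
  Null (X ⊠ X) (X ⊠ X) ((TensorProduct.comm kk X.V X.V).toLinearMap + LinearMap.id)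

lemma swap_triv : SwapOK (triv L) := by
  unfold SwapOK
  have : ((TensorProduct.comm kk (triv L).V (triv L).V).toLinearMap + LinearMap.id) = 0 := by
    apply TensorProduct.ext'
    intro x y
    simp only [LinearMap.add_apply, LinearEquiv.coe_coe, TensorProduct.comm_tmul,
      LinearMap.id_apply, LinearMap.zero_apply]
    have : (y ⊗ₜ[kk] x : kk ⊗[kk] kk) = x ⊗ₜ[kk] y := by
      have h1 : (y : kk) = y • (1 : kk) := by simp
      have h2 : (x : kk) = x • (1 : kk) := by simp
      rw [h1, h2]
      simp only [TensorProduct.smul_tmul', TensorProduct.tmul_smul, smul_smul]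
      rw [mul_comm]
    rw [this, add_self_kk]
  rw [this]
  exact Null.zero

lemma ttt_eqv (X Y Z W : GM L) : Eqv ((X ⊠ Y) ⊠ (Z ⊠ W)) ((X ⊠ Z) ⊠ (Y ⊠ W))
    (TensorProduct.tensorTensorTensorComm kk X.V Y.V Z.V W.V).toLinearMap := by
  intro g x
  rw [← LinearMap.comp_apply, ← LinearMap.comp_apply]
  congr 1
  apply TensorProduct.ext_fourfold'
  intro x y z w
  simp

lemma swap_tens {X Y : GM L} (hX : SwapOK X) (hY : SwapOK Y) : SwapOK (X ⊠ Y) := by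
  have h := Null.map_add hX (Eqv.id _) (eqv_comm Y Y) hY
  have h2 := Null.comp_right (h.comp_left (ttt_eqv X X Y Y)) (ttt_eqv X Y X Y)
  unfold SwapOK
  convert h2 using 1
  apply TensorProduct.ext_fourfold'
  intro x y z w
  simp

variable (L) in
def betaF : (L → kk) →ₗ[kk] (L → kk) →ₗ[kk] (QQ L ⊠ FF L).V :=
  LinearMap.mk₂ kk (fun f f' => qm L f' ⊗ₜ[kk] f + qm L f ⊗ₜ[kk] f' + qm L (f * f') ⊗ₜ[kk] 1)
    (by intro a b c; simp only [map_add, add_tmul, tmul_add, add_mul]; abel)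
    (by intro a b c; simp only [map_smul, tmul_smul, smul_tmul', smul_add, smul_mul_assoc])
    (by intro a b c; simp only [map_add, add_tmul, tmul_add, mul_add]; abel)
    (by intro a b c; simp only [map_smul, tmul_smul, smul_tmul', smul_add, mul_smul_comm])

lemma betaF_apply (f f' : L → kk) : betaF L f f' =
    qm L f' ⊗ₜ[kk] f + qm L f ⊗ₜ[kk] f' + qm L (f * f') ⊗ₜ[kk] 1 := rfl

lemma betaF_one_left (f : L → kk) : betaF L 1 f = 0 := by
  rw [betaF_apply, qm_one, one_mul, zero_tmul, add_zero, add_self_kk]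

lemma betaF_one_right (f : L → kk) : betaF L f 1 = 0 := by
  rw [betaF_apply, qm_one, mul_one, zero_tmul, zero_add, add_self_kk]

lemma bil_aux {V W : Type} [AddCommGroup V] [Module kk V] [AddCommGroup W] [Module kk W]
    (b : V →ₗ[kk] V →ₗ[kk] W) (u : V) (h1 : ∀ x, b u x = 0) (h2 : ∀ x, b x u = 0)
    (x y : V) (c d : kk) : b (x + c • u) (y + d • u) = b x y := by
  simp [h1, h2]

variable (L) in
def psiQ : (QQ L ⊠ QQ L).V →ₗ[kk] (QQ L ⊠ FF L).V :=
  TensorProduct.lift ((betaF L).compl₁₂ (qsec L) (qsec L))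

lemma psiQ_apply (f f' : L → kk) : psiQ L (qm L f ⊗ₜ[kk] qm L f') = betaF L f f' := by
  have h : psiQ L (qm L f ⊗ₜ[kk] qm L f') = betaF L (qsec L (qm L f)) (qsec L (qm L f')) := rfl
  rw [h, qsec_qm, qsec_qm]
  exact bil_aux (betaF L) 1 betaF_one_left betaF_one_right _ _ _ _

lemma psiQ_eqv : Eqv (QQ L ⊠ QQ L) (QQ L ⊠ FF L) (psiQ L) := by
  intro g x
  induction x using TensorProduct.induction_on with
  | zero => simp
  | add x y hx hy => simp only [map_add, hx, hy]
  | tmul x y =>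
    obtain ⟨f, rfl⟩ := qm_surj L x
    obtain ⟨f', rfl⟩ := qm_surj L y
    rw [tens_ρ, ← qm_eqv, ← qm_eqv, psiQ_apply, psiQ_apply, betaF_apply, betaF_apply,
      map_add, map_add, tens_ρ, tens_ρ, tens_ρ, ← qm_eqv, ← qm_eqv, ← qm_eqv]
    rw [inv_one L g]
    rfl

lemma swap_QQ : SwapOK (QQ L) := by
  have h := null_of_factor_FF L (psiQ_eqv (L := L)) ((Eqv.id (QQ L)).map (qm_eqv L))
  unfold SwapOK
  convert h using 1
  apply TensorProduct.ext'
  intro x y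
  obtain ⟨f, rfl⟩ := qm_surj L x
  obtain ⟨f', rfl⟩ := qm_surj L y
  rw [LinearMap.comp_apply, psiQ_apply, betaF_apply]
  simp only [LinearMap.add_apply, LinearEquiv.coe_coe, comm_tmul, LinearMap.id_apply, map_add,
    map_tmul]
  have h0 : qm L (f * f') ⊗ₜ[kk] qm L 1 = 0 := (congrArg _ (qm_one L)).trans (tmul_zero _ _)
  rw [h0, add_zero]

lemma swap_AA (n : ℕ) : SwapOK (AA L n) := by
  induction n with
  | zero => exact swap_triv
  | succ n ih => exact swap_tens ih swap_QQ

end swap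

section subs
variable {L : Type} [Group L]

def subRep (X : GM L) (p : Submodule kk X.V) (h : ∀ g, ∀ x ∈ p, X.ρ g x ∈ p) :
    Representation kk L p where
  toFun g := (X.ρ g).restrict (h g)
  map_one' := by ext; simp
  map_mul' a b := by ext; simp

abbrev subGM (X : GM L) (p : Submodule kk X.V) (h : ∀ g, ∀ x ∈ p, X.ρ g x ∈ p) : GM L :=
  ⟨p, subRep X p h⟩

lemma subGM_ρ {X : GM L} {p : Submodule kk X.V} (h : ∀ g, ∀ x ∈ p, X.ρ g x ∈ p) (g : L)
    (x : p) : (((subGM X p h).ρ g x : p) : X.V) = X.ρ g x := rfl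

lemma eqv_subtype {X : GM L} {p : Submodule kk X.V} (h : ∀ g, ∀ x ∈ p, X.ρ g x ∈ p) :
    Eqv (subGM X p h) X p.subtype := fun _ _ => rfl

def prodRep (X Y : GM L) : Representation kk L (X.V × Y.V) where
  toFun g := LinearMap.prodMap (X.ρ g) (Y.ρ g)
  map_one' := by ext <;> simp
  map_mul' a b := by ext <;> simp

abbrev prodGM (X Y : GM L) : GM L := ⟨X.V × Y.V, prodRep X Y⟩

lemma prodGM_ρ {X Y : GM L} (g : L) (x : X.V) (y : Y.V) :
    (prodGM X Y).ρ g (x, y) = (X.ρ g x, Y.ρ g y) := rfl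

lemma ker_stable {X C : GM L} {p : X.V →ₗ[kk] C.V} (hp : Eqv X C p) :
    ∀ g, ∀ x ∈ LinearMap.ker p, X.ρ g x ∈ LinearMap.ker p := by
  intro g x hx
  rw [LinearMap.mem_ker] at *
  rw [hp, hx, map_zero]

def kerSES {X C : GM L} (p : X.V →ₗ[kk] C.V) (hp : Eqv X C p) (s : C.V →ₗ[kk] X.V)
    (ps : ∀ c, p (s c) = c) : SES (subGM X (LinearMap.ker p) (ker_stable hp)) X C where
  i := (LinearMap.ker p).subtype
  p := p
  r := LinearMap.codRestrict _ (LinearMap.id + s ∘ₗ p) (by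
    intro x
    simp [ps, add_self_kk])
  s := s
  hi := eqv_subtype _
  hp := hp
  ri := by
    intro a
    apply Subtype.ext
    have : p a = 0 := a.2
    simp [this]
  ps := ps
  split := by
    intro b
    simp [add_assoc, add_self_kk]

end subs
end S8
end
open TensorProduct
set_option linter.unusedSectionVars false
noncomputable section
namespace S8

section DD
variable {L : Type} [Group L] 

abbrev EE (B : GM L) : GM L := prodGM (B ⊠ FF L) (triv L)

def pD {B : GM L} (w : (B ⊠ QQ L).V) : (EE B).V →ₗ[kk] (B ⊠ QQ L).V :=
  ((sQ L).tl B).p ∘ₗ LinearMap.fst kk _ _ +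
    (LinearMap.toSpanSingleton kk (B ⊠ QQ L).V w) ∘ₗ LinearMap.snd kk _ _

lemma pD_apply {B : GM L} (w : (B ⊠ QQ L).V) (u : (B ⊠ FF L).V) (c : kk) :
    pD w (u, c) = ((sQ L).tl B).p u + c • w := rfl

lemma pD_eqv {B : GM L} {w : (B ⊠ QQ L).V} (hw : Inv (B ⊠ QQ L) w) :
    Eqv (EE B) (B ⊠ QQ L) (pD w) := by
  rintro g ⟨u, c⟩
  rw [prodGM_ρ, pD_apply, pD_apply, map_add, map_smul, hw, ((sQ L).tl B).hp, inv_triv]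

def sD (B : GM L) : (B ⊠ QQ L).V →ₗ[kk] (EE B).V := LinearMap.inl kk _ _ ∘ₗ ((sQ L).tl B).s

lemma pD_sD {B : GM L} (w : (B ⊠ QQ L).V) (c : (B ⊠ QQ L).V) : pD w (sD B c) = c := by
  change pD w (((sQ L).tl B).s c, 0) = c
  rw [pD_apply, zero_smul, add_zero, ((sQ L).tl B).ps]

abbrev DD {B : GM L} {w : (B ⊠ QQ L).V} (hw : Inv (B ⊠ QQ L) w) : GM L :=
  subGM (EE B) (LinearMap.ker (pD w)) (ker_stable (pD_eqv hw))

def sesD2 {B : GM L} {w : (B ⊠ QQ L).V} (hw : Inv (B ⊠ QQ L) w) :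
    SES (DD hw) (EE B) (B ⊠ QQ L) := kerSES (pD w) (pD_eqv hw) (sD B) (pD_sD w)

variable {B : GM L} {w : (B ⊠ QQ L).V} (hw : Inv (B ⊠ QQ L) w)

lemma mem_D {u : (B ⊠ FF L).V} {c : kk} (h : ((sQ L).tl B).p u = c • w) :
    (u, c) ∈ LinearMap.ker (pD w) := by
  rw [LinearMap.mem_ker, pD_apply, h, add_self_kk]

lemma D_mem (d : (DD hw).V) : ((sQ L).tl B).p d.1.1 = d.1.2 • w := by
  have h : pD w (d.1.1, d.1.2) = 0 := d.2
  rw [pD_apply] at h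
  rw [← sub_eq_zero, sub_kk, h]

/-- a linear lift of `w` -/
def liftw (w : (B ⊠ QQ L).V) : (B ⊠ FF L).V := ((sQ L).tl B).s w

lemma p_liftw : ((sQ L).tl B).p (liftw w) = w := ((sQ L).tl B).ps w

def jD : B.V →ₗ[kk] (DD hw).V :=
  LinearMap.codRestrict _ (LinearMap.inl kk _ _ ∘ₗ ((sQ L).tl B).i ∘ₗ rmul B.V (1 : kk)) (by
    intro b
    apply mem_D
    change ((sQ L).tl B).p (((sQ L).tl B).i (b ⊗ₜ[kk] (1 : kk))) = (0 : kk) • w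
    rw [zero_smul]
    exact ((sQ L).tl B).pi _)

lemma jD_coe (b : B.V) : ((jD hw b : LinearMap.ker (pD w)) : (EE B).V) =
    (((sQ L).tl B).i (b ⊗ₜ[kk] (1 : kk)), (0 : kk)) := rfl

def sesD1 : SES B (DD hw) (triv L) where
  i := jD hw
  p := LinearMap.snd kk _ _ ∘ₗ Submodule.subtype _
  r := (TensorProduct.rid kk B.V).toLinearMap ∘ₗ ((sQ L).tl B).r ∘ₗ
    (LinearMap.fst kk _ _ + (LinearMap.toSpanSingleton kk _ (liftw w)) ∘ₗ LinearMap.snd kk _ _) ∘ₗ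
      Submodule.subtype _
  s := LinearMap.codRestrict _ (LinearMap.toSpanSingleton kk (EE B).V (liftw w, (1 : kk))) (by
    intro c
    change (c • liftw w, c * 1) ∈ _
    apply mem_D
    rw [map_smul, p_liftw, mul_one])
  hi := by
    intro g b
    apply Subtype.ext
    rw [subGM_ρ, jD_coe, jD_coe, prodGM_ρ, ← ((sQ L).tl B).hi, tens_ρ, map_zero]
    rfl
  hp := by
    intro g d
    rfl
  ri := by
    intro b
    change TensorProduct.rid kk B.V (((sQ L).tl B).r
      (((sQ L).tl B).i (b ⊗ₜ[kk] (1 : kk)) + (0 : kk) • liftw w)) = b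
    rw [zero_smul, add_zero, ((sQ L).tl B).ri]
    simp
  ps := by
    intro c
    change c * 1 = c
    rw [mul_one]
  split := by
    rintro d
    have hd := D_mem hw d
    obtain ⟨⟨u, c⟩, h⟩ := d
    apply Subtype.ext
    simp only at hd
    have h0 : ((sQ L).tl B).p (u + c • liftw w) = 0 := by
      rw [map_add, map_smul, p_liftw, hd, add_self_kk]
    have h1 : ∀ y : (B ⊠ triv L).V, (TensorProduct.rid kk B.V y) ⊗ₜ[kk] (1 : kk) = y := by
      intro y
      have := (TensorProduct.rid kk B.V).symm_apply_apply y
      rwa [TensorProduct.rid_symm_apply] at this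
    change (((sQ L).tl B).i ((TensorProduct.rid kk B.V (((sQ L).tl B).r (u + c • liftw w)))
      ⊗ₜ[kk] (1 : kk)) + c • liftw w, (0 : kk) + c * 1) = (u, c)
    rw [h1, ((sQ L).tl B).ir h0, add_assoc, add_self_kk]
    simp

variable [Fintype L]

/-- Lemma C -/
lemma norm_of_tmul {X : GM L} (hT : TZ (X ⊠ DD hw)) {x : X.V} (hx : Inv X x)
    (h : IsNm (X ⊠ (B ⊠ QQ L)) (x ⊗ₜ[kk] w)) : IsNm X x := by
  obtain ⟨z, hz⟩ := h
  let E2 := (sesD2 hw).tl X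
  let E3 := ((sQ L).tl B).tl X
  have hinl : Eqv (B ⊠ FF L) (EE B) (LinearMap.inl kk _ _) := by
    intro g u
    change (_, _) = (_, _)
    simp
  have hinr : Eqv (triv L) (EE B) (LinearMap.inr kk _ _) := by
    intro g u
    change (_, _) = (_, _)
    simp
  let a := TensorProduct.map (LinearMap.id (R := kk) (M := X.V))
    (LinearMap.inl kk (B ⊠ FF L).V (triv L).V) (nm _ (E3.s z))
  let b : (X ⊠ EE B).V := x ⊗ₜ[kk] (LinearMap.inr kk (B ⊠ FF L).V (triv L).V (1 : kk))
  have ha : Inv (X ⊠ EE B) a := (inv_nm _ _).map ((Eqv.id X).map hinl)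
  have hb : Inv (X ⊠ EE B) b := hx.tmul ((inv_triv L 1).map hinr)
  have hp : E2.p (a + b) = 0 := by
    rw [map_add]
    have h1 : E2.p a = nm _ z := by
      change (TensorProduct.map (LinearMap.id (R := kk) (M := X.V)) (pD w)) a = _
      have : ∀ y, (TensorProduct.map (LinearMap.id (R := kk) (M := X.V)) (pD w))
          (TensorProduct.map (LinearMap.id (R := kk) (M := X.V))
            (LinearMap.inl kk (B ⊠ FF L).V (triv L).V) y) = E3.p y := by
        intro y
        rw [← LinearMap.comp_apply, ← TensorProduct.map_comp]
        have : pD w ∘ₗ LinearMap.inl kk (B ⊠ FF L).V (triv L).V = ((sQ L).tl B).p := by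
          apply LinearMap.ext
          intro u
          change pD w (u, 0) = _
          rw [pD_apply, zero_smul, add_zero]
        rw [this]; rfl
      rw [this, nm_map E3.hp, E3.ps]
    have h2 : E2.p b = x ⊗ₜ[kk] w := by
      change x ⊗ₜ[kk] (pD w (0, 1)) = _
      rw [pD_apply, map_zero, zero_add, one_smul]
    rw [h1, h2, hz, add_self_kk]
  have hd := hT _ (E2.inv_r hp (ha.add hb))
  have hd2 := (hd.map ((Eqv.id X).map (sesD1 hw).hp)).map (eqv_rid X)
  have key : ∀ y : (X ⊠ DD hw).V, TensorProduct.map (LinearMap.id (R := kk) (M := X.V))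
      (sesD1 hw).p y = TensorProduct.map (LinearMap.id (R := kk) (M := X.V))
        (LinearMap.snd kk (B ⊠ FF L).V (triv L).V) (E2.i y) := by
    intro y
    change _ = TensorProduct.map _ _ (TensorProduct.map _ _ y)
    rw [← LinearMap.comp_apply, ← TensorProduct.map_comp]
    rfl
  rw [key, E2.ir hp, map_add] at hd2
  have h3 : TensorProduct.map (LinearMap.id (R := kk) (M := X.V))
        (LinearMap.snd kk (B ⊠ FF L).V (triv L).V) a = 0 := by
    rw [← LinearMap.comp_apply, ← TensorProduct.map_comp, LinearMap.snd_comp_inl]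
    simp
  rw [h3, zero_add] at hd2
  simpa [b] using hd2

/-- `(j ⊗ 1) w` is a norm in `D ⊗ Q`. -/
lemma jw_norm : IsNm (DD hw ⊠ QQ L) (TensorProduct.map (jD hw) LinearMap.id w) := by
  let d0 : (DD hw).V := ⟨(liftw w, (1 : kk)), mem_D (by rw [p_liftw, one_smul])⟩
  let v : (DD hw ⊠ FF L).V :=
    TensorProduct.map (jD hw) LinearMap.id (liftw w) + d0 ⊗ₜ[kk] (1 : L → kk)
  have hv : Inv (DD hw ⊠ FF L) v := by
    intro g
    have h0 : ((sQ L).tl B).p ((B ⊠ FF L).ρ g (liftw w) + liftw w) = 0 := by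
      rw [map_add, ((sQ L).tl B).hp, p_liftw, hw, add_self_kk]
    have h1 := ((sQ L).tl B).ir h0
    obtain ⟨b, hb⟩ : ∃ b : B.V, b ⊗ₜ[kk] (1 : L → kk) = (B ⊠ FF L).ρ g (liftw w) + liftw w := by
      refine ⟨TensorProduct.rid kk B.V (((sQ L).tl B).r ((B ⊠ FF L).ρ g (liftw w) + liftw w)), ?_⟩
      conv_rhs => rw [← h1]
      generalize ((sQ L).tl B).r ((B ⊠ FF L).ρ g (liftw w) + liftw w) = y
      induction y using TensorProduct.induction_on with
      | zero => simp
      | add x y hx hy => simp only [map_add, add_tmul, hx, hy]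
      | tmul x c =>
        simp only [TensorProduct.rid_tmul]
        change _ = x ⊗ₜ[kk] (sQ L).i c
        have : (sQ L).i c = c • (1 : L → kk) := by simp [sQ]
        rw [this, tmul_smul, smul_tmul']
    have e1 : (B ⊠ FF L).ρ g (liftw w) = liftw w + b ⊗ₜ[kk] (1 : L → kk) := by
      rw [hb, add_comm ((B ⊠ FF L).ρ g (liftw w)), ← add_assoc, add_self_kk, zero_add]
    have e2 : (DD hw).ρ g d0 = d0 + jD hw b := by
      apply Subtype.ext
      rw [subGM_ρ]
      change (_, _) = (_, _)
      have : ((sQ L).tl B).i (b ⊗ₜ[kk] (1 : kk)) = b ⊗ₜ[kk] (1 : L → kk) := by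
        change b ⊗ₜ[kk] (sQ L).i (1 : kk) = _
        rw [sQ_i_one]
      ext1
      · change (B ⊠ FF L).ρ g (liftw w) = liftw w + ((sQ L).tl B).i (b ⊗ₜ[kk] (1 : kk))
        rw [this, e1]
      · rfl
    change (DD hw ⊠ FF L).ρ g (_ + _) = _ + _
    have hj : Eqv B (DD hw) (jD hw) := (sesD1 hw).hi
    rw [map_add, ← (hj.map (Eqv.id (FF L))), tens_ρ, e1, e2, inv_one L g, map_add,
      add_tmul, map_tmul]
    change _ + (jD hw b ⊗ₜ[kk] (1 : L → kk)) + _ = _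
    rw [add_assoc, add_comm (d0 ⊗ₜ[kk] (1 : L → kk)), ← add_assoc (jD hw b ⊗ₜ[kk] (1 : L → kk)),
      add_self_kk, zero_add]
  have h := (TZ_FF L (MonoidHom.id L) Function.injective_id (DD hw) v hv)
  have h2 := h.map ((Eqv.id (DD hw)).map (qm_eqv L))
  convert h2 using 1
  change _ = TensorProduct.map LinearMap.id (qm L) (_ + _)
  rw [map_add, map_tmul, qm_one, tmul_zero, add_zero, ← LinearMap.comp_apply,
    ← TensorProduct.map_comp]
  refine (congrArg (TensorProduct.map (jD hw) LinearMap.id) (p_liftw (w := w))).symm.trans ?_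
  change TensorProduct.map _ _ (TensorProduct.map _ _ _) = _
  rw [← LinearMap.comp_apply, ← TensorProduct.map_comp]
  rfl

end DD
end S8
end
open TensorProduct
set_option linter.unusedSectionVars false
noncomputable section
namespace S8

section lemB
variable {L : Type} [Group L] 

lemma eqv_leftComm (X Y Z : GM L) :
    Eqv (X ⊠ (Y ⊠ Z)) (Y ⊠ (X ⊠ Z)) (TensorProduct.leftComm kk X.V Y.V Z.V).toLinearMap := by
  intro g x
  rw [← LinearMap.comp_apply, ← LinearMap.comp_apply]
  congr 1
  ext x y z
  simp

lemma eqv_rightComm (X Y Z : GM L) :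
    Eqv ((X ⊠ Y) ⊠ Z) ((X ⊠ Z) ⊠ Y) (TensorProduct.rightComm kk X.V Y.V Z.V).toLinearMap := by
  intro g x
  rw [← LinearMap.comp_apply, ← LinearMap.comp_apply]
  congr 1
  ext x y z
  simp

lemma eqv_lmul (X : GM L) {Y : GM L} {y : Y.V} (hy : Inv Y y) :
    Eqv X (Y ⊠ X) (TensorProduct.mk kk Y.V X.V y) := by
  intro g x
  simp only [TensorProduct.mk_apply]
  rw [tens_ρ, hy]

variable [Fintype L] {B : GM L} {w : (B ⊠ QQ L).V} (hw : Inv (B ⊠ QQ L) w)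

lemma swap_left (hB : SwapOK B) (Y : GM L) : Null (B ⊠ (B ⊠ Y)) (B ⊠ (B ⊠ Y))
    ((TensorProduct.leftComm kk B.V B.V Y.V).toLinearMap + LinearMap.id) := by
  have h1 := Null.comp_right ((Null.map_left hB (Eqv.id Y)).comp_left (eqv_assoc B B Y))
    (eqv_assoc B B Y).symm
  convert h1 using 1
  ext x y z
  simp [add_tmul]

lemma jw_null (hB : SwapOK B) : Null B (DD hw ⊠ (B ⊠ QQ L)) (rmul (DD hw).V w ∘ₗ jD hw) := by
  have hj : Eqv B (DD hw) (jD hw) := (sesD1 hw).hi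
  have h1 := Null.comp_right (swap_left hB (QQ L)) (eqv_rmul B hw)
  have h2 := h1.comp_left (hj.map (Eqv.id (B ⊠ QQ L)))
  have h3 := (null_rmul B (jw_norm hw)).comp_left (eqv_leftComm B (DD hw) (QQ L))
  have h4 := h2.add h3
  convert h4 using 1
  apply LinearMap.ext
  intro b
  have key : ∀ y : (B ⊠ QQ L).V, TensorProduct.map (jD hw) LinearMap.id
      (TensorProduct.leftComm kk B.V B.V (QQ L).V (b ⊗ₜ[kk] y)) =
      TensorProduct.leftComm kk B.V (DD hw).V (QQ L).V
        (b ⊗ₜ[kk] (TensorProduct.map (jD hw) LinearMap.id y)) := by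
    intro y
    induction y using TensorProduct.induction_on with
    | zero => simp
    | add x y hx hy => simp only [map_add, tmul_add, hx, hy]
    | tmul x y => simp
  change (jD hw b) ⊗ₜ[kk] w = TensorProduct.map (jD hw) LinearMap.id
      (TensorProduct.leftComm kk B.V B.V (QQ L).V (b ⊗ₜ[kk] w) + b ⊗ₜ[kk] w) +
        TensorProduct.leftComm kk B.V (DD hw).V (QQ L).V
        (b ⊗ₜ[kk] (TensorProduct.map (jD hw) LinearMap.id w))
  rw [map_add, key, add_comm _ (TensorProduct.map (jD hw) LinearMap.id (b ⊗ₜ[kk] w)), add_assoc,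
    add_self_kk, add_zero, map_tmul]
  rfl

lemma ww_null (hB : SwapOK B) : Null (DD hw) ((DD hw ⊠ (B ⊠ QQ L)) ⊠ (B ⊠ QQ L))
    (rmul (DD hw ⊠ (B ⊠ QQ L)).V w ∘ₗ rmul (DD hw).V w) := by
  let W := B ⊠ QQ L
  let E := (sesD1 hw).tr W
  have hf : Eqv (DD hw) (B ⊠ FF L) (LinearMap.fst kk _ _ ∘ₗ Submodule.subtype _) :=
    fun _ _ => rfl
  have h1 := (null_of_factor_FF L hf ((sQ L).tl B).hp).comp_left
    (eqv_lmul (B ⊠ QQ L) (inv_triv L 1))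
  have h2 : Null (DD hw) (triv L ⊠ W) (E.p ∘ₗ rmul (DD hw).V w) := by
    convert h1 using 1
    apply LinearMap.ext
    intro d
    change (d.1.2) ⊗ₜ[kk] w = (1 : kk) ⊗ₜ[kk] (((sQ L).tl B).p d.1.1)
    rw [D_mem hw d, tmul_smul, smul_tmul', smul_eq_mul, mul_one]
  obtain ⟨ν, hν, hn⟩ := E.middle_hom (eqv_rmul (DD hw) hw) h2
  have h3 := (Null.map_left (jw_null hw hB) (Eqv.id W)).comp_left
    (eqv_rightComm (DD hw) W W)
  have h4 := Null.comp_right h3 hν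
  have h5 := hn.comp_left (eqv_rmul (DD hw ⊠ W) hw)
  have h6 := h5.add h4
  convert h6 using 1
  have key : rmul (DD hw ⊠ W).V w ∘ₗ E.i =
      (TensorProduct.rightComm kk (DD hw).V W.V W.V).toLinearMap ∘ₗ
        TensorProduct.map (rmul (DD hw).V w ∘ₗ jD hw) LinearMap.id := by
    apply TensorProduct.ext'
    intro b a
    change ((jD hw b) ⊗ₜ[kk] a) ⊗ₜ[kk] w = ((jD hw b) ⊗ₜ[kk] a) ⊗ₜ[kk] w
    rfl
  rw [← key, LinearMap.comp_add, add_assoc, LinearMap.comp_assoc, add_self_kk, add_zero]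

end lemB

section nil
variable {L : Type} [Group L] [Fintype L]

def Nil (W : GM L) (w : W.V) : ℕ → (X : GM L) → X.V → Prop
  | 0, X, x => IsNm X x
  | n + 1, X, x => Nil W w n (X ⊠ W) (x ⊗ₜ[kk] w)

def itp (W : GM L) : ℕ → GM L → GM L
  | 0, X => X
  | n + 1, X => itp W n (X ⊠ W)

variable {W : GM L} {w : W.V}

lemma Nil.map {n : ℕ} : ∀ {X Y : GM L} {f : X.V →ₗ[kk] Y.V} (_ : Eqv X Y f) {x : X.V}
    (_ : Nil W w n X x), Nil W w n Y (f x) := by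
  induction n with
  | zero => intro X Y f hf x hx; exact IsNm.map hf hx
  | succ n ih =>
    intro X Y f hf x hx
    have := ih (hf.map (Eqv.id W)) hx
    exact this

lemma Nil.of_norm {n : ℕ} (hw : Inv W w) : ∀ {X : GM L} {x : X.V} (_ : IsNm X x), Nil W w n X x := by
  induction n with
  | zero => intro X x hx; exact hx
  | succ n ih => intro X x hx; exact ih (hx.tmul hw)

lemma Nil.add {n : ℕ} : ∀ {X : GM L} {x y : X.V} (_ : Nil W w n X x) (_ : Nil W w n X y),
    Nil W w n X (x + y) := by
  induction n with
  | zero => intro X x y hx hy; exact IsNm.add hx hy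
  | succ n ih =>
    intro X x y hx hy
    change Nil W w n (X ⊠ W) ((x + y) ⊗ₜ[kk] w)
    rw [add_tmul]; exact ih hx hy

lemma itp_iso (Y : GM L) (j : ℕ) (n : ℕ) : ∀ m, Iso (itp (AA L j) n (Y ⊠ AA L m))
    (Y ⊠ AA L (m + n * j)) := by
  have h : ∀ n (X X' : GM L), Iso X X' → Iso (itp (AA L j) n X) (itp (AA L j) n X') := by
    intro n
    induction n with
    | zero => intro X X' h; exact h
    | succ n ih => intro X X' h; exact ih _ _ (h.tens (Iso.refl _))
  induction n with
  | zero => intro m; rw [Nat.zero_mul]; exact Iso.refl _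
  | succ n ih =>
    intro m
    have := (h n _ _ ((Iso.assoc Y _ _).trans ((Iso.refl Y).tens (AA_add m j)))).trans (ih (m + j))
    rw [show m + (n + 1) * j = m + j + n * j by ring]
    exact this

/-- local nilpotence -/
def LN (W : GM L) (w : W.V) (X : GM L) : Prop := ∀ x, Inv X x → ∃ N, Nil W w N X x

lemma LN.of_iso {X Y : GM L} (h : Iso X Y) (hX : LN W w X) : LN W w Y := by
  obtain ⟨e, he⟩ := h
  intro y hy
  obtain ⟨N, hN⟩ := hX _ (hy.map he.symm)
  refine ⟨N, ?_⟩
  have := hN.map he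
  simpa using this

lemma LN_ext (hw : Inv W w) (N : ℕ) : ∀ {A B C : GM L} (E : SES A B C) (_ : ∀ n, LN W w (itp W n A))
    (b : B.V) (_ : Inv B b) (_ : Nil W w N C (E.p b)), ∃ N', Nil W w N' B b := by
  induction N with
  | zero =>
    intro A B C E hA b hb h
    obtain ⟨a, ha, hn⟩ := E.middle hb h
    obtain ⟨N, hN⟩ := hA 0 a ha
    refine ⟨N, ?_⟩
    have := (Nil.of_norm (n := N) hw hn).add (hN.map E.hi)
    rwa [add_assoc, add_self_kk, add_zero] at this
  | succ N ih =>
    intro A B C E hA b hb h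
    obtain ⟨N', hN'⟩ := ih (E.tr W) (fun n => hA (n + 1)) (b ⊗ₜ[kk] w) (hb.tmul hw) h
    exact ⟨N' + 1, hN'⟩

variable (L) in
structure Cls where
  j : ℕ
  w : (AA L j ⊠ QQ L).V
  hw : Inv (AA L j ⊠ QQ L) w

abbrev Cls.D (a : Cls L) : GM L := DD a.hw

/-- local nilpotence of a class on `Y ⊗ A_m` for all `m` -/
def Cls.LN (a : Cls L) (Y : GM L) : Prop := ∀ m, S8.LN (AA L (a.j + 1)) a.w (Y ⊠ AA L m)

lemma lemA (a b : Cls L) (Y : GM L) (h : b.LN Y) : b.LN (Y ⊠ a.D) := by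
  have hY := h
  intro m x hx
  let E := ((sesD1 a.hw).tl Y).tr (AA L m)
  have hC : LN (AA L (b.j + 1)) b.w ((Y ⊠ triv L) ⊠ AA L m) :=
    LN.of_iso ((Iso.rid Y).symm.tens (Iso.refl _)) (h m)
  obtain ⟨N, hN⟩ := hC _ (hx.map E.hp)
  refine LN_ext b.hw N E (fun n => ?_) x hx hN
  have i1 : Iso ((Y ⊠ AA L a.j) ⊠ AA L m) (Y ⊠ AA L (a.j + m)) :=
    (Iso.assoc _ _ _).trans ((Iso.refl Y).tens (AA_add _ _))
  have h : ∀ n (X X' : GM L), Iso X X' → Iso (itp (AA L (b.j + 1)) n X)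
      (itp (AA L (b.j + 1)) n X') := by
    intro n
    induction n with
    | zero => intro X X' h; exact h
    | succ n ih => intro X X' h; exact ih _ _ (h.tens (Iso.refl _))
  exact LN.of_iso ((h n _ _ i1).trans (itp_iso Y _ n _)).symm (hY _)

lemma nil_norm (a : Cls L) (N : ℕ) : ∀ (X : GM L) (_ : ∀ n, TZ (itp (AA L (a.j + 1)) n X ⊠ a.D))
    (x : X.V) (_ : Inv X x) (_ : Nil (AA L (a.j + 1)) a.w N X x), IsNm X x := by
  induction N with
  | zero => intro X _ x _ h; exact h
  | succ N ih =>
    intro X hX x hx h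
    have h1 := ih (X ⊠ AA L (a.j + 1)) (fun n => hX (n + 1)) _ (hx.tmul a.hw) h
    exact norm_of_tmul a.hw (hX 0) hx h1

def KK : List (Cls L) → GM L
  | [] => triv L
  | a :: l => a.D ⊠ KK l

theorem main_alg (l : List (Cls L)) : ∀ (Y : GM L) (_ : ∀ a ∈ l, a.LN Y)
    (_ : ∀ Z : GM L, TZ ((Z ⊠ Y) ⊠ KK l)) (m : ℕ), TZ (Y ⊠ AA L m) := by
  induction l with
  | nil =>
    intro Y _ h m
    exact (((Iso.rid _).trans (Iso.comm _ _))).TZ (h (AA L m))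
  | cons a l ih =>
    intro Y hY h m x hx
    obtain ⟨N, hN⟩ := hY a (by simp) m x hx
    refine nil_norm a N _ (fun n => ?_) x hx hN
    refine Iso.TZ ((Iso.right_comm _ _ _).trans ((itp_iso Y _ n m).symm.tens (Iso.refl _)))
      (ih (Y ⊠ a.D) ?_ ?_ (m + n * (a.j + 1)))
    · intro b hb
      exact lemA a b Y (hY b (by simp [hb]))
    · intro Z
      refine Iso.TZ ?_ (h Z)
      exact (Iso.assoc _ _ _).symm.trans ((Iso.assoc _ _ _).tens (Iso.refl _))

end nil
end S8
end
open TensorProduct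
set_option linter.unusedSectionVars false
noncomputable section
namespace S8

section inj
variable {L : Type} [Group L] [Fintype L]

lemma inj_lemma (X : GM L) (χ : L → kk) (hχ : ∀ a b, χ (a * b) = χ a + χ b) (s : L) (hs : χ s = 1)
    (L' : Subgroup L) [Fintype L'] (hL' : ∀ l, l ∈ L' ↔ χ l = 0) (hT : TZ (res L'.subtype X))
    {F Q : GM L} (E : SES (triv L) F Q) (t : F.V)
    (ht : ∀ h, F.ρ h t = t + χ h • E.i (1 : kk)) {x : X.V} (hx : Inv X x)
    (h : IsNm (X ⊠ Q) (x ⊗ₜ[kk] E.p t)) : IsNm X x := by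
  classical
  obtain ⟨z, hz⟩ := h
  let E' := E.tl X
  have h0 : E'.p (nm _ (E'.s z) + x ⊗ₜ[kk] t) = 0 := by
    rw [map_add, nm_map E'.hp, E'.ps, hz]
    change _ + x ⊗ₜ[kk] E.p t = 0
    rw [add_self_kk]
  obtain ⟨y, hy⟩ : ∃ y : X.V, E'.i (y ⊗ₜ[kk] (1 : kk)) = nm _ (E'.s z) + x ⊗ₜ[kk] t := by
    refine ⟨TensorProduct.rid kk X.V (E'.r (nm _ (E'.s z) + x ⊗ₜ[kk] t)), ?_⟩
    have h1 : ∀ y : (X ⊠ triv L).V, (TensorProduct.rid kk X.V y) ⊗ₜ[kk] (1 : kk) = y := by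
      intro y
      have := (TensorProduct.rid kk X.V).symm_apply_apply y
      rwa [TensorProduct.rid_symm_apply] at this
    rw [h1, E'.ir h0]
  have hact : ∀ l, X.ρ l y = y + χ l • x := by
    intro l
    have h1 : (X ⊠ F).ρ l (E'.i (y ⊗ₜ[kk] (1 : kk))) =
        E'.i (y ⊗ₜ[kk] (1 : kk)) + x ⊗ₜ[kk] (χ l • E.i (1 : kk)) := by
      rw [hy, map_add, inv_nm, tens_ρ, hx, ht, tmul_add, add_assoc]
    rw [← E'.hi, tens_ρ, inv_triv, tmul_smul, smul_tmul'] at h1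
    have h2 : (χ l • x) ⊗ₜ[kk] E.i (1 : kk) = E'.i ((χ l • x) ⊗ₜ[kk] (1 : kk)) := rfl
    rw [h2, ← map_add, ← add_tmul] at h1
    have h3 := E'.inj h1
    have h4 := congrArg (TensorProduct.rid kk X.V) h3
    simpa using h4
  obtain ⟨v, hv⟩ := hT y (by
    intro l
    change X.ρ l.1 y = y
    rw [hact, (hL' _).1 l.2, zero_smul, add_zero])
  refine ⟨v, ?_⟩
  rw [nm_apply] at hv ⊢
  have hv' : ∑ l with l ∈ L', X.ρ l v = y := by
    rw [← hv]
    exact Finset.sum_subtype (p := fun l => l ∈ L') (Finset.univ.filter (· ∈ L')) (by simp)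
      (fun l => X.ρ l v)
  rw [← Finset.sum_filter_add_sum_filter_not Finset.univ (· ∈ L')]
  have h5 : ∑ l with l ∉ L', X.ρ l v = X.ρ s y := by
    rw [← hv', map_sum]
    symm
    refine Finset.sum_bij (fun l _ => s * l) ?_ ?_ ?_ ?_
    · intro a ha
      simp only [Finset.mem_filter, Finset.mem_univ, true_and, hL'] at *
      rw [hχ, ha, hs]; decide
    · intro a _ b _ hab; exact mul_left_cancel hab
    · intro b hb
      refine ⟨s⁻¹ * b, ?_, by simp⟩
      simp only [Finset.mem_filter, Finset.mem_univ, true_and, hL'] at *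
      have h6 : χ b = χ s + χ (s⁻¹ * b) := by rw [← hχ]; simp
      have h7 : ∀ a : kk, a ≠ 0 → a = 1 := by decide
      rw [h7 _ hb, hs] at h6
      simpa using h6
    · intro a _; rw [ρ_mul]
  rw [h5, hv', hact, hs, one_smul, ← add_assoc, add_self_kk, zero_add]

lemma TZ_of_odd {H : Type} [Group H] [Fintype H] (θ : H →* L) (hθ : Function.Injective θ)
    (n : ℕ) (hn : Fintype.card L = Fintype.card H * n) (ho : Odd n) (X : GM L)
    (h : TZ (res θ X)) : TZ X := by
  intro x hx
  obtain ⟨z, hz⟩ := h x (hx.res θ)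
  obtain ⟨S, hS⟩ := sum_coset θ hθ
  have hc : S.card = n := by
    have h1 := hS ℤ (fun _ => 1)
    simp at h1
    have h2 : Fintype.card H * S.card = Fintype.card H * n := by
      rw [← hn]; exact_mod_cast h1.symm
    exact Nat.eq_of_mul_eq_mul_left Fintype.card_pos h2
  refine ⟨z, ?_⟩
  rw [nm_apply]
  have h1 : ∑ g, X.ρ g z = ∑ g, X.ρ g⁻¹ z :=
    Fintype.sum_equiv (Equiv.inv L) _ _ (fun g => by simp)
  rw [h1, hS, Finset.sum_comm]
  have h2 : ∀ r ∈ S, ∑ h, X.ρ (θ h * r)⁻¹ z = x := by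
    intro r _
    have : ∀ h, X.ρ (θ h * r)⁻¹ z = X.ρ r⁻¹ ((res θ X).ρ h⁻¹ z) := by
      intro h
      rw [mul_inv_rev, ρ_mul]
      simp
    simp only [this]
    rw [← map_sum]
    have h3 : ∑ h, (res θ X).ρ h⁻¹ z = nm (res θ X) z := by
      rw [nm_apply]
      exact Fintype.sum_equiv (Equiv.inv H) _ _ (fun g => rfl)
    rw [h3, hz, hx]
  rw [Finset.sum_congr rfl h2, Finset.sum_const, hc]
  obtain ⟨m, rfl⟩ := ho
  rw [add_smul, mul_smul, two_smul, ]
  rw [add_self_kk]; simp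

end inj

section partIV
variable {G : Type} [Group G] [Fintype G]

def tmA {n : ℕ} (a : (AA G n).V) (q : (QQ G).V) : (AA G (n + 1)).V :=
  (a ⊗ₜ[kk] q : (AA G n ⊠ QQ G).V)

lemma Inv_tmA {H : Type} [Group H] (θ : H →* G) {n : ℕ} {a : (AA G n).V} {q : (QQ G).V}
    (ha : Inv (res θ (AA G n)) a) (hq : Inv (res θ (QQ G)) q) :
    Inv (res θ (AA G (n + 1))) (tmA a q) :=
  Inv.tmul (X := res θ (AA G n)) (Y := res θ (QQ G)) ha hq

/-- Horner elements -/
def Hor (w : (n : ℕ) → (AA G n).V) (χ : (QQ G).V) : (n : ℕ) → (AA G n).V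
  | 0 => w 0
  | n + 1 => tmA (Hor w χ n) χ + w (n + 1)

def Kcl (w : (n : ℕ) → (AA G n).V) (N : ℕ) (X : GM G) : Prop :=
  ∀ i, 1 ≤ i → i ≤ N → Null X ((X ⊠ AA G i) ⊠ AA G i)
    (rmul (X ⊠ AA G i).V (w i) ∘ₗ rmul X.V (w i))

lemma Kcl.tens {w : (n : ℕ) → (AA G n).V} {N : ℕ} {X : GM G} (h : Kcl w N X) (Y : GM G) :
    Kcl w N (X ⊠ Y) := by
  intro i hi hi'
  have h1 := (Null.map_left (h i hi hi') (Eqv.id Y)).comp_left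
    (eqv_rightComm (X ⊠ AA G i) (AA G i) Y)
  have h2 := h1.comp_left ((eqv_rightComm X (AA G i) Y).map (Eqv.id (AA G i)))
  convert h2 using 1
  apply TensorProduct.ext'
  intro x y
  rfl

lemma Kcl.of_iso {w : (n : ℕ) → (AA G n).V} {N : ℕ} {X Y : GM G} (h : Kcl w N X) (hi : Iso X Y) :
    Kcl w N Y := by
  obtain ⟨e, he⟩ := hi
  intro i hi hi'
  have h1 := (h i hi hi').comp_left ((he.map (Eqv.id (AA G i))).map (Eqv.id (AA G i)))
  have h2 := Null.comp_right h1 he.symm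
  convert h2 using 1
  apply LinearMap.ext
  intro y
  simp

def HRel (w : (n : ℕ) → (AA G n).V) (N : ℕ) : Prop :=
  ∀ (H : Type) [Group H] [Fintype H] (θ : H →* G), Function.Injective θ → IsPGroup 2 H →
    Nontrivial H → ∃ χ : H → kk, (∀ a b, χ (a * b) = χ a + χ b) ∧ (∃ s, χ s = 1) ∧
      ∃ t : G → kk, (∀ h x, t (θ h * x) = χ h + t x) ∧
        IsNm (res θ (AA G N)) (Hor w (qm G t) N)

lemma Hor_inv {w : (n : ℕ) → (AA G n).V} (hw : ∀ n, Inv (AA G n) (w n)) {H : Type} [Group H]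
    (θ : H →* G) (χ : (QQ G).V) (hχ : Inv (res θ (QQ G)) χ) (n : ℕ) :
    Inv (res θ (AA G n)) (Hor w χ n) := by
  induction n with
  | zero => exact (hw 0).res θ
  | succ n ih => exact Inv.add (X := res θ (AA G (n+1))) (Inv_tmA θ ih hχ) ((hw _).res θ)

theorem TZ_H (w : (n : ℕ) → (AA G n).V) (hw : ∀ n, Inv (AA G n) (w n)) (h0 : w 0 = (1 : kk))
    (N : ℕ) (hN : IsNm (AA G (N + 1)) (w (N + 1))) (hrel : HRel w (N + 1)) (n : ℕ) :
    ∀ (H : Type) [Group H] [Fintype H] (θ : H →* G), Function.Injective θ → IsPGroup 2 H →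
      Fintype.card H = n → ∀ X : GM G, Kcl w N X → TZ (res θ X) := by
  induction n using Nat.strong_induction_on with
  | _ n IH =>
  intro H _ _ θ hθ hp hc X hX
  rcases subsingleton_or_nontrivial H with hs | hs
  · intro x _
    refine ⟨x, ?_⟩
    rw [nm_apply, Fintype.sum_subsingleton _ (1 : H)]; simp
  obtain ⟨χ, hχ, ⟨s, hχs⟩, t, ht, hH⟩ := hrel H θ hθ hp hs
  have hχ1 : χ 1 = 0 := by have := hχ 1 1; simpa using this
  have hχi : ∀ h, χ h⁻¹ = χ h := by
    intro h
    have h1 := hχ h h⁻¹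
    rw [mul_inv_cancel, hχ1] at h1
    have : ∀ a b : kk, 0 = a + b → b = a := by decide
    exact this _ _ h1
  let L' : Subgroup H :=
    { carrier := {h | χ h = 0}
      one_mem' := hχ1
      mul_mem' := by
        intro a b ha hb
        change χ (a * b) = 0
        rw [hχ, ha, hb, add_zero]
      inv_mem' := by
        intro a ha
        change χ a⁻¹ = 0
        rw [hχi]; exact ha }
  haveI : Fintype L' := Fintype.ofFinite _
  have hL' : ∀ l, l ∈ L' ↔ χ l = 0 := fun l => Iff.rfl
  have hcard : Fintype.card L' < n := by
    rw [← hc]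
    refine Fintype.card_subtype_lt (p := fun x => x ∈ L') (x := s) ?_
    rw [hL', hχs]; decide
  have hTL : ∀ X : GM G, Kcl w N X → TZ (res L'.subtype (res θ X)) := by
    intro X hX
    exact IH _ hcard L' (θ.comp L'.subtype) (hθ.comp L'.subtype_injective) (hp.to_subgroup L')
      rfl X hX
  have htt : ∀ h, (res θ (FF G)).ρ h t = t + χ h • ((sQ G).res θ).i (1 : kk) := by
    intro h
    have : ((sQ G).res θ).i (1 : kk) = (1 : G → kk) := sQ_i_one G
    rw [this]
    funext x
    change t ((θ h)⁻¹ * x) = t x + χ h * 1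
    rw [← map_inv, ht, hχi, mul_one, add_comm]
  have hinj : ∀ X : GM G, Kcl w N X → ∀ x : X.V, Inv (res θ X) x →
      IsNm (res θ (X ⊠ QQ G)) (x ⊗ₜ[kk] qm G t) → IsNm (res θ X) x := by
    intro X hX x hx h
    exact inj_lemma (res θ X) χ hχ s hχs L' hL' (hTL X hX) ((sQ G).res θ) t htt hx h
  have hq : Inv (res θ (QQ G)) (qm G t) := by
    intro h
    have h1 := ((sQ G).res θ).hp h t
    rw [htt, map_add, map_smul, ((sQ G).res θ).pi, smul_zero, add_zero] at h1
    exact h1.symm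
  have hHi := fun n => Hor_inv hw θ (qm G t) hq n
  -- claim
  have claim : ∀ d j, j + d = N → ∀ X : GM G, Kcl w N X → ∀ x : X.V, Inv (res θ X) x →
      (∀ i, 1 ≤ i → i ≤ j → IsNm (res θ (X ⊠ AA G i)) (x ⊗ₜ[kk] w i)) → IsNm (res θ X) x := by
    intro d
    induction d with
    | zero =>
      intro j hj X hX x hx hk
      have hk' : ∀ i, 1 ≤ i → i ≤ N + 1 → IsNm (res θ (X ⊠ AA G i)) (x ⊗ₜ[kk] w i) := by
        intro i hi hi'
        by_cases h : i ≤ j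
        · exact hk i hi h
        · have : i = N + 1 := by omega
          subst this
          exact IsNm.tmul_right (X := res θ X) (Y := res θ (AA G (N + 1))) hx (hN.res hθ)
      have down : ∀ e n, n + e = N + 1 →
          IsNm (res θ (X ⊠ AA G n)) (x ⊗ₜ[kk] Hor w (qm G t) n) := by
        intro e
        induction e with
        | zero =>
          intro n hn
          have : n = N + 1 := by omega
          subst this
          exact IsNm.tmul_right (X := res θ X) (Y := res θ (AA G (N + 1))) hx hH
        | succ e ih =>
          intro n hn
          have h1 := ih (n + 1) (by omega)
          have h2 : x ⊗ₜ[kk] Hor w (qm G t) (n + 1) =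
              x ⊗ₜ[kk] tmA (Hor w (qm G t) n) (qm G t) +
                x ⊗ₜ[kk] w (n + 1) := tmul_add _ _ _
          rw [h2] at h1
          have h3 := IsNm.of_add h1 (hk' (n + 1) (by omega) (by omega))
          have h4 := h3.map ((eqv_assoc X (AA G n) (QQ G)).symm.res θ)
          refine hinj _ (hX.tens _) _ ?_ h4
          exact Inv.tmul (X := res θ X) (Y := res θ (AA G n)) hx (hHi n)
      have h1 := down (N + 1) 0 (by omega)
      have h2 := h1.map ((eqv_rid X).res θ)
      have h3 : Hor w (qm G t) 0 = (1 : kk) := h0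
      rw [h3] at h2
      have h4 : (TensorProduct.rid kk X.V).toLinearMap (x ⊗ₜ[kk] (1 : kk)) = x := by simp
      exact h4 ▸ h2
    | succ d ih =>
      intro j hj X hX x hx hk
      refine ih (j + 1) (by omega) X hX x hx ?_
      intro i hi hi'
      by_cases h : i ≤ j
      · exact hk i hi h
      have : i = j + 1 := by omega
      subst this
      refine ih (j + 1) (by omega) (X ⊠ AA G (j + 1)) (hX.tens _) _ ?_ ?_
      · exact Inv.tmul (X := res θ X) (Y := res θ (AA G (j + 1))) hx ((hw _).res θ)
      · intro i hi hi'
        by_cases h : i ≤ j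
        · have h1 := hk i hi h
          have h2 := IsNm.tmul (X := res θ (X ⊠ AA G i)) (Y := res θ (AA G (j + 1))) h1
            ((hw _).res θ)
          exact h2.map ((eqv_rightComm X (AA G i) (AA G (j + 1))).res θ)
        · have : i = j + 1 := by omega
          subst this
          exact ((hX (j + 1) (by omega) (by omega)).res hθ).isNm hx
  intro x hx
  exact claim N 0 (by omega) X hX x hx (fun i h1 h2 => by omega)

theorem TZ_G (w : (n : ℕ) → (AA G n).V) (hw : ∀ n, Inv (AA G n) (w n)) (h0 : w 0 = (1 : kk))
    (N : ℕ) (hN : IsNm (AA G (N + 1)) (w (N + 1))) (hrel : HRel w (N + 1))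
    (X : GM G) (hX : Kcl w N X) : TZ X := by
  classical
  haveI : Fact (Nat.Prime 2) := ⟨Nat.prime_two⟩
  obtain ⟨P⟩ : Nonempty (Sylow 2 G) := inferInstance
  haveI : Fintype P := Fintype.ofFinite _
  refine TZ_of_odd P.toSubgroup.subtype P.toSubgroup.subtype_injective P.toSubgroup.index ?_ ?_ X ?_
  · rw [← Nat.card_eq_fintype_card, ← Nat.card_eq_fintype_card, Subgroup.card_mul_index]
  · have := P.not_dvd_index
    rw [← Nat.not_even_iff_odd, even_iff_two_dvd]; exact this
  · exact TZ_H w hw h0 N hN hrel _ P P.toSubgroup.subtype P.toSubgroup.subtype_injective P.isPGroup'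
      rfl X hX

end partIV
end S8
end
open TensorProduct
set_option linter.unusedSectionVars false
noncomputable section
namespace S8

section pull
variable {L L' L'' : Type} [Group L] [Group L'] [Group L'']

def pullQ (σ : L' → L) : (QQ L).V →ₗ[kk] (QQ L').V :=
  Submodule.mapQ _ _ (LinearMap.funLeft kk kk σ) (by
    rw [Submodule.span_le, Set.singleton_subset_iff]
    change LinearMap.funLeft kk kk σ 1 ∈ cst L'
    have : LinearMap.funLeft kk kk σ 1 = 1 := rfl
    rw [this]
    exact Submodule.mem_span_singleton_self 1)

lemma pullQ_qm (σ : L' → L) (f : L → kk) : pullQ σ (qm L f) = qm L' (f ∘ σ) := rfl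

def pullA (σ : L' → L) : (n : ℕ) → (AA L n).V →ₗ[kk] (AA L' n).V
  | 0 => (LinearMap.id : kk →ₗ[kk] kk)
  | n + 1 => (TensorProduct.map (pullA σ n) (pullQ σ) : (AA L n ⊠ QQ L).V →ₗ[kk] (AA L' n ⊠ QQ L').V)

lemma pullA_tmA (σ : L' → L) (n : ℕ) (a : (AA L n).V) (q : (QQ L).V) :
    pullA σ (n + 1) (tmA a q) = tmA (pullA σ n a) (pullQ σ q) := rfl

lemma pullQ_eqv {H : Type} [Group H] (σ : L' → L) (θ : H →* L) (φ : H →* L')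
    (hσ : ∀ h x, σ (φ h * x) = θ h * σ x) : Eqv (res θ (QQ L)) (res φ (QQ L')) (pullQ σ) := by
  intro h q
  obtain ⟨f, rfl⟩ := qm_surj L q
  change pullQ σ (qm L ((FF L).ρ (θ h) f)) = (QQ L').ρ (φ h) (qm L' (f ∘ σ))
  rw [← qm_eqv, pullQ_qm]
  congr 1
  funext x
  change f ((θ h)⁻¹ * σ x) = f (σ ((φ h)⁻¹ * x))
  rw [← map_inv, ← map_inv, hσ]

lemma pullA_eqv {H : Type} [Group H] (σ : L' → L) (θ : H →* L) (φ : H →* L')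
    (hσ : ∀ h x, σ (φ h * x) = θ h * σ x) (n : ℕ) :
    Eqv (res θ (AA L n)) (res φ (AA L' n)) (pullA σ n) := by
  induction n with
  | zero => intro h x; rfl
  | succ n ih => exact Eqv.map ih (pullQ_eqv σ θ φ hσ)

lemma pullA_comp (σ : L' → L) (τ : L'' → L') (n : ℕ) (x : (AA L n).V) :
    pullA τ n (pullA σ n x) = pullA (σ ∘ τ) n x := by
  induction n with
  | zero => rfl
  | succ n ih =>
    have h : pullQ τ ∘ₗ pullQ σ = pullQ (σ ∘ τ) := by
      apply LinearMap.ext; intro q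
      obtain ⟨f, rfl⟩ := qm_surj L q
      rfl
    have h2 : pullA τ n ∘ₗ pullA σ n = pullA (σ ∘ τ) n := LinearMap.ext ih
    change TensorProduct.map (pullA τ n) (pullQ τ) (TensorProduct.map (pullA σ n) (pullQ σ) x) =
      TensorProduct.map (pullA (σ ∘ τ) n) (pullQ (σ ∘ τ)) x
    rw [← h, ← h2, TensorProduct.map_comp]; rfl

lemma pullQ_id : pullQ (id : L → L) = LinearMap.id := by
  apply LinearMap.ext; intro q
  obtain ⟨f, rfl⟩ := qm_surj L q
  rfl

lemma pullA_id (n : ℕ) : pullA (id : L → L) n = LinearMap.id := by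
  induction n with
  | zero => rfl
  | succ n ih =>
    change TensorProduct.map (pullA id n) (pullQ id) = LinearMap.id
    rw [ih, pullQ_id]; exact TensorProduct.map_id

lemma pullA_Hor (σ : L' → L) (w : (n : ℕ) → (AA L n).V) (χ : (QQ L).V) (n : ℕ) :
    pullA σ n (Hor w χ n) = Hor (fun i => pullA σ i (w i)) (pullQ σ χ) n := by
  induction n with
  | zero => rfl
  | succ n ih => rw [Hor, map_add, pullA_tmA, ih]; rfl

lemma Hor_congr {w w' : (n : ℕ) → (AA L n).V} (χ : (QQ L).V) (n : ℕ) (h : ∀ i ≤ n, w i = w' i) :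
    Hor w χ n = Hor w' χ n := by
  induction n with
  | zero => exact h 0 le_rfl
  | succ n ih => rw [Hor, Hor, ih (fun i hi => h i (by omega)), h (n + 1) le_rfl]

end pull

abbrev C2 := Multiplicative (ZMod 2)

section hor
variable {G : Type} [Group G] 

abbrev inG (G : Type) [Group G] : G →* G × C2 := MonoidHom.inl G C2
abbrev inC (G : Type) [Group G] : C2 →* G × C2 := MonoidHom.inr G C2

lemma inG_inj : Function.Injective (inG G) := fun a b h => (Prod.ext_iff.1 h).1
lemma inC_inj : Function.Injective (inC G) := fun a b h => (Prod.ext_iff.1 h).2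

def tG (G : Type) [Group G] : G × C2 → kk := fun y => Multiplicative.toAdd y.2

def sC (G : Type) [Group G] : G × C2 := (1, Multiplicative.ofAdd 1)

lemma sC_sq : sC G * sC G = 1 := by
  ext
  · simp [sC]
  · exact (by decide : (Multiplicative.ofAdd (1 : ZMod 2)) * Multiplicative.ofAdd 1 = 1)

lemma sC_inv : (sC G)⁻¹ = sC G := inv_eq_of_mul_eq_one_left sC_sq

lemma sC_comm (g : G) : sC G * inG G g = inG G g * sC G := by simp [sC]

lemma C2_cases : ∀ c : C2, c = 1 ∨ c = Multiplicative.ofAdd 1 := by decide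

lemma inv_of_gens {X : GM (G × C2)} {x : X.V} (h1 : ∀ g, X.ρ (inG G g) x = x)
    (h2 : X.ρ (sC G) x = x) : Inv X x := by
  rintro ⟨g, c⟩
  rcases C2_cases c with rfl | rfl
  · exact h1 g
  · have : ((g, Multiplicative.ofAdd 1) : G × C2) = inG G g * sC G := by simp [sC]
    rw [this, ρ_mul, h2, h1]

lemma tG_inv : Inv (QQ (G × C2)) (qm _ (tG G)) := by
  apply inv_of_gens
  · intro g
    rw [← qm_eqv]
    congr 1
    funext y
    change Multiplicative.toAdd (((inG G g)⁻¹ * y).2) = _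
    simp [tG]
  · have h : (FF (G × C2)).ρ (sC G) (tG G) = tG G + 1 := by
      funext y
      change Multiplicative.toAdd (((sC G)⁻¹ * y).2) = Multiplicative.toAdd y.2 + 1
      rw [sC_inv]
      simp [sC, add_comm]
    rw [← qm_eqv, h, map_add, qm_one, add_zero]

variable [Fintype G]

lemma index2 (Y : GM (G × C2)) {x : (Y ⊠ QQ (G × C2)).V} (hx : Inv _ x)
    (hn : IsNm (res (inG G) (Y ⊠ QQ (G × C2))) x) :
    ∃ c, Inv Y c ∧ IsNm (Y ⊠ QQ (G × C2)) (x + c ⊗ₜ[kk] qm _ (tG G)) := by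
  obtain ⟨z, hz⟩ := hn
  let E := (sQ (G × C2)).tl Y
  let xt := nm (res (inG G) (Y ⊠ FF (G × C2))) (E.s z)
  have hxt : E.p xt = x := by
    rw [← hz]
    have h1 := nm_map (E.hp.res (inG G)) (E.s z)
    rw [E.ps] at h1
    exact h1
  have hxi : ∀ g, (Y ⊠ FF (G × C2)).ρ (inG G g) xt = xt := fun g =>
    inv_nm (res (inG G) (Y ⊠ FF (G × C2))) (E.s z) g
  let u := (Y ⊠ FF (G × C2)).ρ (sC G) xt + xt
  have hu : Inv (Y ⊠ FF (G × C2)) u := by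
    apply inv_of_gens
    · intro g
      change (Y ⊠ FF (G × C2)).ρ (inG G g) ((Y ⊠ FF (G × C2)).ρ (sC G) xt + xt) =
        (Y ⊠ FF (G × C2)).ρ (sC G) xt + xt
      rw [map_add, hxi, ← ρ_mul, ← sC_comm, ρ_mul, hxi]
    · change (Y ⊠ FF (G × C2)).ρ (sC G) ((Y ⊠ FF (G × C2)).ρ (sC G) xt + xt) =
        (Y ⊠ FF (G × C2)).ρ (sC G) xt + xt
      rw [map_add, ← ρ_mul, sC_sq, ρ_one, add_comm]
  have hpu : E.p u = 0 := by
    change E.p ((Y ⊠ FF (G × C2)).ρ (sC G) xt + xt) = 0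
    rw [map_add, E.hp, hxt, hx, add_self_kk]
  let c := TensorProduct.rid kk Y.V (E.r u)
  have hc : Inv Y c := (E.inv_r hpu hu).map (eqv_rid Y)
  have hcu : c ⊗ₜ[kk] (1 : G × C2 → kk) = u := by
    have h1 : c ⊗ₜ[kk] (1 : kk) = E.r u := by
      have := (TensorProduct.rid kk Y.V).symm_apply_apply (E.r u)
      rwa [TensorProduct.rid_symm_apply] at this
    rw [← E.ir hpu, ← h1]
    change _ = c ⊗ₜ[kk] ((sQ (G × C2)).i (1 : kk))
    rw [sQ_i_one]
  refine ⟨c, hc, ?_⟩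
  have hv : Inv (Y ⊠ FF (G × C2)) (xt + c ⊗ₜ[kk] tG G) := by
    apply inv_of_gens
    · intro g
      rw [map_add, hxi, tens_ρ, hc]
      congr 2
      funext y
      change Multiplicative.toAdd (((inG G g)⁻¹ * y).2) = _
      simp [tG]
    · have h : (FF (G × C2)).ρ (sC G) (tG G) = tG G + 1 := by
        funext y
        change Multiplicative.toAdd (((sC G)⁻¹ * y).2) = Multiplicative.toAdd y.2 + 1
        rw [sC_inv]
        simp [sC, add_comm]
      rw [map_add, tens_ρ, hc, h, tmul_add, hcu]
      change _ + (_ + ((Y ⊠ FF (G × C2)).ρ (sC G) xt + xt)) = _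
      have : ∀ a b d : (Y ⊠ FF (G × C2)).V, a + (b + (a + d)) = d + b := by
        intro a b d
        have : a + (b + (a + d)) = (a + a) + (d + b) := by abel
        rw [this, add_self_kk, zero_add]
      exact this _ _ _
  have hvn := TZ_FF (G × C2) (MonoidHom.id _) (fun _ _ h => h) Y _ hv
  have := hvn.map (f := E.p) E.hp
  rw [map_add, hxt] at this
  exact this

abbrev infl (G : Type) [Group G] (n : ℕ) : (AA G n).V →ₗ[kk] (AA (G × C2) n).V := pullA Prod.fst n
abbrev rst (G : Type) [Group G] (n : ℕ) : (AA (G × C2) n).V →ₗ[kk] (AA G n).V := pullA (inG G) n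

def psiI (G : Type) [Group G] : (QQ (G × C2)).V →ₗ[kk] (G × C2 → kk) :=
  (LinearMap.id + LinearMap.funLeft kk kk (fun y : G × C2 => inG G y.1)) ∘ₗ qsec _

lemma psiI_qm (f : G × C2 → kk) : psiI G (qm _ f) = f + fun y => f (inG G y.1) := by
  change qsec _ (qm _ f) + LinearMap.funLeft kk kk (fun y : G × C2 => inG G y.1) (qsec _ (qm _ f)) = _
  rw [qsec_qm, map_add, map_smul]
  have h1 : LinearMap.funLeft kk kk (fun y : G × C2 => inG G y.1) 1 = 1 := rfl
  have h2 : LinearMap.funLeft kk kk (fun y : G × C2 => inG G y.1) f = fun y => f (inG G y.1) := rfl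
  rw [h1, h2]
  have : ∀ a b d : G × C2 → kk, (a + d) + (b + d) = a + b := by
    intro a b d
    have : (a + d) + (b + d) = a + b + (d + d) := by abel
    rw [this, add_self_kk, add_zero]
  exact this _ _ _

lemma psiI_eqv : Eqv (res (inG G) (QQ (G × C2))) (res (inG G) (FF (G × C2))) (psiI G) := by
  intro g q
  obtain ⟨f, rfl⟩ := qm_surj _ q
  change psiI G ((QQ (G × C2)).ρ (inG G g) (qm _ f)) = (FF (G × C2)).ρ (inG G g) (psiI G (qm _ f))
  rw [← qm_eqv, psiI_qm, psiI_qm]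
  funext y
  simp

lemma null_inflQ : Null (res (inG G) (QQ (G × C2))) (res (inG G) (QQ (G × C2)))
    (LinearMap.id + pullQ (Prod.fst : G × C2 → G) ∘ₗ pullQ (inG G)) := by
  have h1 := (null_FF (G × C2)).res (inG_inj (G := G))
  have h2 := (Null.comp_right h1 (psiI_eqv (G := G))).comp_left ((qm_eqv (G × C2)).res (inG G))
  convert h2 using 1
  apply LinearMap.ext
  intro q
  obtain ⟨f, rfl⟩ := qm_surj _ q
  change qm _ f + qm _ ((f ∘ inG G) ∘ Prod.fst) = qm _ (psiI G (qm _ f))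
  rw [psiI_qm, map_add]; rfl

lemma null_inflA (n : ℕ) : Null (res (inG G) (AA (G × C2) n)) (res (inG G) (AA (G × C2) n))
    (LinearMap.id + infl G n ∘ₗ rst G n) := by
  induction n with
  | zero =>
    have : (LinearMap.id + infl G 0 ∘ₗ rst G 0) = 0 := by
      apply LinearMap.ext; intro x
      exact add_self_kk x
    rw [this]; exact Null.zero
  | succ n ih =>
    have he : Eqv (res (inG G) (AA (G × C2) n)) (res (inG G) (AA (G × C2) n))
        (infl G n ∘ₗ rst G n) :=
      (pullA_eqv (Prod.fst : G × C2 → G) (MonoidHom.id G) (inG G) (fun h x => by simp) n).comp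
        (pullA_eqv (inG G) (inG G) (MonoidHom.id G) (fun h x => map_mul _ _ _) n)
    have h := Null.map_add ih he (Eqv.id _) null_inflQ
    rw [TensorProduct.map_comp] at h
    have h' : (TensorProduct.map LinearMap.id LinearMap.id :
        (AA (G × C2) n).V ⊗[kk] (QQ (G × C2)).V →ₗ[kk] _) = LinearMap.id := TensorProduct.map_id
    rw [h'] at h
    exact h

lemma infl_inv {n : ℕ} {a : (AA G n).V} (ha : Inv _ a) : Inv (AA (G × C2) n) (infl G n a) := by
  have h := pullA_eqv (Prod.fst : G × C2 → G) (MonoidHom.fst G C2) (MonoidHom.id _)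
    (fun h x => rfl) n
  intro g
  have := h g a
  change infl G n ((AA G n).ρ g.1 a) = _ at this
  rw [ha] at this
  exact this.symm

lemma rst_inv {n : ℕ} {a : (AA (G × C2) n).V} (ha : Inv _ a) : Inv (AA G n) (rst G n a) := by
  have h := pullA_eqv (inG G) (inG G) (MonoidHom.id G) (fun h x => map_mul _ _ _) n
  intro g
  have := h g a
  change rst G n ((AA (G × C2) n).ρ _ a) = _ at this
  rw [ha] at this
  exact this.symm

theorem horner (n : ℕ) : ∀ x, Inv (AA (G × C2) n) x → ∃ w : (i : ℕ) → (AA G i).V,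
    (∀ i, Inv (AA G i) (w i)) ∧ w n = rst G n x ∧
      IsNm (AA (G × C2) n) (x + Hor (fun i => infl G i (w i)) (qm _ (tG G)) n) := by
  classical
  induction n with
  | zero =>
    intro x _
    let w : (i : ℕ) → (AA G i).V := fun i => match i with
      | 0 => rst G 0 x
      | _ + 1 => 0
    refine ⟨w, ?_, rfl, ?_⟩
    · intro i
      rcases i with _ | i
      · exact fun _ => rfl
      · exact Inv.zero
    · have : x + Hor (fun i => infl G i (w i)) (qm _ (tG G)) 0 = 0 := add_self_kk x
      rw [this]; exact IsNm.zero
  | succ n ih =>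
    intro x hx
    have h1 : Inv (AA (G × C2) (n + 1)) (x + infl G (n + 1) (rst G (n + 1) x)) :=
      hx.add (infl_inv (rst_inv hx))
    have h2 : IsNm (res (inG G) (AA (G × C2) (n + 1))) (x + infl G (n + 1) (rst G (n + 1) x)) :=
      (null_inflA (n + 1)).isNm (hx.res (inG G))
    obtain ⟨c, hc, hcn⟩ := index2 (AA (G × C2) n) h1 h2
    change IsNm (AA (G × C2) (n + 1)) (x + infl G (n + 1) (rst G (n + 1) x) + tmA c (qm _ (tG G))) at hcn
    obtain ⟨w, hw, -, hwn⟩ := ih c hc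
    refine ⟨Function.update w (n + 1) (rst G (n + 1) x), ?_, by simp, ?_⟩
    · intro i
      by_cases hi : i = n + 1
      · subst hi; simpa using rst_inv hx
      · simpa [hi] using hw i
    · have h3 : IsNm (AA (G × C2) (n + 1))
          (tmA (c + Hor (fun i => infl G i (w i)) (qm _ (tG G)) n) (qm _ (tG G))) :=
        IsNm.tmul hwn tG_inv
      have h4 : tmA (c + Hor (fun i => infl G i (w i)) (qm _ (tG G)) n) (qm _ (tG G)) =
        tmA c (qm _ (tG G)) + tmA (Hor (fun i => infl G i (w i)) (qm _ (tG G)) n) (qm _ (tG G)) :=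
        add_tmul _ _ _
      rw [h4] at h3
      have h5 := hcn.add h3
      rw [Hor, Function.update_self, Hor_congr (w' := fun i => infl G i (w i))]
      · convert h5 using 1
        have : ∀ a b d e : (AA (G × C2) (n + 1)).V, a + (e + b) = a + b + d + (d + e) := by
          intro a b d e
          have : a + b + d + (d + e) = (d + d) + (a + (e + b)) := by abel
          rw [this, add_self_kk, zero_add]
        exact this _ _ _ _
      · intro i hi
        rw [Function.update_of_ne (by omega)]

/-- inflation is null over the central factor -/
lemma null_infl_C : Null (res (1 : C2 →* G) (QQ G)) (res (inC G) (QQ (G × C2)))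
    (pullQ (Prod.fst : G × C2 → G)) := by
  classical
  let μ : (G → kk) →ₗ[kk] (G × C2 → kk) :=
    { toFun := fun f y => if y.2 = 1 then f y.1 else 0
      map_add' := by intro a b; funext y; simp only [Pi.add_apply]; split <;> simp
      map_smul' := by intro a b; funext y; simp only [Pi.smul_apply]; split <;> simp }
  refine ⟨qm _ ∘ₗ μ ∘ₗ qsec G, ?_⟩
  intro q
  have h0 : ∀ g : C2, (res (1 : C2 →* G) (QQ G)).ρ g⁻¹ q = q := by
    intro g
    change (QQ G).ρ 1 q = q
    rw [ρ_one]
  simp only [h0]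
  have h1 : ∀ g : C2, (res (inC G) (QQ (G × C2))).ρ g ((qm _ ∘ₗ μ ∘ₗ qsec G) q) =
      qm _ ((FF (G × C2)).ρ (inC G g) (μ (qsec G q))) := by
    intro g
    rw [qm_eqv]; rfl
  simp only [h1]
  rw [← map_sum]
  have h2 : ∑ g : C2, (FF (G × C2)).ρ (inC G g) (μ (qsec G q)) = (qsec G q) ∘ Prod.fst := by
    funext y
    rw [Finset.sum_apply, Finset.sum_eq_single y.2]
    · change (if ((inC G y.2)⁻¹ * y).2 = 1 then qsec G q ((inC G y.2)⁻¹ * y).1 else 0) = _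
      simp
    · intro b _ hb
      change (if ((inC G b)⁻¹ * y).2 = 1 then qsec G q ((inC G b)⁻¹ * y).1 else 0) = _
      rw [if_neg]
      intro h
      apply hb
      have : b⁻¹ * y.2 = 1 := by simpa using h
      rw [inv_mul_eq_one] at this; exact this
    · simp
  rw [h2]
  conv_lhs => rw [← qm_qsec G q]
  rfl

lemma infl_norm_C (n : ℕ) (a : (AA G (n + 1)).V) :
    IsNm (res (inC G) (AA (G × C2) (n + 1))) (infl G (n + 1) a) := by
  have h := Null.map_right (X := res (1 : C2 →* G) (AA G n)) (Y := res (inC G) (AA (G × C2) n))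
    (f := infl G n) (pullA_eqv _ _ _ (fun h x => by simp) n) (null_infl_C (G := G))
  refine h.isNm (x := a) ?_
  intro g
  change (AA G (n + 1)).ρ 1 a = a
  rw [ρ_one]

lemma hor_norm_C (w : (i : ℕ) → (AA G i).V) (h0 : w 0 = (0 : kk)) (n : ℕ) :
    IsNm (res (inC G) (AA (G × C2) n)) (Hor (fun i => infl G i (w i)) (qm _ (tG G)) n) := by
  induction n with
  | zero =>
    have : Hor (fun i => infl G i (w i)) (qm _ (tG G)) 0 = 0 := h0
    rw [this]; exact IsNm.zero
  | succ n ih =>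
    rw [Hor]
    refine IsNm.add (X := res (inC G) (AA (G × C2) (n + 1))) ?_ (infl_norm_C n _)
    exact IsNm.tmul (X := res (inC G) (AA (G × C2) n)) (Y := res (inC G) (QQ (G × C2))) ih
      (tG_inv.res _)

/-- the graph of a cocycle -/
lemma graph_norm {H : Type} [Group H] [Fintype H] (θ : H →* G) (φ : H →* G × C2)
    (hφ : Function.Injective φ)
    (t : G → kk) (ht : ∀ h x, (θ h * x, Multiplicative.ofAdd (t (θ h * x))) =
      φ h * ((x, Multiplicative.ofAdd (t x)) : G × C2)) (n : ℕ) {x : (AA (G × C2) n).V}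
    (w : (i : ℕ) → (AA G i).V)
    (hx : IsNm (AA (G × C2) n) (x + Hor (fun i => infl G i (w i)) (qm _ (tG G)) n))
    (hx' : IsNm (res φ (AA (G × C2) n)) x) :
    IsNm (res θ (AA G n)) (Hor w (qm G t) n) := by
  have h1 := hx.res hφ
  rw [add_comm] at h1
  have h2 := IsNm.of_add h1 hx'
  let σ : G → G × C2 := fun x => (x, Multiplicative.ofAdd (t x))
  have h3 := h2.map (pullA_eqv σ φ θ ht n)
  rw [pullA_Hor] at h3
  have h4 : (fun i => pullA σ i (infl G i (w i))) = w := by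
    funext i
    rw [pullA_comp]
    change pullA id i (w i) = _
    rw [pullA_id]; rfl
  rw [h4] at h3
  exact h3

end hor
end S8
end
open TensorProduct
set_option linter.unusedSectionVars false
noncomputable section
namespace S8

section conn
variable {L : Type} [Group L] {A B C : GM L}

def Conn (E : SES A B C) (e : C.V) (e' : (A ⊠ QQ L).V) : Prop :=
  ∃ ζ : (B ⊠ FF L).V, Inv (B ⊠ FF L) ζ ∧
    TensorProduct.map E.p LinearMap.id ζ = e ⊗ₜ[kk] (1 : L → kk) ∧
      TensorProduct.map E.i LinearMap.id e' = TensorProduct.map LinearMap.id (qm L) ζ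

lemma mm {V V' V'' W W' W'' : Type} [AddCommGroup V] [Module kk V] [AddCommGroup V'] [Module kk V']
    [AddCommGroup V''] [Module kk V''] [AddCommGroup W] [Module kk W]
    [AddCommGroup W'] [Module kk W'] [AddCommGroup W''] [Module kk W'']
    (f : V →ₗ[kk] V') (f' : V' →ₗ[kk] V'') (g : W →ₗ[kk] W') (g' : W' →ₗ[kk] W'')
    (x : V ⊗[kk] W) : TensorProduct.map f' g' (TensorProduct.map f g x) =
      TensorProduct.map (f' ∘ₗ f) (g' ∘ₗ g) x := by
  rw [TensorProduct.map_comp]; rfl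

lemma tmul_one_rid {X : GM L} (y : (X ⊠ triv L).V) :
    (TensorProduct.rid kk X.V y) ⊗ₜ[kk] (1 : kk) = y := by
  have := (TensorProduct.rid kk X.V).symm_apply_apply y
  rwa [TensorProduct.rid_symm_apply] at this

lemma tmul_one_inj {X : GM L} {x y : X.V} (h : x ⊗ₜ[kk] (1 : L → kk) = y ⊗ₜ[kk] (1 : L → kk)) :
    x = y := by
  have h1 := congrArg (fun z => TensorProduct.rid kk X.V (TensorProduct.map (LinearMap.id : X.V →ₗ[kk] X.V)
    (LinearMap.proj (R := kk) (φ := fun _ : L => kk) (1 : L)) z)) h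
  simpa using h1

/-- element of `B ⊗ F` killed by the quotient map comes from `B` -/
lemma from_const {X : GM L} {ζ : (X ⊠ FF L).V}
    (h : TensorProduct.map LinearMap.id (qm L) ζ = 0) :
    ∃ ξ : X.V, ζ = ξ ⊗ₜ[kk] (1 : L → kk) := by
  let E := (sQ L).tl X
  have h1 : E.i (E.r ζ) = ζ := E.ir h
  refine ⟨TensorProduct.rid kk X.V (E.r ζ), ?_⟩
  conv_lhs => rw [← h1, ← tmul_one_rid (E.r ζ)]
  change _ ⊗ₜ[kk] ((sQ L).i (1 : kk)) = _
  rw [sQ_i_one]; rfl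

lemma inv_of_tmul_one {H : Type} [Group H] (θ : H →* L) {X : GM L} {x : X.V}
    (h : Inv (res θ (X ⊠ FF L)) (x ⊗ₜ[kk] (1 : L → kk))) : Inv (res θ X) x := by
  intro g
  have h1 := h g
  change (X ⊠ FF L).ρ (θ g) _ = _ at h1
  rw [tens_ρ, inv_one L] at h1
  exact tmul_one_inj (X := X) h1

lemma Conn.map {A' B' C' : GM L} {E : SES A B C} {E' : SES A' B' C'} {e : C.V} {e' : (A ⊠ QQ L).V}
    (h : Conn E e e') {fA : A.V →ₗ[kk] A'.V} {fB : B.V →ₗ[kk] B'.V} {fC : C.V →ₗ[kk] C'.V}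
    (hB : Eqv B B' fB) (h1 : ∀ a, fB (E.i a) = E'.i (fA a)) (h2 : ∀ b, fC (E.p b) = E'.p (fB b)) :
    Conn E' (fC e) (TensorProduct.map fA LinearMap.id e') := by
  obtain ⟨ζ, hζ, hp, hi⟩ := h
  refine ⟨TensorProduct.map fB LinearMap.id ζ, hζ.map (hB.map (Eqv.id _)), ?_, ?_⟩
  · have h3 := congrArg (TensorProduct.map fC (LinearMap.id : (L → kk) →ₗ[kk] _)) hp
    rw [mm, map_tmul] at h3
    rw [mm]
    rw [show E'.p ∘ₗ fB = fC ∘ₗ E.p from LinearMap.ext fun b => (h2 b).symm]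
    exact h3
  · have h3 := congrArg (TensorProduct.map fB (LinearMap.id : (QQ L).V →ₗ[kk] _)) hi
    rw [mm, mm] at h3
    rw [mm, mm]
    rw [show E'.i ∘ₗ fA = fB ∘ₗ E.i from LinearMap.ext fun b => (h1 b).symm]
    exact h3

variable [Fintype L]

lemma conn_exists (E : SES A B C) {e : C.V} (he : Inv C e) :
    ∃ e', Inv (A ⊠ QQ L) e' ∧ Conn E e e' := by
  have h1 : Inv (C ⊠ FF L) (e ⊗ₜ[kk] (1 : L → kk)) := he.tmul (inv_one L)
  obtain ⟨y, hy⟩ := TZ_FF L (MonoidHom.id _) (fun _ _ h => h) C _ h1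
  change nm (C ⊠ FF L) y = _ at hy
  let E1 := E.tr (FF L)
  let E2 := E.tr (QQ L)
  let ζ := nm (B ⊠ FF L) (E1.s y)
  have hp : E1.p ζ = e ⊗ₜ[kk] (1 : L → kk) := by
    rw [← hy, nm_map E1.hp, E1.ps]
  have hζ : Inv (B ⊠ FF L) ζ := inv_nm _ _
  have h2 : E2.p (TensorProduct.map LinearMap.id (qm L) ζ) = 0 := by
    have h3 := congrArg (TensorProduct.map (LinearMap.id : C.V →ₗ[kk] _) (qm L)) hp
    change TensorProduct.map _ _ (TensorProduct.map _ _ ζ) = _ at h3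
    rw [map_tmul, qm_one, tmul_zero, mm] at h3
    change TensorProduct.map _ _ (TensorProduct.map _ _ ζ) = _
    rw [mm]; exact h3
  refine ⟨E2.r (TensorProduct.map LinearMap.id (qm L) ζ), E2.inv_r h2
    (hζ.map ((Eqv.id B).map (qm_eqv L))), ζ, hζ, hp, E2.ir h2⟩

lemma Conn.vanish {H : Type} [Group H] [Fintype H] {θ : H →* L} (hθ : Function.Injective θ)
    {A' B' C' : GM H} {E : SES A B C} {E' : SES A' B' C'} {e : C.V} {e' : (A ⊠ QQ L).V}
    (h : Conn E e e') {fA : A.V →ₗ[kk] A'.V} {fB : B.V →ₗ[kk] B'.V} {fC : C.V →ₗ[kk] C'.V}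
    (hB : Eqv (res θ B) B' fB) (h1 : ∀ a, fB (E.i a) = E'.i (fA a))
    (h2 : ∀ b, fC (E.p b) = E'.p (fB b)) (hn : IsNm C' (fC e)) :
    IsNm (A' ⊠ res θ (QQ L)) (TensorProduct.map fA LinearMap.id e') := by
  obtain ⟨ζ, hζ, hp, hi⟩ := h
  obtain ⟨y, hy⟩ := hn
  let F := res θ (FF L)
  let ζ' : (B' ⊠ F).V := TensorProduct.map fB LinearMap.id ζ
  have hζ' : Inv (B' ⊠ F) ζ' :=
    Inv.map (X := res θ B ⊠ F) (hB.map (Eqv.id F)) (hζ.res θ)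
  let n' : B'.V := nm B' (E'.s y)
  have hn' : E'.p n' = fC e := by rw [← hy, nm_map E'.hp, E'.ps]
  let ξ : (B' ⊠ F).V := ζ' + n' ⊗ₜ[kk] (1 : L → kk)
  have hξ : Inv (B' ⊠ F) ξ := hζ'.add ((inv_nm _ _).tmul ((inv_one L).res θ))
  let E1 := E'.tr F
  have hpξ : E1.p ξ = 0 := by
    change TensorProduct.map E'.p LinearMap.id (ζ' + n' ⊗ₜ[kk] (1 : L → kk)) = 0
    rw [map_add, map_tmul, hn', mm]
    rw [show E'.p ∘ₗ fB = fC ∘ₗ E.p from LinearMap.ext fun b => (h2 b).symm]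
    have h3 := congrArg (TensorProduct.map fC (LinearMap.id : (L → kk) →ₗ[kk] _)) hp
    rw [mm, map_tmul] at h3
    rw [h3]
    exact add_self_kk _
  have hη := TZ_FF L θ hθ A' _ (E1.inv_r hpξ hξ)
  have hq := hη.map ((Eqv.id A').map ((qm_eqv L).res θ))
  convert hq using 1
  apply (E'.tr (res θ (QQ L))).inj
  change TensorProduct.map E'.i LinearMap.id _ = TensorProduct.map E'.i LinearMap.id _
  have h4 : TensorProduct.map E'.i (LinearMap.id : (L → kk) →ₗ[kk] _) (E1.r ξ) = ξ := E1.ir hpξ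
  have h5 := congrArg (TensorProduct.map (LinearMap.id : B'.V →ₗ[kk] _) (qm L)) h4
  rw [mm] at h5
  rw [mm, mm]
  refine Eq.trans ?_ h5.symm
  change _ = TensorProduct.map LinearMap.id (qm L) (ζ' + n' ⊗ₜ[kk] (1 : L → kk))
  rw [map_add, map_tmul, qm_one, tmul_zero, add_zero]
  rw [show E'.i ∘ₗ fA = fB ∘ₗ E.i from LinearMap.ext fun b => (h1 b).symm]
  have h6 := congrArg (TensorProduct.map fB (LinearMap.id : (QQ L).V →ₗ[kk] _)) hi
  rw [mm, mm] at h6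
  rw [mm]
  exact h6

lemma Conn.back {H : Type} [Group H] [Fintype H] {θ : H →* L} 
    {E : SES A B C} {e : C.V} {e' : (A ⊠ QQ L).V}
    (h : Conn E e e') (hn : IsNm (res θ (A ⊠ QQ L)) e') :
    ∃ ξ, Inv (res θ B) ξ ∧ E.p ξ = e := by
  obtain ⟨ζ, hζ, hp, hi⟩ := h
  obtain ⟨y, hy⟩ := hn
  let E2 := (sQ L).tl A
  let yt : (A ⊠ FF L).V := nm (res θ (A ⊠ FF L)) (E2.s y)
  have hyt : TensorProduct.map LinearMap.id (qm L) yt = e' := by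
    change E2.p yt = e'
    have := nm_map (E2.hp.res θ) (E2.s y)
    rw [E2.ps] at this
    rw [← hy]; exact this
  let ζ' : (B ⊠ FF L).V := ζ + TensorProduct.map E.i LinearMap.id yt
  have hζ' : Inv (res θ (B ⊠ FF L)) ζ' := by
    refine Inv.add (hζ.res θ) ?_
    exact Inv.map (X := res θ (A ⊠ FF L)) ((E.hi.map (Eqv.id (FF L))).res θ) (inv_nm _ _)
  have h0 : TensorProduct.map LinearMap.id (qm L) ζ' = 0 := by
    change TensorProduct.map LinearMap.id (qm L) (ζ + TensorProduct.map E.i LinearMap.id yt) = 0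
    rw [map_add, ← hi, ← hyt, mm, mm]
    exact add_self_kk _
  obtain ⟨ξ, hξ⟩ := from_const h0
  refine ⟨ξ, inv_of_tmul_one θ (hξ ▸ hζ'), ?_⟩
  apply tmul_one_inj (X := C) (L := L)
  rw [← hp]
  have h7 : TensorProduct.map E.p (LinearMap.id : (L → kk) →ₗ[kk] _) ζ' = TensorProduct.map E.p LinearMap.id ζ := by
    change TensorProduct.map E.p LinearMap.id (ζ + TensorProduct.map E.i LinearMap.id yt) = _
    rw [map_add, mm]
    rw [show E.p ∘ₗ E.i = 0 from LinearMap.ext E.pi, TensorProduct.map_zero_left]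
    simp
  rw [← h7, hξ, map_tmul]; rfl

end conn

structure Cx (L : Type) [Group L] where
  C : GM L
  d : C.V →ₗ[kk] C.V
  h : C.V →ₗ[kk] C.V
  P : ℕ → (C.V →ₗ[kk] C.V)
  ed : Eqv C C d
  dd : ∀ x, d (d x) = 0
  hom : ∀ x, d (h x) + h (d x) = x
  eP : ∀ s, Eqv C C (P s)
  Pd : ∀ s x, P s (d x) = d (P (s + 1) x)
  kP : ∀ s x, d x = 0 → d (P s x) = 0
  PP : ∀ s x, P s (P s x) = P s x

namespace Cx
variable {L : Type} [Group L] (X : Cx L)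

abbrev Z : GM L := subGM X.C (LinearMap.ker X.d) (ker_stable X.ed)

def E : SES X.Z X.C X.Z where
  i := (LinearMap.ker X.d).subtype
  p := LinearMap.codRestrict _ X.d X.dd
  s := X.h ∘ₗ (LinearMap.ker X.d).subtype
  r := LinearMap.codRestrict _ (LinearMap.id + X.h ∘ₗ X.d) (by
    intro x
    rw [LinearMap.mem_ker]
    change X.d (x + X.h (X.d x)) = 0
    have h1 := X.hom (X.d x)
    rw [X.dd, map_zero, add_zero] at h1
    rw [map_add, h1, add_self_kk])
  hi := eqv_subtype _
  hp := by
    intro g x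
    apply Subtype.ext
    exact X.ed g x
  ri := by
    intro a
    apply Subtype.ext
    have h : X.d a.1 = 0 := a.2
    change a.1 + X.h (X.d a.1) = a.1
    rw [h, map_zero, add_zero]
  ps := by
    intro c
    apply Subtype.ext
    have h : X.d c.1 = 0 := c.2
    have h1 := X.hom c.1
    rw [h, map_zero, add_zero] at h1
    exact h1
  split := by
    intro b
    change b + X.h (X.d b) + X.h (X.d b) = b
    rw [add_assoc, add_self_kk, add_zero]

def PZ (s : ℕ) : X.Z.V →ₗ[kk] X.Z.V :=
  (X.P s).restrict (by
    intro x hx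
    rw [LinearMap.mem_ker] at *
    exact X.kP s x hx)

lemma PZ_eqv (s : ℕ) : Eqv X.Z X.Z (X.PZ s) := by
  intro g x
  apply Subtype.ext
  exact X.eP s g x.1

def asc (n : ℕ) : ((X.Z ⊠ AA L n) ⊠ QQ L).V ≃ₗ[kk] (X.Z ⊠ AA L (n + 1)).V :=
  TensorProduct.assoc kk X.Z.V (AA L n).V (QQ L).V

lemma asc_eqv (n : ℕ) : Eqv ((X.Z ⊠ AA L n) ⊠ QQ L) (X.Z ⊠ AA L (n + 1)) (X.asc n).toLinearMap :=
  eqv_assoc _ _ _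

def Reach (e0 : X.Z.V) : (n : ℕ) → (X.Z ⊠ AA L n).V → Prop
  | 0, e => e = e0 ⊗ₜ[kk] (show (AA L 0).V from (1 : kk))
  | n + 1, e => ∃ f, Reach e0 n f ∧ ∃ e', e = X.asc n e' ∧ Conn (X.E.tr (AA L n)) f e' ∧
      Inv (X.Z ⊠ AA L (n + 1)) e ∧ TensorProduct.map (X.PZ n) LinearMap.id f = f ∧
        TensorProduct.map (X.PZ (n + 1)) LinearMap.id e = e

lemma asc_map {X' : Type} [AddCommGroup X'] [Module kk X'] (f : X.Z.V →ₗ[kk] X') (n : ℕ)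
    (e : ((X.Z ⊠ AA L n) ⊠ QQ L).V) {W W' : Type} [AddCommGroup W] [Module kk W]
    [AddCommGroup W'] [Module kk W'] (g : (AA L n).V →ₗ[kk] W) (g' : (QQ L).V →ₗ[kk] W') :
    TensorProduct.map f (TensorProduct.map g g') (X.asc n e) =
      TensorProduct.assoc kk X' W W'
        (TensorProduct.map (TensorProduct.map f g) g' e) := by
  have : TensorProduct.map f (TensorProduct.map g g') ∘ₗ
      (TensorProduct.assoc kk X.Z.V (AA L n).V (QQ L).V).toLinearMap =
      (TensorProduct.assoc kk X' W W').toLinearMap ∘ₗ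
        (TensorProduct.map (TensorProduct.map f g) g') := by
    apply TensorProduct.ext_threefold
    intro x y z
    rfl
  exact LinearMap.congr_fun this e

variable [Fintype L]

theorem reach_exists {e0 : X.Z.V} (he : Inv X.Z e0) (hP : X.PZ 0 e0 = e0) (n : ℕ) :
    ∃ e, X.Reach e0 n e ∧ Inv (X.Z ⊠ AA L n) e ∧
      TensorProduct.map (X.PZ n) LinearMap.id e = e := by
  induction n with
  | zero =>
    refine ⟨_, rfl, he.tmul (inv_triv L 1), ?_⟩
    rw [map_tmul, hP]; rfl
  | succ n ih =>
    obtain ⟨f, hf, hfi, hfP⟩ := ih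
    obtain ⟨e1, he1, hc⟩ := conn_exists (X.E.tr (AA L n)) hfi
    let e' := TensorProduct.map (TensorProduct.map (X.PZ (n + 1)) LinearMap.id) LinearMap.id e1
    have hc' := hc.map (E' := X.E.tr (AA L n))
      (fA := TensorProduct.map (X.PZ (n + 1)) LinearMap.id)
      (fB := TensorProduct.map (X.P (n + 1)) LinearMap.id)
      (fC := TensorProduct.map (X.PZ n) LinearMap.id) ((X.eP (n + 1)).map (Eqv.id (AA L n)))
      (by
        intro a
        change TensorProduct.map _ _ (TensorProduct.map _ _ a) =
          TensorProduct.map _ _ (TensorProduct.map _ _ a)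
        rw [mm, mm]; rfl)
      (by
        intro a
        change TensorProduct.map _ _ (TensorProduct.map _ _ a) =
          TensorProduct.map _ _ (TensorProduct.map _ _ a)
        rw [mm, mm]
        congr 2
        apply LinearMap.ext
        intro x
        apply Subtype.ext
        exact X.Pd n x)
    rw [hfP] at hc'
    have hi : Inv (X.Z ⊠ AA L (n + 1)) (X.asc n e') := by
      have h1 : Inv ((X.Z ⊠ AA L n) ⊠ QQ L) e' :=
        he1.map (((X.PZ_eqv (n + 1)).map (Eqv.id (AA L n))).map (Eqv.id (QQ L)))
      exact h1.map (X.asc_eqv n)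
    have hPP : TensorProduct.map (X.PZ (n + 1)) LinearMap.id (X.asc n e') = X.asc n e' := by
      have h1 := X.asc_map (X.PZ (n + 1)) n e' LinearMap.id LinearMap.id
      rw [TensorProduct.map_id] at h1
      refine h1.trans ?_
      congr 1
      change TensorProduct.map _ _ (TensorProduct.map _ _ e1) = TensorProduct.map _ _ e1
      rw [mm, ← TensorProduct.map_comp]
      congr 2
      apply congrArg (fun f => TensorProduct.map f LinearMap.id)
      apply LinearMap.ext
      intro x
      apply Subtype.ext
      exact X.PP (n + 1) x
    exact ⟨X.asc n e', ⟨f, hf, e', rfl, hc', hi, hfP, hPP⟩, hi, hPP⟩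

theorem vanish {H : Type} [Group H] [Fintype H] {θ : H →* L} (hθ : Function.Injective θ)
    (Y : Cx H) (f : X.C.V →ₗ[kk] Y.C.V) (hf : Eqv (res θ X.C) Y.C f)
    (fZ : X.Z.V →ₗ[kk] Y.Z.V) (hfZ : ∀ z, (fZ z : Y.C.V) = f z.1)
    (hd : ∀ x, f (X.d x) = Y.d (f x)) (e0 : X.Z.V) (h0 : f e0.1 = 0) (n : ℕ) :
    ∀ e, X.Reach e0 n e → IsNm (Y.Z ⊠ res θ (AA L n)) (TensorProduct.map fZ LinearMap.id e) := by
  induction n with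
  | zero =>
    intro e he
    have : fZ e0 = 0 := Subtype.ext (by rw [hfZ, h0]; rfl)
    change e = _ at he
    rw [he, map_tmul, this, zero_tmul]
    exact IsNm.zero
  | succ n ih =>
    rintro e ⟨e1, he1, e', rfl, hc, -⟩
    have h1 := hc.vanish hθ (E' := Y.E.tr (res θ (AA L n)))
      (fA := TensorProduct.map fZ LinearMap.id)
      (fB := TensorProduct.map f LinearMap.id)
      (fC := TensorProduct.map fZ LinearMap.id) (Eqv.map (X := res θ X.C) hf (Eqv.id (res θ (AA L n))))
      (by
        intro a
        change TensorProduct.map _ _ (TensorProduct.map _ _ a) =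
          TensorProduct.map _ _ (TensorProduct.map _ _ a)
        rw [mm, mm]
        congr 2
        apply LinearMap.ext
        intro x
        exact (hfZ x).symm)
      (by
        intro a
        change TensorProduct.map _ _ (TensorProduct.map _ _ a) =
          TensorProduct.map _ _ (TensorProduct.map _ _ a)
        rw [mm, mm]
        congr 2
        apply LinearMap.ext
        intro x
        apply Subtype.ext
        exact (hfZ _).trans (hd x))
      (ih _ he1)
    have h2 := h1.map (eqv_assoc Y.Z (res θ (AA L n)) (res θ (QQ L)))
    have h3 := X.asc_map fZ n e' LinearMap.id LinearMap.id
    rw [TensorProduct.map_id] at h3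
    exact h3 ▸ h2

theorem back {H : Type} [Group H] [Fintype H] {θ : H →* L} (m : ℕ)
    (hN : ∀ s, 1 ≤ s → s ≤ m → Null (res θ X.C) (res θ X.C) (X.P s)) (e0 : X.Z.V) (n : ℕ) :
    ∀ e, X.Reach e0 n e → n ≤ m → IsNm (res θ (X.Z ⊠ AA L n)) e → IsNm (res θ X.Z) e0 := by
  induction n with
  | zero =>
    intro e he _ h
    change e = _ at he
    have h2 := h.map ((eqv_rid X.Z).res θ)
    rw [he] at h2
    have h4 : (TensorProduct.rid kk X.Z.V).toLinearMap (e0 ⊗ₜ[kk] (1 : kk)) = e0 := by simp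
    exact h4 ▸ h2
  | succ n ih =>
    rintro e ⟨e1, he1, e', rfl, hc, -, hP, -⟩ hn h
    refine ih e1 he1 (by omega) ?_
    have h1 := h.map ((X.asc_eqv n).symm.res θ)
    have h2 : IsNm (res θ ((X.Z ⊠ AA L n) ⊠ QQ L)) e' := by simpa using h1
    obtain ⟨ξ, hξ, hpξ⟩ := hc.back h2
    have h3 := (Null.map_left (hN (n + 1) (by omega) hn) (Eqv.id (res θ (AA L n)))).isNm hξ
    have h4 := h3.map ((X.E.tr (AA L n)).hp.res θ)
    convert h4 using 1
    conv_lhs => rw [← hP, ← hpξ]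
    change TensorProduct.map _ _ (TensorProduct.map _ _ ξ) =
      TensorProduct.map _ _ (TensorProduct.map _ _ ξ)
    rw [mm, mm]
    congr 2
    apply LinearMap.ext
    intro x
    apply Subtype.ext
    exact X.Pd n x

end Cx
end S8
end
open TensorProduct
set_option linter.unusedSectionVars false
noncomputable section
namespace S8

abbrev Cells (ι : Type) := ι → SignType

def sg (c : C2) : SignType := if c = 1 then 1 else -1

lemma sg_one : sg 1 = 1 := rfl
lemma sg_mul : ∀ a b, sg (a * b) = sg a * sg b := by decide
lemma sg_inv : ∀ a, sg a⁻¹ = sg a := by decide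
lemma sg_ne : ∀ a, sg a ≠ 0 := by decide
lemma sg_sq : ∀ a, sg a * sg a = 1 := by decide
lemma sg_cases : ∀ a, sg a = 1 ∨ sg a = -1 := by decide

section linops
variable {ι : Type} [Fintype ι] [DecidableEq ι]

def dw (ω : ι) : (Cells ι → kk) →ₗ[kk] (Cells ι → kk) where
  toFun c q := if q ω = 0 then c (Function.update q ω 1) + c (Function.update q ω (-1)) else 0
  map_add' a b := by
    funext q; simp only [Pi.add_apply]; split_ifs
    · abel
    · simp
  map_smul' a b := by
    funext q; simp only [Pi.smul_apply, smul_eq_mul, RingHom.id_apply]; split_ifs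
    · ring
    · simp

def hw (ω : ι) : (Cells ι → kk) →ₗ[kk] (Cells ι → kk) where
  toFun c q := if q ω = 1 then c (Function.update q ω 0) else 0
  map_add' a b := by
    funext q; simp only [Pi.add_apply]; split_ifs
    · abel
    · simp
  map_smul' a b := by
    funext q; simp only [Pi.smul_apply, smul_eq_mul, RingHom.id_apply]; split_ifs
    · ring
    · simp

def piw (ω : ι) : (Cells ι → kk) →ₗ[kk] (Cells ι → kk) where
  toFun c q := if q ω = 0 then 0 else c (Function.update q ω (-1))
  map_add' a b := by
    funext q; simp only [Pi.add_apply]; split_ifs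
    · simp
    · abel
  map_smul' a b := by
    funext q; simp only [Pi.smul_apply, smul_eq_mul, RingHom.id_apply]; split_ifs
    · simp
    · ring

lemma dw_apply (ω : ι) (c : Cells ι → kk) (q) : dw ω c q =
    if q ω = 0 then c (Function.update q ω 1) + c (Function.update q ω (-1)) else 0 := rfl
lemma hw_apply (ω : ι) (c : Cells ι → kk) (q) : hw ω c q =
    if q ω = 1 then c (Function.update q ω 0) else 0 := rfl
lemma piw_apply (ω : ι) (c : Cells ι → kk) (q) : piw ω c q =
    if q ω = 0 then 0 else c (Function.update q ω (-1)) := rfl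

def Dm (ι : Type) [Fintype ι] [DecidableEq ι] : (Cells ι → kk) →ₗ[kk] (Cells ι → kk) := ∑ ω, dw ω

lemma Dm_apply' (c : Cells ι → kk) : Dm ι c = ∑ ω, dw ω c := by simp [Dm]

lemma Dm_apply (c : Cells ι → kk) (q) : Dm ι c q = ∑ ω, dw ω c q := by
  rw [Dm_apply', Finset.sum_apply]

lemma dw_self (ω : ι) (c : Cells ι → kk) : dw ω (dw ω c) = 0 := by
  funext q
  rw [dw_apply, dw_apply, dw_apply]
  simp

lemma dw_comm {ω ω' : ι} (h : ω ≠ ω') (c : Cells ι → kk) : dw ω (dw ω' c) = dw ω' (dw ω c) := by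
  funext q
  rw [dw_apply, dw_apply, dw_apply, dw_apply, dw_apply, dw_apply]
  simp only [Function.update_of_ne h, Function.update_of_ne h.symm, Function.update_comm h]
  by_cases h1 : q ω = 0 <;> by_cases h2 : q ω' = 0 <;> simp [h1, h2]
  abel

lemma Dm_sq (c : Cells ι → kk) : Dm ι (Dm ι c) = 0 := by
  rw [Dm_apply', Dm_apply']
  simp only [map_sum]
  rw [← Finset.sum_product']
  refine Finset.sum_involution (fun p _ => (p.2, p.1)) ?_ ?_ ?_ ?_
  · rintro ⟨a, b⟩ _
    by_cases h : a = b
    · subst h; simp [dw_self]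
    · dsimp only; rw [dw_comm h]; exact add_self_kk _
  · rintro ⟨a, b⟩ _ h1 h2
    apply h1
    have : a = b := (Prod.ext_iff.1 h2).2
    subst this
    exact dw_self _ _
  · intros; simp
  · intros; rfl

lemma hw_comm {ω ω' : ι} (h : ω ≠ ω') (c : Cells ι → kk) : dw ω (hw ω' c) = hw ω' (dw ω c) := by
  funext q
  rw [dw_apply, hw_apply, hw_apply, hw_apply, dw_apply]
  simp only [Function.update_of_ne h, Function.update_of_ne h.symm, Function.update_comm h]
  by_cases h1 : q ω = 0 <;> by_cases h2 : q ω' = 1 <;> simp [h1, h2]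

lemma hw_self (ω : ι) (c : Cells ι → kk) : dw ω (hw ω c) + hw ω (dw ω c) = c + piw ω c := by
  funext q
  simp only [Pi.add_apply]
  rw [dw_apply, hw_apply, hw_apply, hw_apply, dw_apply, piw_apply]
  simp only [Function.update_idem, Function.update_self]
  have h3 : ∀ a : SignType, a = q ω → Function.update q ω a = q := by
    intro a h; rw [h, Function.update_eq_self]
  have hz : (-1 : SignType) ≠ 1 := by decide
  rcases (by decide : ∀ a : SignType, a = 0 ∨ a = 1 ∨ a = -1) (q ω) with h | h | h
  · have hz : (-1 : SignType) ≠ 1 := by decide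
    simp [h, h3 0 h.symm, hz]
  · simp [h, h3 1 h.symm]
  · have hz : (-1 : SignType) ≠ 1 := by decide
    simp [h, hz, h3 (-1) h.symm, add_self_kk]

lemma Dm_hw (ω : ι) (c : Cells ι → kk) : Dm ι (hw ω c) + hw ω (Dm ι c) = c + piw ω c := by
  rw [Dm_apply', Dm_apply', map_sum, ← Finset.sum_add_distrib, Finset.sum_eq_single ω, hw_self]
  · intro b _ hb
    rw [hw_comm hb]; exact add_self_kk _
  · simp

lemma Dm_piw (ω : ι) (c : Cells ι → kk) : Dm ι (piw ω c) = piw ω (Dm ι c) := by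
  have h1 := congrArg (Dm ι) (Dm_hw ω c)
  have h2 := Dm_hw ω (Dm ι c)
  rw [map_add, map_add, Dm_sq, zero_add] at h1
  rw [Dm_sq, map_zero, add_zero] at h2
  rw [h1] at h2
  exact add_left_cancel h2

def Hl : List ι → (Cells ι → kk) →ₗ[kk] (Cells ι → kk)
  | [] => 0
  | ω :: l => hw ω + piw ω ∘ₗ Hl l

def pl : List ι → (Cells ι → kk) →ₗ[kk] (Cells ι → kk)
  | [] => LinearMap.id
  | ω :: l => piw ω ∘ₗ pl l

lemma Dm_Hl (l : List ι) (c : Cells ι → kk) : Dm ι (Hl l c) + Hl l (Dm ι c) = c + pl l c := by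
  induction l with
  | nil => simp only [Hl, pl, LinearMap.zero_apply, map_zero, LinearMap.id_apply]
           rw [add_zero]; exact (add_self_kk c).symm
  | cons ω l ih =>
    change Dm ι (hw ω c + piw ω (Hl l c)) + (hw ω (Dm ι c) + piw ω (Hl l (Dm ι c))) =
      c + piw ω (pl l c)
    have h1 := congrArg (piw ω) ih
    rw [map_add, map_add] at h1
    rw [map_add, Dm_piw]
    have h2 := Dm_hw ω c
    have : ∀ a b d e : Cells ι → kk, a + b + (d + e) = (a + d) + (b + e) := by intros; abel
    rw [this, h2, h1]
    have : ∀ a b d : Cells ι → kk, a + b + (b + d) = a + d + (b + b) := by intros; abel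
    rw [this, add_self_kk, add_zero]

lemma pl_apply (l : List ι) (c : Cells ι → kk) (q) : pl l c q =
    if ∃ ω ∈ l, q ω = 0 then 0 else c (fun i => if i ∈ l then -1 else q i) := by
  induction l generalizing q with
  | nil => simp [pl]
  | cons ω l ih =>
    change piw ω (pl l c) q = _
    rw [piw_apply, ih]
    by_cases h : q ω = 0
    · simp [h]
    · rw [if_neg h]
      have h1 : (∃ ω' ∈ l, Function.update q ω (-1) ω' = 0) ↔ ∃ ω' ∈ ω :: l, q ω' = 0 := by
        constructor
        · rintro ⟨a, ha, hq⟩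
          by_cases haw : a = ω
          · subst haw; simp at hq
          · rw [Function.update_of_ne haw] at hq
            exact ⟨a, by simp [ha], hq⟩
        · rintro ⟨a, ha, hq⟩
          have haw : a ≠ ω := by rintro rfl; exact h hq
          refine ⟨a, by simpa [haw] using ha, ?_⟩
          rw [Function.update_of_ne haw, hq]
      simp only [h1]
      congr 2
      funext i
      by_cases hi : i = ω
      · subst hi; simp
      · simp [hi]

def vt (ι : Type) [Fintype ι] : Cells ι → kk :=
  open Classical in fun q => if ∀ ω, q ω ≠ 0 then 1 else 0

lemma vt_apply {q : Cells ι} (h : ∀ ω, q ω ≠ 0) : vt ι q = 1 := if_pos h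
lemma vt_apply0 {q : Cells ι} {ω : ι} (h : q ω = 0) : vt ι q = 0 :=
  if_neg (fun h1 => h1 ω h)

lemma dw_vt (ω : ι) : dw ω (vt ι) = 0 := by
  funext q
  rw [dw_apply]
  split_ifs with h
  · by_cases h2 : ∀ ω', ω' ≠ ω → q ω' ≠ 0
    · have h3 : ∀ a : SignType, a ≠ 0 → vt ι (Function.update q ω a) = 1 := by
        intro a ha
        apply vt_apply
        intro ω'
        by_cases h4 : ω' = ω
        · subst h4; simpa using ha
        · rw [Function.update_of_ne h4]; exact h2 ω' h4
      rw [h3 1 (by decide), h3 (-1) (by decide)]; exact add_self_kk _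
    · push Not at h2
      obtain ⟨ω', h3, h4⟩ := h2
      have h5 : ∀ a : SignType, vt ι (Function.update q ω a) = 0 := by
        intro a
        apply vt_apply0 (ω := ω')
        rw [Function.update_of_ne h3, h4]
      rw [h5, h5]; exact add_self_kk _
  · rfl

lemma Dm_vt : Dm ι (vt ι) = 0 := by
  rw [Dm_apply']; simp [dw_vt]

lemma hw_vt (ω : ι) : hw ω (vt ι) = 0 := by
  funext q
  rw [hw_apply, vt_apply0 (ω := ω) (by simp)]; simp

lemma piw_vt (ω : ι) : piw ω (vt ι) = vt ι := by
  funext q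
  rw [piw_apply]
  split_ifs with h
  · rw [vt_apply0 h]
  · by_cases h2 : ∀ ω', q ω' ≠ 0
    · rw [vt_apply h2, vt_apply]
      intro ω'
      by_cases h4 : ω' = ω
      · subst h4; simp
      · rw [Function.update_of_ne h4]; exact h2 ω'
    · push Not at h2
      obtain ⟨ω', h3⟩ := h2
      have hne : ω' ≠ ω := by rintro rfl; exact h h3
      rw [vt_apply0 h3, vt_apply0 (ω := ω')]
      rw [Function.update_of_ne hne, h3]

lemma Hl_vt (l : List ι) : Hl l (vt ι) = 0 := by
  induction l with
  | nil => rfl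
  | cons ω l ih =>
    change hw ω (vt ι) + piw ω (Hl l (vt ι)) = 0
    rw [hw_vt, ih, map_zero, add_zero]

lemma Dm_at_vt (c : Cells ι → kk) {q : Cells ι} (h : ∀ ω, q ω ≠ 0) : Dm ι c q = 0 := by
  rw [Dm_apply]
  apply Finset.sum_eq_zero
  intro ω _
  rw [dw_apply, if_neg (h ω)]

def Hm (ι : Type) [Fintype ι] [DecidableEq ι] : (Cells ι → kk) →ₗ[kk] (Cells ι → kk) :=
  Hl Finset.univ.toList

abbrev mn (ι : Type) : Cells ι := fun _ => -1

lemma mn_ne (ω : ι) : mn ι ω ≠ 0 := by simp [mn]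

lemma Dm_Hm (c : Cells ι → kk) : Dm ι (Hm ι c) + Hm ι (Dm ι c) = c + c (mn ι) • vt ι := by
  rw [Hm, Dm_Hl]
  congr 1
  funext q
  rw [pl_apply]
  simp only [Finset.mem_toList, Finset.mem_univ, true_and, if_true]
  split_ifs with h
  · obtain ⟨ω, h⟩ := h
    simp [vt_apply0 h]
  · push Not at h
    simp [vt_apply h]

/-- number of nonzero coordinates -/
def nz (q : Cells ι) : ℕ := (Finset.univ.filter (fun i => q i ≠ 0)).card

lemma nz_update {q : Cells ι} {ω : ι} (h : q ω = 0) {a : SignType} (ha : a ≠ 0) :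
    nz (Function.update q ω a) = nz q + 1 := by
  unfold nz
  rw [← Finset.card_insert_of_notMem (s := Finset.univ.filter (fun i => q i ≠ 0)) (a := ω) (by simp [h])]
  congr 1
  ext i
  by_cases hi : i = ω
  · subst hi; simp [ha]
  · simp [hi]

lemma nz_vt {q : Cells ι} (h : ∀ ω, q ω ≠ 0) : nz q = Fintype.card ι := by
  unfold nz
  rw [Finset.filter_true_of_mem (by simpa using h)]; rfl

lemma nz_zero : nz (0 : Cells ι) = 0 := by simp [nz]

lemma eq_zero_of_nz {q : Cells ι} (h : nz q = 0) : q = 0 := by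
  unfold nz at h
  rw [Finset.card_eq_zero, Finset.filter_eq_empty_iff] at h
  funext i
  simpa using h (Finset.mem_univ i)

lemma vt_of_nz {q : Cells ι} (h : nz q = Fintype.card ι) (ω : ι) : q ω ≠ 0 := by
  unfold nz at h
  have := Finset.filter_card_eq (p := fun i => q i ≠ 0) (s := Finset.univ) (by rw [h]; rfl)
  exact this ω (Finset.mem_univ ω)

def prS (ι : Type) [Fintype ι] [DecidableEq ι] (s : ℕ) : (Cells ι → kk) →ₗ[kk] (Cells ι → kk) where
  toFun c q := if nz q = s then c q else 0
  map_add' a b := by funext q; simp only [Pi.add_apply]; split_ifs <;> simp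
  map_smul' a b := by
    funext q; simp only [Pi.smul_apply, smul_eq_mul, RingHom.id_apply]; split_ifs <;> simp

lemma prS_apply (s : ℕ) (c : Cells ι → kk) (q) : prS ι s c q = if nz q = s then c q else 0 := rfl

lemma prS_Dm (s : ℕ) (c : Cells ι → kk) : prS ι s (Dm ι c) = Dm ι (prS ι (s + 1) c) := by
  funext q
  rw [prS_apply, Dm_apply, Dm_apply]
  have h : ∀ ω, dw ω (prS ι (s + 1) c) q = if nz q = s then dw ω c q else 0 := by
    intro ω
    rw [dw_apply, dw_apply, prS_apply, prS_apply]
    by_cases h : q ω = 0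
    · rw [nz_update h (by decide), nz_update h (by decide)]
      simp only [h, if_true, add_left_inj]
      split_ifs <;> simp
    · simp [h]
  simp only [h]
  split_ifs <;> simp

lemma Dm_prS0 (c : Cells ι → kk) : Dm ι (prS ι 0 c) = 0 := by
  funext q
  rw [Dm_apply]
  apply Finset.sum_eq_zero
  intro ω _
  rw [dw_apply, prS_apply, prS_apply]
  split_ifs with h h1 h2 h2 <;> try rfl
  all_goals first | (rw [nz_update h (by decide)] at h1; omega) | skip
  all_goals first | (rw [nz_update h (by decide)] at h2; omega) | skip

lemma prS_prS (s : ℕ) (c : Cells ι → kk) : prS ι s (prS ι s c) = prS ι s c := by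
  funext q; rw [prS_apply, prS_apply]; split_ifs <;> rfl

lemma prS_vt (s : ℕ) : prS ι s (vt ι) = if s = Fintype.card ι then vt ι else 0 := by
  funext q
  rw [prS_apply]
  by_cases h2 : ∀ ω', q ω' ≠ 0
  · rw [nz_vt h2]
    by_cases h : s = Fintype.card ι
    · simp [h]
    · simp [h, Ne.symm h]
  · push Not at h2
    obtain ⟨ω', h3⟩ := h2
    have := vt_apply0 h3
    split_ifs <;> simp [this]

end linops
end S8
end
open TensorProduct
set_option linter.unusedSectionVars false
noncomputable section
namespace S8

section cube
variable {ι : Type} [Fintype ι] [DecidableEq ι] {L : Type} [Group L]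

def ca (π : L →* Equiv.Perm ι) (χ : L →* C2) (g : L) (q : Cells ι) : Cells ι :=
  fun i => sg (χ g) * q ((π g)⁻¹ i)

variable (π : L →* Equiv.Perm ι) (χ : L →* C2)

lemma ca_apply (g : L) (q : Cells ι) (i : ι) : ca π χ g q i = sg (χ g) * q ((π g)⁻¹ i) := rfl

lemma ca_one (q : Cells ι) : ca π χ 1 q = q := by
  funext i; simp [ca_apply, sg_one]

lemma ca_mul (g h : L) (q : Cells ι) : ca π χ (g * h) q = ca π χ g (ca π χ h q) := by
  funext i
  simp only [ca_apply, map_mul, sg_mul, mul_inv_rev, Equiv.Perm.mul_apply, mul_assoc]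

lemma ca_eq_zero (g : L) (q : Cells ι) (i : ι) : ca π χ g q i = 0 ↔ q ((π g)⁻¹ i) = 0 := by
  rw [ca_apply]
  rcases sg_cases (χ g) with h | h <;> rw [h]
  · rw [one_mul]
  · generalize q ((π g)⁻¹ i) = a
    revert a; decide

lemma ca_update (g : L) (q : Cells ι) (ω : ι) (a : SignType) :
    ca π χ g (Function.update q ω a) = Function.update (ca π χ g q) (π g ω) (sg (χ g) * a) := by
  funext i
  by_cases h : i = π g ω
  · subst h; simp [ca_apply]
  · have h2 : (π g)⁻¹ i ≠ ω := by
      rintro rfl; simp at h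
    rw [Function.update_of_ne h, ca_apply, ca_apply, Function.update_of_ne h2]

lemma nz_ca (g : L) (q : Cells ι) : nz (ca π χ g q) = nz q := by
  unfold nz
  refine Finset.card_bij (fun i _ => (π g)⁻¹ i) ?_ ?_ ?_
  · intro i hi
    simp only [Finset.mem_filter, Finset.mem_univ, true_and, ne_eq] at hi ⊢
    rwa [ca_eq_zero] at hi
  · intro a _ b _ h; simpa using h
  · intro b hb
    refine ⟨π g b, ?_, by simp⟩
    simp only [Finset.mem_filter, Finset.mem_univ, true_and, ne_eq] at hb ⊢
    rw [ca_eq_zero]; simpa using hb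

lemma vt_ca (g : L) (q : Cells ι) : vt ι (ca π χ g q) = vt ι q := by
  by_cases h : ∀ ω, q ω ≠ 0
  · rw [vt_apply h, vt_apply]
    intro ω
    rw [ne_eq, ca_eq_zero]; exact h _
  · push Not at h
    obtain ⟨ω, h⟩ := h
    rw [vt_apply0 h, vt_apply0 (ω := π g ω)]
    rw [ca_eq_zero]; simpa using h

def cRep : Representation kk L (Cells ι → kk) where
  toFun g := LinearMap.funLeft kk kk (ca π χ g⁻¹)
  map_one' := by
    apply LinearMap.ext; intro f; funext s
    simp [LinearMap.funLeft, ca_one]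
  map_mul' g h := by
    apply LinearMap.ext; intro f; funext s
    simp [LinearMap.funLeft, ca_mul]

abbrev FC : GM L := ⟨Cells ι → kk, cRep π χ⟩

lemma FC_ρ (g : L) (c : Cells ι → kk) (q : Cells ι) : (FC π χ).ρ g c q = c (ca π χ g⁻¹ q) := rfl

lemma Dm_eqv : Eqv (FC π χ) (FC π χ) (Dm ι) := by
  intro g c
  funext q
  rw [FC_ρ, Dm_apply, Dm_apply]
  refine Fintype.sum_equiv (π g⁻¹) _ _ ?_
  intro ω
  rw [dw_apply, dw_apply, FC_ρ, FC_ρ, ca_update, ca_update]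
  have h1 : ca π χ g⁻¹ q (π g⁻¹ ω) = 0 ↔ q ω = 0 := by
    rw [ca_eq_zero]; simp
  simp only [h1]
  split_ifs
  · rcases sg_cases (χ g⁻¹) with h | h <;> rw [h]
    · rw [one_mul, one_mul]
    · rw [mul_one, add_comm]; rfl
  · rfl

def dC : ((Cells ι → kk) × kk) →ₗ[kk] ((Cells ι → kk) × kk) :=
  LinearMap.prod (Dm ι ∘ₗ LinearMap.fst _ _ _ + (LinearMap.toSpanSingleton kk _ (vt ι)) ∘ₗ LinearMap.snd _ _ _) 0

lemma dC_apply (c : Cells ι → kk) (a : kk) : dC (c, a) = (Dm ι c + a • vt ι, 0) := rfl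

def hC : ((Cells ι → kk) × kk) →ₗ[kk] ((Cells ι → kk) × kk) :=
  LinearMap.prod (Hm ι ∘ₗ LinearMap.fst _ _ _) (LinearMap.proj (mn ι) ∘ₗ LinearMap.fst _ _ _)

lemma hC_apply (c : Cells ι → kk) (a : kk) : hC (c, a) = (Hm ι c, c (mn ι)) := rfl

def pC (s : ℕ) : ((Cells ι → kk) × kk) →ₗ[kk] ((Cells ι → kk) × kk) :=
  LinearMap.prodMap (prS ι s) (if s = Fintype.card ι + 1 then LinearMap.id else 0)

lemma pC_apply (s : ℕ) (c : Cells ι → kk) (a : kk) :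
    pC s (c, a) = (prS ι s c, if s = Fintype.card ι + 1 then a else 0) := by
  unfold pC
  split_ifs <;> rfl

lemma pC_dC (s : ℕ) (x : (Cells ι → kk) × kk) : pC s (dC x) = dC (pC (s + 1) x) := by
  obtain ⟨c, a⟩ := x
  rw [dC_apply, pC_apply, pC_apply, dC_apply, map_add, prS_Dm, map_smul, prS_vt]
  simp only [add_left_inj]
  split_ifs <;> simp

lemma kC (s : ℕ) (x : (Cells ι → kk) × kk) (h : dC x = 0) : dC (pC s x) = 0 := by
  cases s with
  | succ s => rw [← pC_dC, h, map_zero]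
  | zero =>
    obtain ⟨c, a⟩ := x
    rw [pC_apply, if_neg (by omega), dC_apply, Dm_prS0]; simp

def cube : Cx L where
  C := prodGM (FC π χ) (triv L)
  d := dC
  h := hC
  P := pC
  ed := by
    rintro g ⟨c, a⟩
    rw [prodGM_ρ]
    refine (dC_apply _ _).trans (Prod.ext ?_ rfl)
    change Dm ι ((FC π χ).ρ g c) + a • vt ι = (FC π χ).ρ g (Dm ι c + a • vt ι)
    rw [map_add, Dm_eqv, map_smul]
    congr 2
    funext q
    rw [FC_ρ, vt_ca]
  dd := by
    rintro ⟨c, a⟩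
    rw [dC_apply, dC_apply, map_add, Dm_sq, map_smul, Dm_vt]; simp
  hom := by
    rintro ⟨c, a⟩
    rw [dC_apply, hC_apply, hC_apply, dC_apply, map_add, map_smul]
    have : Hm ι (vt ι) = 0 := Hl_vt _
    rw [this, smul_zero, add_zero]
    refine Prod.ext ?_ ?_
    · change Dm ι (Hm ι c) + c (mn ι) • vt ι + Hm ι (Dm ι c) = c
      rw [add_right_comm, Dm_Hm, add_assoc, add_self_kk, add_zero]
    · change 0 + (Dm ι c (mn ι) + a * vt ι (mn ι)) = a
      rw [Dm_at_vt _ mn_ne, vt_apply mn_ne]; simp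
  eP := by
    rintro s g ⟨c, a⟩
    rw [prodGM_ρ]
    refine (pC_apply _ _ _).trans ?_
    rw [pC_apply]
    refine Prod.ext ?_ rfl
    funext q
    change prS ι s ((FC π χ).ρ g c) q = (FC π χ).ρ g (prS ι s c) q
    rw [FC_ρ, prS_apply, prS_apply, nz_ca, FC_ρ]
  Pd := pC_dC
  kP := kC
  PP := by
    rintro s ⟨c, a⟩
    rw [pC_apply, pC_apply, prS_prS]
    split_ifs <;> rfl

lemma cube_Z {z : (Cells ι → kk) × kk} (hz : dC z = 0) {q : Cells ι} (hq : ∀ ω, q ω ≠ 0) :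
    z.1 q = z.1 (mn ι) := by
  have h := (cube (L := Unit) 1 1).hom z
  change dC (hC z) + hC (dC z) = z at h
  rw [hz, map_zero, add_zero] at h
  obtain ⟨c, a⟩ := z
  rw [hC_apply, dC_apply] at h
  have h1 := congrFun (congrArg Prod.fst h) q
  simp only [Pi.add_apply, Pi.smul_apply, smul_eq_mul] at h1
  rw [Dm_at_vt _ hq, vt_apply hq] at h1
  simpa using h1.symm

def evC : (cube π χ).Z.V →ₗ[kk] kk :=
  LinearMap.proj (mn ι) ∘ₗ LinearMap.fst kk (Cells ι → kk) kk ∘ₗ (LinearMap.ker (dC (ι := ι))).subtype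

lemma evC_apply (z : (cube π χ).Z.V) : evC π χ z = z.1.1 (mn ι) := rfl

lemma evC_eqv : Eqv (cube π χ).Z (triv L) (evC π χ) := by
  intro g z
  change (FC π χ).ρ g z.1.1 (mn ι) = z.1.1 (mn ι)
  rw [FC_ρ]
  refine cube_Z (z := z.1) z.2 ?_
  intro ω
  rw [ne_eq, ca_eq_zero]; exact mn_ne _

def jC : kk →ₗ[kk] (cube π χ).Z.V :=
  LinearMap.codRestrict (LinearMap.ker (dC (ι := ι)))
    (LinearMap.inl kk (Cells ι → kk) kk ∘ₗ LinearMap.toSpanSingleton kk _ (vt ι)) (by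
    intro a
    rw [LinearMap.mem_ker]
    change dC (a • vt ι, 0) = 0
    rw [dC_apply, map_smul, Dm_vt]; simp)

lemma jC_apply (a : kk) : (jC π χ a).1 = (a • vt ι, (0 : kk)) := rfl

lemma jC_eqv : Eqv (triv L) (cube π χ).Z (jC π χ) := by
  intro g a
  apply Subtype.ext
  refine Prod.ext ?_ rfl
  change a • vt ι = (FC π χ).ρ g (a • vt ι)
  rw [map_smul]
  congr 1
  funext q
  rw [FC_ρ, vt_ca]

lemma PZ_card (z : (cube π χ).Z.V) : (cube π χ).PZ (Fintype.card ι) z = jC π χ (evC π χ z) := by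
  apply Subtype.ext
  rw [jC_apply]
  change pC (Fintype.card ι) z.1 = _
  obtain ⟨⟨c, a⟩, hz⟩ := z
  change pC (Fintype.card ι) (c, a) = _
  rw [pC_apply, if_neg (by omega)]
  refine Prod.ext ?_ rfl
  funext q
  change prS ι _ c q = c (mn ι) * vt ι q
  rw [prS_apply]
  split_ifs with h
  · rw [vt_apply (vt_of_nz h), mul_one]
    exact cube_Z (z := (c, a)) hz (vt_of_nz h)
  · have : ∃ ω, q ω = 0 := by
      by_contra h2
      push Not at h2
      exact h (nz_vt h2)
    obtain ⟨ω, h3⟩ := this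
    rw [vt_apply0 h3, mul_zero]

/-- the top cell -/
def δC : (cube π χ).Z.V := ⟨(Pi.single 0 1, 0), by
  change dC (Pi.single 0 1, 0) = 0
  have h : (Pi.single 0 1 : Cells ι → kk) = prS ι 0 (Pi.single 0 1) := by
    funext q
    rw [prS_apply]
    split_ifs with h1
    · rfl
    · rw [Pi.single_eq_of_ne]
      rintro rfl
      exact h1 nz_zero
  rw [dC_apply, h, Dm_prS0]; simp⟩

lemma δC_PZ : (cube π χ).PZ 0 (δC π χ) = δC π χ := by
  apply Subtype.ext
  change pC 0 (Pi.single 0 1, 0) = (Pi.single 0 1, 0)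
  rw [pC_apply]
  refine Prod.ext ?_ (by simp)
  funext q
  change prS ι 0 _ q = (Pi.single 0 1 : Cells ι → kk) q
  rw [prS_apply]
  split_ifs with h1
  · rfl
  · rw [Pi.single_eq_of_ne]
    rintro rfl
    exact h1 nz_zero

lemma ca_zero (g : L) : ca π χ g (0 : Cells ι) = 0 := by
  funext i; simp [ca_apply]

lemma ca_zero_iff (g : L) (q : Cells ι) : ca π χ g q = 0 ↔ q = 0 := by
  constructor
  · intro h
    have h1 := congrArg (ca π χ g⁻¹) h
    rwa [← ca_mul, inv_mul_cancel, ca_one, ca_zero] at h1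
  · rintro rfl; exact ca_zero _ _ _

lemma δC_inv : Inv (cube π χ).Z (δC π χ) := by
  intro g
  apply Subtype.ext
  refine Prod.ext ?_ rfl
  funext q
  change (FC π χ).ρ g (Pi.single 0 1) q = (Pi.single 0 1 : Cells ι → kk) q
  rw [FC_ρ]
  simp only [Pi.single_apply, ca_zero_iff]

end cube
end S8
end
open TensorProduct
set_option linter.unusedSectionVars false
noncomputable section
namespace S8

lemma eqv_lid {L : Type} [Group L] (X : GM L) :
    Eqv (triv L ⊠ X) X (TensorProduct.lid kk X.V).toLinearMap := by
  intro g x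
  induction x using TensorProduct.induction_on with
  | zero => simp
  | add a b ha hb => rw [map_add, map_add, map_add, map_add, ha, hb]
  | tmul a b =>
    change (TensorProduct.lid kk X.V) (a ⊗ₜ[kk] (X.ρ g b)) = X.ρ g ((TensorProduct.lid kk X.V) (a ⊗ₜ[kk] b))
    rw [TensorProduct.lid_tmul, TensorProduct.lid_tmul, map_smul]

section restr
variable {ι : Type} [Fintype ι] [DecidableEq ι] {L : Type} [Group L]
variable (π : L →* Equiv.Perm ι) (χ : L →* C2)

def evA (n : ℕ) : ((cube π χ).Z ⊠ AA L n).V →ₗ[kk] (AA L n).V :=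
  (TensorProduct.lid kk (AA L n).V).toLinearMap ∘ₗ TensorProduct.map (evC π χ) LinearMap.id

lemma evA_eqv (n : ℕ) : Eqv ((cube π χ).Z ⊠ AA L n) (AA L n) (evA π χ n) :=
  Eqv.comp (Y := triv L ⊠ AA L n) (eqv_lid (AA L n)) ((evC_eqv π χ).map (Eqv.id (AA L n)))

variable {H : Type} [Group H] (θ : H →* L) (p : ι → Prop) [DecidablePred p]
  (hp : ∀ h i, p (π (θ h) i) ↔ p i)

def subPerm : H →* Equiv.Perm {i // p i} where
  toFun h := (π (θ h)).subtypePerm (hp h)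
  map_one' := by ext; simp
  map_mul' a b := by ext; simp; rfl

lemma subPerm_inv (h : H) (i : {i // p i}) :
    (((subPerm π θ p hp h)⁻¹ i : {i // p i}) : ι) = (π (θ h))⁻¹ i := by
  rw [Equiv.Perm.eq_inv_iff_eq]
  have : (subPerm π θ p hp h) ((subPerm π θ p hp h)⁻¹ i) = i := by simp
  exact congrArg Subtype.val this

def ex (p0 : ι → SignType) (q : Cells {i // p i}) : Cells ι :=
  fun i => if h : p i then q ⟨i, h⟩ else p0 i

lemma ex_pos (p0 : ι → SignType) (q : Cells {i // p i}) (i : {i // p i}) : ex p p0 q i.1 = q i := by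
  simp [ex, i.2]

lemma ex_neg (p0 : ι → SignType) (q : Cells {i // p i}) {i : ι} (h : ¬ p i) :
    ex p p0 q i = p0 i := by
  simp [ex, h]

lemma ex_update (p0 : ι → SignType) (q : Cells {i // p i}) (ω : {i // p i}) (a : SignType) :
    Function.update (ex p p0 q) ω.1 a = ex p p0 (Function.update q ω a) := by
  funext i
  by_cases h : p i
  · have h1 := ex_pos p p0 (Function.update q ω a) ⟨i, h⟩
    have h2 := ex_pos p p0 q ⟨i, h⟩
    simp only at h1 h2
    rw [h1]
    by_cases hi : i = ω.1
    · subst hi; simp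
    · rw [Function.update_of_ne hi, h2, Function.update_of_ne]
      rintro rfl; exact hi rfl
  · rw [Function.update_of_ne (by rintro rfl; exact h ω.2), ex_neg _ _ _ h, ex_neg _ _ _ h]

lemma ex_ca (p0 : ι → SignType)
    (hp0 : ∀ h i, ¬ p i → p0 (π (θ h) i) = sg (χ (θ h)) * p0 i) (h : H) (q : Cells {i // p i}) :
    ex p p0 (ca (subPerm π θ p hp) (χ.comp θ) h q) = ca π χ (θ h) (ex p p0 q) := by
  funext i
  rw [ca_apply]
  by_cases hi : p i
  · have h1 := ex_pos p p0 (ca (subPerm π θ p hp) (χ.comp θ) h q) ⟨i, hi⟩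
    have h2 := ex_pos p p0 q ((subPerm π θ p hp h)⁻¹ ⟨i, hi⟩)
    rw [subPerm_inv] at h2
    simp only at h1 h2
    rw [h1, h2, ca_apply]; rfl
  · have hi' : ¬ p ((π (θ h))⁻¹ i) := by
      rw [← hp h]; simpa using hi
    rw [ex_neg _ _ _ hi, ex_neg _ _ _ hi', ← hp0 h _ hi']; simp

lemma vt_ex (p0 : ι → SignType) (h0 : ∀ i, ¬ p i → p0 i ≠ 0) (q : Cells {i // p i}) :
    vt ι (ex p p0 q) = vt _ q := by
  by_cases h : ∀ ω, q ω ≠ 0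
  · rw [vt_apply h, vt_apply]
    intro ω
    by_cases hi : p ω
    · exact (ex_pos p p0 q ⟨ω, hi⟩).trans_ne (h _)
    · rw [ex_neg _ _ _ hi]; exact h0 _ hi
  · push Not at h
    obtain ⟨ω, h⟩ := h
    rw [vt_apply0 h, vt_apply0 (ω := ω.1)]
    rw [ex_pos, h]

lemma Dm_ex (p0 : ι → SignType) (h0 : ∀ i, ¬ p i → p0 i ≠ 0) (c : Cells ι → kk)
    (q : Cells {i // p i}) :
    Dm ι c (ex p p0 q) = Dm _ (fun q => c (ex p p0 q)) q := by
  rw [Dm_apply, Dm_apply]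
  symm
  refine Fintype.sum_of_injective (Subtype.val) Subtype.val_injective _ _ ?_ ?_
  · intro i hi
    have hi' : ¬ p i := by simpa using hi
    rw [dw_apply, if_neg]
    rw [ex_neg _ _ _ hi']; exact h0 _ hi'
  · intro i
    rw [dw_apply, dw_apply, ex_pos, ex_update, ex_update]

theorem cube_restr [Fintype L] [Fintype H] (hp : ∀ h i, p (π (θ h) i) ↔ p i)
    (hθ : Function.Injective θ) (p0 : ι → SignType)
    (h0 : ∀ i, ¬ p i → p0 i ≠ 0)
    (hp0 : ∀ h i, ¬ p i → p0 (π (θ h) i) = sg (χ (θ h)) * p0 i) {i0 : ι} (hi0 : ¬ p i0)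
    (n : ℕ) (e) (he : (cube π χ).Reach (δC π χ) n e) :
    IsNm (res θ (AA L n)) (evA π χ n e) := by
  let π' := subPerm π θ p hp
  let χ' := χ.comp θ
  let f : ((Cells ι → kk) × kk) →ₗ[kk] ((Cells {i // p i} → kk) × kk) :=
    LinearMap.prodMap (LinearMap.funLeft kk kk (ex p p0)) LinearMap.id
  have hfa : ∀ c a, f (c, a) = (fun q => c (ex p p0 q), a) := fun c a => rfl
  have hd : ∀ x, f (dC x) = dC (f x) := by
    rintro ⟨c, a⟩
    rw [dC_apply, hfa, hfa, dC_apply]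
    refine Prod.ext ?_ rfl
    funext q
    change Dm ι c (ex p p0 q) + a * vt ι (ex p p0 q) = Dm _ (fun q => c (ex p p0 q)) q + a * vt _ q
    rw [Dm_ex p p0 h0, vt_ex p p0 h0]
  let fZ : (cube π χ).Z.V →ₗ[kk] (cube π' χ').Z.V :=
    LinearMap.restrict f (by
      intro x hx
      have hx' : dC x = 0 := hx
      change dC (f x) = 0
      rw [← hd, hx', map_zero])
  have h1 := (cube π χ).vanish hθ (cube π' χ') f (by
    rintro h ⟨c, a⟩
    refine Prod.ext ?_ rfl
    funext q
    change c (ca π χ (θ h)⁻¹ (ex p p0 q)) = c (ex p p0 (ca π' χ' h⁻¹ q))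
    rw [ex_ca π χ θ p hp p0 hp0, map_inv]) fZ (fun z => rfl) hd (δC π χ) (by
    change f (Pi.single 0 1, 0) = 0
    rw [hfa]
    refine Prod.ext ?_ rfl
    funext q
    refine Pi.single_eq_of_ne ?_ _
    intro h
    have := congrFun h i0
    rw [ex_neg _ _ _ hi0] at this
    exact h0 _ hi0 this) n e he
  have h2 := h1.map ((evC_eqv π' χ').map (Eqv.id (res θ (AA L n))))
  have h3 := h2.map (eqv_lid (res θ (AA L n)))
  convert h3 using 1
  change _ = (TensorProduct.lid kk _) (TensorProduct.map _ _ (TensorProduct.map _ _ e))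
  rw [mm]
  change (TensorProduct.lid kk _) (TensorProduct.map _ _ e) = _
  congr 2
  congr 1
  apply LinearMap.ext
  intro z
  change z.1.1 (mn ι) = z.1.1 (ex p p0 (mn _))
  symm
  refine cube_Z (z := z.1) z.2 ?_
  intro ω
  by_cases hi : p ω
  · exact (ex_pos p p0 (mn _) ⟨ω, hi⟩).trans_ne (mn_ne _)
  · rw [ex_neg _ _ _ hi]; exact h0 _ hi

end restr
end S8
end
open TensorProduct
set_option linter.unusedSectionVars false
noncomputable section
namespace S8

lemma sum_C2 {A : Type} [AddCommMonoid A] (f : C2 → A) :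
    ∑ c, f c = f 1 + f (Multiplicative.ofAdd 1) := by
  have : (Finset.univ : Finset C2) = {1, Multiplicative.ofAdd 1} := by decide
  rw [this, Finset.sum_pair (by decide)]

section w
variable {ι : Type} [Fintype ι] [DecidableEq ι] [Nonempty ι]

def ch (S : Finset ι) : ι :=
  open Classical in if h : S.Nonempty then h.choose else Classical.arbitrary ι

lemma ch_mem {S : Finset ι} (h : S.Nonempty) : ch S ∈ S := by
  unfold ch; rw [dif_pos h]; exact h.choose_spec

def kap (q : Cells ι) : kk := if q (ch (Finset.univ.filter (fun i => q i ≠ 0))) = 1 then 1 else 0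

lemma kap_add {q q' : Cells ι} (h : ∀ i, q' i = - q i) (hq : nz q ≠ 0) : kap q + kap q' = 1 := by
  unfold kap
  have h1 : Finset.univ.filter (fun i => q' i ≠ 0) = Finset.univ.filter (fun i => q i ≠ 0) := by
    ext i
    simp only [Finset.mem_filter, Finset.mem_univ, true_and, h]
    generalize q i = a
    revert a; decide
  rw [h1, h]
  have h2 : (Finset.univ.filter (fun i => q i ≠ 0)).Nonempty := by
    rw [← Finset.card_ne_zero]; exact hq
  have h3 := ch_mem h2
  simp only [Finset.mem_filter, Finset.mem_univ, true_and] at h3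
  generalize q (ch _) = a at h3 ⊢
  revert a; decide

abbrev Gm (ι : Type) := Equiv.Perm ι
abbrev pG : Gm ι × C2 →* Equiv.Perm ι := MonoidHom.fst _ _
abbrev xG : Gm ι × C2 →* C2 := MonoidHom.snd _ _

lemma ca_inC (c : C2) (q : Cells ι) (i : ι) : ca pG xG (inC (Gm ι) c) q i = sg c * q i := rfl

def phiC (s : ℕ) : ((Cells ι → kk) × kk) →ₗ[kk] ((Cells ι → kk) × kk) :=
  LinearMap.inl kk _ kk ∘ₗ LinearMap.mulLeft kk (kap : Cells ι → kk) ∘ₗ prS ι s ∘ₗ LinearMap.fst kk _ _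

lemma phiC_apply (s : ℕ) (c : Cells ι → kk) (a : kk) :
    phiC s (c, a) = (kap * prS ι s c, 0) := rfl

lemma nullC (s : ℕ) (h1 : 1 ≤ s) (h2 : s ≤ Fintype.card ι) :
    Null (res (inC (Gm ι)) (cube pG (xG (ι := ι))).C) (res (inC (Gm ι)) (cube pG (xG (ι := ι))).C)
      ((cube pG (xG (ι := ι))).P s) := by
  refine ⟨phiC s, ?_⟩
  rintro ⟨c, a⟩
  rw [sum_C2]
  refine (pC_apply _ _ _).trans ?_
  rw [if_neg (by omega)]
  refine Prod.ext ?_ (by change (0 : kk) = 0 + 0; simp)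
  funext q
  set σ : C2 := Multiplicative.ofAdd 1
  have key : ∀ τ : C2, kap (ca pG xG (inC (Gm ι) τ)⁻¹ q) * prS ι s
      (fun q => c (ca pG xG ((inC (Gm ι) τ⁻¹))⁻¹ q)) (ca pG xG (inC (Gm ι) τ)⁻¹ q) =
      kap (ca pG xG (inC (Gm ι) τ)⁻¹ q) * prS ι s c q := by
    intro τ
    rw [prS_apply, prS_apply, nz_ca, ← ca_mul]
    rw [show (inC (Gm ι) τ⁻¹)⁻¹ * (inC (Gm ι) τ)⁻¹ = 1 by rw [map_inv, inv_inv, mul_inv_cancel],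
      ca_one]
  change prS ι s c q = kap (ca pG xG (inC (Gm ι) 1)⁻¹ q) * prS ι s
      (fun q => c (ca pG xG ((inC (Gm ι) 1⁻¹))⁻¹ q)) (ca pG xG (inC (Gm ι) 1)⁻¹ q) +
      kap (ca pG xG (inC (Gm ι) σ)⁻¹ q) * prS ι s
      (fun q => c (ca pG xG ((inC (Gm ι) σ⁻¹))⁻¹ q)) (ca pG xG (inC (Gm ι) σ)⁻¹ q)
  rw [key, key, ← add_mul]
  by_cases hq : nz q = s
  · rw [kap_add, one_mul]
    · intro i
      rw [← map_inv (inC (Gm ι)), ← map_inv (inC (Gm ι)), ca_inC, ca_inC]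
      rw [show sg (1 : C2)⁻¹ = 1 from rfl, show sg σ⁻¹ = -1 from by decide]
      generalize q i = a
      revert a; decide
    · rw [nz_ca]; omega
  · rw [prS_apply, if_neg hq, mul_zero]

lemma δC_not_norm : ¬ IsNm (res (inC (Gm ι)) (cube pG (xG (ι := ι))).Z) (δC pG (xG (ι := ι))) := by
  rintro ⟨z, hz⟩
  rw [nm_apply, sum_C2] at hz
  have h := congrFun (congrArg Prod.fst (congrArg Subtype.val hz)) 0
  change z.1.1 (ca pG xG _ 0) + z.1.1 (ca pG xG _ 0) = (Pi.single 0 1 : Cells ι → kk) 0 at h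
  rw [ca_zero, ca_zero, add_self_kk] at h
  simp at h

lemma e_not_norm (e) (he : (cube pG (xG (ι := ι))).Reach (δC pG xG) (Fintype.card ι) e)
    (hP : TensorProduct.map ((cube pG (xG (ι := ι))).PZ (Fintype.card ι)) LinearMap.id e = e) :
    ¬ IsNm (res (inC (Gm ι)) (AA (Gm ι × C2) (Fintype.card ι))) (evA pG xG (Fintype.card ι) e) := by
  intro h
  apply δC_not_norm (ι := ι)
  refine (cube pG (xG (ι := ι))).back (Fintype.card ι) nullC (δC pG xG) (Fintype.card ι) e he le_rfl ?_
  have h1 := h.map (((eqv_lid (AA (Gm ι × C2) (Fintype.card ι))).symm).res (inC (Gm ι)))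
  have h2 := h1.map (((jC_eqv pG (xG (ι := ι))).map (Eqv.id (AA (Gm ι × C2) (Fintype.card ι)))).res (inC (Gm ι)))
  convert h2 using 1
  change e = TensorProduct.map _ _ ((TensorProduct.lid kk _).symm ((TensorProduct.lid kk _) (TensorProduct.map _ _ e)))
  rw [LinearEquiv.symm_apply_apply, mm]
  conv_lhs => rw [← hP]
  congr 2
  apply LinearMap.ext
  intro z
  exact PZ_card _ _ z

lemma t_exists {G H : Type} [Group G] [Group H] (θ : H →* G) (hθ : Function.Injective θ)
    (χ : H → kk) (hχ : ∀ a b, χ (a * b) = χ a + χ b) :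
    ∃ t : G → kk, ∀ h x, t (θ h * x) = χ h + t x := by
  let S := QuotientGroup.rightRel θ.range
  let rep : G → G := fun x => (Quotient.mk S x).out
  have h1 : ∀ x, ∃ h, θ h = x * (rep x)⁻¹ := by
    intro x
    have : S (rep x) x := Quotient.exact (Quotient.out_eq (Quotient.mk S x))
    rw [QuotientGroup.rightRel_apply] at this
    exact this
  choose hh hhs using h1
  refine ⟨fun x => χ (hh x), fun h x => ?_⟩
  have h2 : rep (θ h * x) = rep x := by
    have : Quotient.mk S (θ h * x) = Quotient.mk S x := by
      apply Quotient.sound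
      change S _ _
      rw [QuotientGroup.rightRel_apply]
      exact ⟨h⁻¹, by simp⟩
    simp only [rep, this]
  have h3 : hh (θ h * x) = h * hh x := by
    apply hθ
    rw [hhs, h2, map_mul, hhs, mul_assoc]
  change χ (hh (θ h * x)) = _
  rw [h3, hχ]

lemma index_two_exists {H : Type} [Group H] [Fintype H] (hp : IsPGroup 2 H) (K : Subgroup H)
    (hK : K ≠ ⊤) : ∃ H' : Subgroup H, K ≤ H' ∧ H'.index = 2 := by
  haveI : Fact (Nat.Prime 2) := ⟨Nat.prime_two⟩
  obtain ⟨n, hn⟩ := IsPGroup.iff_card.1 hp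
  obtain ⟨m, hm⟩ := IsPGroup.iff_card.1 (hp.to_subgroup K)
  have hlt : m < n := by
    have h1 : Nat.card K ∣ Nat.card H := Subgroup.card_subgroup_dvd_card K
    have h2 : Nat.card K ≠ Nat.card H := by
      intro h; exact hK (Subgroup.eq_top_of_card_eq K h)
    rw [hn, hm] at h1 h2
    have := (Nat.pow_dvd_pow_iff_le_right (by norm_num : 1 < 2)).1 h1
    rcases this.lt_or_eq with h | h
    · exact h
    · exact absurd (by rw [h]) h2
  obtain ⟨k, rfl⟩ : ∃ k, n = k + 1 := ⟨n - 1, by omega⟩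
  obtain ⟨H', h1, h2⟩ := Sylow.exists_subgroup_card_pow_prime_le (G := H) 2 (n := m) (m := k)
    (by rw [hn]; exact pow_dvd_pow _ (by omega)) K hm (by omega)
  refine ⟨H', h2, ?_⟩
  have h3 := H'.card_mul_index
  rw [h1, hn, pow_succ] at h3
  exact Nat.eq_of_mul_eq_mul_left (by positivity) h3

theorem w_exists : ∃ w : (i : ℕ) → (AA (Gm ι) i).V, (∀ i, Inv (AA (Gm ι) i) (w i)) ∧
    w 0 = (1 : kk) ∧ IsNm (AA (Gm ι) (Fintype.card ι)) (w (Fintype.card ι)) ∧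
      HRel w (Fintype.card ι) := by
  classical
  obtain ⟨n, hn⟩ : ∃ n, n = Fintype.card ι := ⟨_, rfl⟩
  rw [← hn]
  obtain ⟨e, he, hei, heP⟩ := (cube pG (xG (ι := ι))).reach_exists (δC_inv _ _) (δC_PZ _ _) n
  have hxi : Inv (AA (Gm ι × C2) n) (evA pG xG n e) := hei.map (evA_eqv _ _ n)
  obtain ⟨w, hw, hwn, hh⟩ := horner n _ hxi
  refine ⟨w, hw, ?_, ?_, ?_⟩
  · by_contra h0
    have h0' : w 0 = (0 : kk) := by
      revert h0
      generalize w 0 = a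
      revert a
      exact (by decide : ∀ a : kk, ¬ a = 1 → a = 0)
    subst hn
    exact e_not_norm e he heP ((hh.res inC_inj).of_add (hor_norm_C w h0' _))
  · have h1 := cube_restr pG (xG (ι := ι)) (inG (Gm ι)) (fun _ => False) (fun _ _ => Iff.rfl) inG_inj
      (fun _ => 1) (fun _ _ => by decide) (fun _ _ _ => rfl) (i0 := Classical.arbitrary ι) id n e he
    have h2 := h1.map (pullA_eqv (inG (Gm ι)) (inG (Gm ι)) (MonoidHom.id _) (fun h x => map_mul _ _ _) n)
    rw [hwn]
    exact h2
  · intro H _ _ θ hθ hp hnt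
    obtain ⟨h1, hh1⟩ := exists_ne (1 : H)
    have : ∃ o, θ h1 o ≠ o := by
      by_contra hc
      push Not at hc
      apply hh1
      apply hθ
      rw [map_one]
      exact Equiv.ext hc
    obtain ⟨o, ho⟩ := this
    let K : Subgroup H := (MulAction.stabilizer (Equiv.Perm ι) o).comap θ
    have hKm : ∀ h, h ∈ K ↔ θ h o = o := fun h => Iff.rfl
    obtain ⟨H', hKH, hi⟩ := index_two_exists hp K (by
      intro hc
      exact ho ((hKm _).1 (hc ▸ Subgroup.mem_top h1)))
    let χ : H → kk := fun h => if h ∈ H' then 0 else 1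
    have hχ : ∀ a b, χ (a * b) = χ a + χ b := by
      intro a b
      simp only [χ, Subgroup.mul_mem_iff_of_index_two hi]
      by_cases ha : a ∈ H' <;> by_cases hb : b ∈ H' <;> simp [ha, hb]
      decide
    have hχ1 : χ 1 = 0 := by have := hχ 1 1; simpa using this
    have hχs : ∃ s, χ s = 1 := by
      by_contra hc
      push Not at hc
      have : H' = ⊤ := by
        rw [Subgroup.eq_top_iff']
        intro x
        by_contra hx
        exact hc x (if_neg hx)
      rw [this, Subgroup.index_top] at hi
      omega
    obtain ⟨t, ht⟩ := t_exists θ hθ χ hχ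
    refine ⟨χ, hχ, hχs, t, ht, ?_⟩
    let χh : H →* C2 :=
      { toFun := fun h => Multiplicative.ofAdd (χ h)
        map_one' := by rw [hχ1]; rfl
        map_mul' := fun a b => by rw [hχ]; rfl }
    let Φ : H →* Gm ι × C2 := θ.prod χh
    have hΦ : Function.Injective Φ := by
      intro a b hab
      exact hθ (congrArg Prod.fst hab)
    refine graph_norm θ Φ hΦ t ?_ n w hh ?_
    · intro h x
      rw [ht]; rfl
    · let p0 : ι → SignType := fun i => if ∃ g, θ g o = i ∧ χ g = 0 then 1 else -1
      have hp0 : ∀ g, p0 (θ g o) = sg (χh g) := by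
        intro g
        have hwd : ∀ g', θ g' o = θ g o → χ g' = χ g := by
          intro g' hg
          have h5 : g⁻¹ * g' ∈ H' := by
            apply hKH
            rw [hKm, map_mul, Equiv.Perm.mul_apply, hg, map_inv]; simp
          have h6 : χ (g⁻¹ * g') = 0 := if_pos h5
          have h7 := hχ g (g⁻¹ * g')
          rwa [mul_inv_cancel_left, h6, add_zero] at h7
        change (if ∃ g', θ g' o = θ g o ∧ χ g' = 0 then (1 : SignType) else -1) =
          if Multiplicative.ofAdd (χ g) = 1 then 1 else -1
        congr 1
        apply propext
        constructor
        · rintro ⟨g', h5, h6⟩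
          rw [← hwd g' h5, h6]; rfl
        · intro h5
          exact ⟨g, rfl, h5⟩
      refine cube_restr pG (xG (ι := ι)) Φ (fun i => ¬ ∃ g, θ g o = i) ?_ hΦ p0 ?_ ?_ (i0 := o) ?_ n e he
      · intro h i
        apply not_congr
        constructor
        · rintro ⟨g, hg⟩
          refine ⟨h⁻¹ * g, ?_⟩
          rw [map_mul, Equiv.Perm.mul_apply, hg]
          change (θ h⁻¹) (θ h i) = i
          rw [map_inv]; simp
        · rintro ⟨g, rfl⟩
          exact ⟨h * g, by rw [map_mul]; rfl⟩
      · intro i _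
        change (if _ then (1 : SignType) else -1) ≠ 0
        split_ifs <;> decide
      · intro h i hi
        rw [not_not] at hi
        obtain ⟨g, rfl⟩ := hi
        change p0 (θ h (θ g o)) = sg (χh h) * p0 (θ g o)
        rw [← Equiv.Perm.mul_apply, ← map_mul, hp0, hp0, map_mul, sg_mul]
      · rw [not_not]
        exact ⟨1, by simp⟩

end w
end S8
end
open TensorProduct
set_option linter.unusedSectionVars false
noncomputable section
namespace S8

section fin
variable {G : Type} [Group G] [Fintype G]

lemma Null_tens {W X : GM G} {w : W.V} (h : Null X ((X ⊠ W) ⊠ W) (rmul (X ⊠ W).V w ∘ₗ rmul X.V w))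
    (Y : GM G) : Null (X ⊠ Y) (((X ⊠ Y) ⊠ W) ⊠ W)
      (rmul ((X ⊠ Y) ⊠ W).V w ∘ₗ rmul (X ⊠ Y).V w) := by
  have h1 := (Null.map_left h (Eqv.id Y)).comp_left (eqv_rightComm (X ⊠ W) W Y)
  have h2 := h1.comp_left ((eqv_rightComm X W Y).map (Eqv.id W))
  convert h2 using 1
  apply TensorProduct.ext'
  intro x y
  rfl

lemma Null_of_iso {W X Y : GM G} {w : W.V}
    (h : Null X ((X ⊠ W) ⊠ W) (rmul (X ⊠ W).V w ∘ₗ rmul X.V w)) (hi : Iso X Y) :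
    Null Y ((Y ⊠ W) ⊠ W) (rmul (Y ⊠ W).V w ∘ₗ rmul Y.V w) := by
  obtain ⟨e, he⟩ := hi
  have h1 := h.comp_left ((he.map (Eqv.id W)).map (Eqv.id W))
  have h2 := Null.comp_right h1 he.symm
  convert h2 using 1
  apply LinearMap.ext
  intro x
  obtain ⟨y, rfl⟩ := e.surjective x
  change ((e y) ⊗ₜ[kk] w) ⊗ₜ[kk] w = ((e (e.symm (e y))) ⊗ₜ[kk] w) ⊗ₜ[kk] w
  rw [e.symm_apply_apply]

lemma KK_factor (a : Cls G) (l : List (Cls G)) (ha : a ∈ l) : ∀ Z : GM G,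
    ∃ R, Iso (a.D ⊠ R) (Z ⊠ KK l) := by
  induction l with
  | nil => simp at ha
  | cons b l ih =>
    intro Z
    rcases List.mem_cons.1 ha with rfl | h
    · refine ⟨Z ⊠ KK l, ?_⟩
      exact (Iso.assoc _ _ _).symm.trans (((Iso.comm _ _).tens (Iso.refl _)).trans (Iso.assoc _ _ _))
    · obtain ⟨R, hR⟩ := ih h (Z ⊠ b.D)
      exact ⟨R, hR.trans (Iso.assoc _ _ _)⟩

lemma nil_of_TZ {W : GM G} {w : W.V} (hw : Inv W w) (n : ℕ) : ∀ (X : GM G) (x : X.V), Inv X x →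
    TZ (itp W n X) → Nil W w n X x := by
  induction n with
  | zero => intro X x hx h; exact h x hx
  | succ n ih => intro X x hx h; exact ih (X ⊠ W) _ (hx.tmul hw) h

theorem alg_final (w : (i : ℕ) → (AA G i).V) (hw : ∀ i, Inv (AA G i) (w i)) (h0 : w 0 = (1 : kk))
    (hN : IsNm (AA G 8) (w 8)) (hrel : HRel w 8) (Y : GM G)
    (hY : ∀ i, 1 ≤ i → i ≤ 7 → ∀ m, ∃ n, TZ (Y ⊠ AA G (m + n * i))) (m : ℕ) : TZ (Y ⊠ AA G m) := by
  let cl : ℕ → Cls G := fun i => ⟨i, w (i + 1), hw (i + 1)⟩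
  refine main_alg ((List.range 7).map cl) Y ?_ ?_ m
  · intro a ha
    obtain ⟨i, hi, rfl⟩ := List.mem_map.1 ha
    rw [List.mem_range] at hi
    intro m x hx
    obtain ⟨n, hn⟩ := hY (i + 1) (by omega) (by omega) m
    exact ⟨n, nil_of_TZ (hw (i + 1)) n _ x hx ((itp_iso Y (i + 1) n m).symm.TZ hn)⟩
  · intro Z
    refine TZ_G w hw h0 7 hN hrel _ ?_
    intro i h1 h2
    obtain ⟨j, rfl⟩ : ∃ j, i = j + 1 := ⟨i - 1, by omega⟩
    obtain ⟨R, hR⟩ := KK_factor (cl j) ((List.range 7).map cl)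
      (List.mem_map.2 ⟨j, List.mem_range.2 (by omega), rfl⟩) (Z ⊠ Y)
    exact Null_of_iso (Null_tens (ww_null (cl j).hw (swap_AA j)) R) hR

end fin
end S8
end
open TensorProduct
set_option linter.unusedSectionVars false
noncomputable section
namespace S8

section shift
variable {L : Type} [Group L] [Fintype L]

/-- all equivariant maps factor through a projective -/
def SS (B X : GM L) : Prop := ∀ f, Eqv B X f → Null B X f

def NO (P : GM L) : Prop := Null P P LinearMap.id

lemma NO.left {P X : GM L} (h : NO P) {f : P.V →ₗ[kk] X.V} (hf : Eqv P X f) : Null P X f := by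
  simpa using Null.comp_left hf h

lemma NO.right {P X : GM L} (h : NO P) {f : X.V →ₗ[kk] P.V} (hf : Eqv X P f) : Null X P f := by
  simpa using Null.comp_right h hf

lemma SES.lift {A B P C : GM L} (E : SES B P C) {f : A.V →ₗ[kk] C.V} (hf : Null A C f) :
    ∃ F : A.V →ₗ[kk] P.V, Eqv A P F ∧ ∀ a, E.p (F a) = f a := by
  obtain ⟨φ, hφ⟩ := hf
  refine ⟨avg A P (E.s ∘ₗ φ), (null_avg _ _ _).eqv, fun a => ?_⟩
  rw [avg_apply, map_sum, hφ]
  refine Finset.sum_congr rfl (fun g _ => ?_)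
  rw [E.hp, LinearMap.comp_apply, E.ps]

lemma SES.extend {X B P C : GM L} (E : SES B P C) {f : B.V →ₗ[kk] X.V} (hf : Null B X f) :
    ∃ F : P.V →ₗ[kk] X.V, Eqv P X F ∧ ∀ a, F (E.i a) = f a := by
  obtain ⟨φ, hφ⟩ := hf
  refine ⟨avg P X (φ ∘ₗ E.r), (null_avg _ _ _).eqv, fun a => ?_⟩
  rw [avg_apply, hφ]
  refine Finset.sum_congr rfl (fun g _ => ?_)
  rw [← E.hi, LinearMap.comp_apply, E.ri]

lemma SES.desc {X B P C : GM L} (E : SES B P C) {f : P.V →ₗ[kk] X.V} (hf : Eqv P X f)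
    (h0 : ∀ a, f (E.i a) = 0) :
    ∃ F : C.V →ₗ[kk] X.V, Eqv C X F ∧ ∀ a, F (E.p a) = f a := by
  have h1 : ∀ a, f (E.s (E.p a)) = f a := by
    intro a
    conv_rhs => rw [← E.split a, map_add, h0, zero_add]
  refine ⟨f ∘ₗ E.s, ?_, h1⟩
  intro g c
  change f (E.s (C.ρ g c)) = X.ρ g (f (E.s c))
  rw [← hf, ← h1 (P.ρ g (E.s c)), E.hp, E.ps]

lemma SES.cores {A B P C : GM L} (E : SES B P C) {f : A.V →ₗ[kk] P.V} (hf : Eqv A P f)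
    (h0 : ∀ a, E.p (f a) = 0) :
    ∃ F : A.V →ₗ[kk] B.V, Eqv A B F ∧ ∀ a, E.i (F a) = f a := by
  have h1 : ∀ a, E.i (E.r (f a)) = f a := by
    intro a
    conv_rhs => rw [← E.split (f a), h0, map_zero, add_zero]
  refine ⟨E.r ∘ₗ f, ?_, h1⟩
  intro g c
  apply E.inj
  rw [E.hi]
  exact (h1 _).trans ((hf _ _).trans (congrArg _ (h1 c).symm))

lemma SS_ext {B P C X : GM L} (E : SES B P C) (hP : NO P) :
    SS B X ↔ ∀ f, Eqv B X f → ∃ F : P.V →ₗ[kk] X.V, Eqv P X F ∧ ∀ a, F (E.i a) = f a := by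
  constructor
  · intro h f hf
    exact E.extend (h f hf)
  · intro h f hf
    obtain ⟨F, hF, h1⟩ := h f hf
    have := Null.comp_right (hP.left hF) E.hi
    convert this using 1
    apply LinearMap.ext
    intro a
    exact (h1 a).symm

lemma SS_shift {B P C X I X' : GM L} (E : SES B P C) (F : SES X I X') (hP : NO P) (hI : NO I) :
    SS B X ↔ SS C X' := by
  constructor
  · intro h f hf
    obtain ⟨f1, hf1, h1⟩ := F.lift (hP.left (hf.comp E.hp))
    obtain ⟨b, hb, h2⟩ := F.cores (hf1.comp E.hi) (by
      intro a
      rw [LinearMap.comp_apply, h1, LinearMap.comp_apply, E.pi, map_zero])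
    obtain ⟨b1, hb1, h3⟩ := E.extend (h b hb)
    obtain ⟨c, hc, h4⟩ := E.desc (hf1.add (F.hi.comp hb1)) (by
      intro a
      rw [LinearMap.add_apply, LinearMap.comp_apply, h3, h2]
      exact add_self_kk _)
    have h5 := (hI.right hc).comp_left F.hp
    convert h5 using 1
    apply LinearMap.ext
    intro x
    rw [← E.ps x, LinearMap.comp_apply, h4, LinearMap.add_apply, map_add, h1, LinearMap.comp_apply,
      LinearMap.comp_apply, F.pi, add_zero]
  · intro h f hf
    obtain ⟨f1, hf1, h1⟩ := E.extend (hI.right (F.hi.comp hf))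
    obtain ⟨c, hc, h2⟩ := E.desc (F.hp.comp hf1) (by
      intro a
      rw [LinearMap.comp_apply, h1, LinearMap.comp_apply, F.pi])
    obtain ⟨c1, hc1, h3⟩ := F.lift (h c hc)
    obtain ⟨b, hb, h4⟩ := F.cores (hf1.add (hc1.comp E.hp)) (by
      intro a
      rw [LinearMap.add_apply, map_add, LinearMap.comp_apply, h3, h2, LinearMap.comp_apply]
      exact add_self_kk _)
    have h5 := Null.comp_right (hP.left hb) E.hi
    convert h5 using 1
    apply LinearMap.ext
    intro x
    apply F.inj
    rw [LinearMap.comp_apply, h4, LinearMap.add_apply, h1, LinearMap.comp_apply, LinearMap.comp_apply,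
      E.pi, map_zero, add_zero]

lemma SS_iso_right {B X Y : GM L} (h : Iso X Y) (hs : SS B X) : SS B Y := by
  obtain ⟨e, he⟩ := h
  intro f hf
  have := (hs _ (he.symm.comp hf)).comp_left he
  convert this using 1
  apply LinearMap.ext
  intro x
  simp

lemma SS_iso_left {B B' X : GM L} (h : Iso B B') (hs : SS B X) : SS B' X := by
  obtain ⟨e, he⟩ := h
  intro f hf
  have := (hs _ (hf.comp he)).comp_right he.symm
  convert this using 1
  apply LinearMap.ext
  intro x
  simp

lemma SS_shift_Q {B P C X : GM L} (E : SES B P C) (hP : NO P) :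
    SS B X ↔ SS C (X ⊠ QQ L) := by
  have h1 : NO (X ⊠ FF L) := by
    have h1 := Null.map_right (Eqv.id X) (null_FF L)
    rwa [TensorProduct.map_id] at h1
  rw [← SS_shift E ((sQ L).tl X) hP h1]
  exact ⟨SS_iso_right (Iso.rid X).symm, SS_iso_right (Iso.rid X)⟩

/-! Resolutions at the level of `GM`. -/

structure Rs (M : GM L) where
  P : ℕ → GM L
  NP : ∀ n, NO (P n)
  ε : (P 0).V →ₗ[kk] M.V
  d : ∀ n, (P (n + 1)).V →ₗ[kk] (P n).V
  eε : Eqv (P 0) M ε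
  ed : ∀ n, Eqv (P (n + 1)) (P n) (d n)
  sur : ∀ m, ∃ x, ε x = m
  ex0 : ∀ x, ε x = 0 ↔ ∃ y, d 0 y = x
  exn : ∀ n x, d n x = 0 ↔ ∃ y, d (n + 1) y = x

namespace Rs
variable {M : GM L} (X : Rs M)

lemma rg_stable {A B : GM L} {p : A.V →ₗ[kk] B.V} (hp : Eqv A B p) :
    ∀ g, ∀ x ∈ LinearMap.range p, B.ρ g x ∈ LinearMap.range p := by
  rintro g _ ⟨y, rfl⟩
  exact ⟨A.ρ g y, hp g y⟩

abbrev rg {A B : GM L} {p : A.V →ₗ[kk] B.V} (hp : Eqv A B p) : GM L :=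
  subGM B (LinearMap.range p) (rg_stable hp)

lemma ses_exists {A B C : GM L} {p : A.V →ₗ[kk] B.V} (hp : Eqv A B p) {q : B.V →ₗ[kk] C.V}
    (hq : Eqv B C q) (hex : ∀ x, q x = 0 ↔ ∃ y, p y = x) (hs : ∀ c, ∃ b, q b = c) :
    ∃ E : SES (rg hp) B C, (∀ a, E.i a = a.1) ∧ ∀ b, E.p b = q b := by
  obtain ⟨s, hs'⟩ := LinearMap.exists_rightInverse_of_surjective q (LinearMap.range_eq_top.2 hs)
  have ps : ∀ c, q (s c) = c := fun c => LinearMap.congr_fun hs' c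
  refine ⟨{ i := (LinearMap.range p).subtype
            p := q
            r := LinearMap.codRestrict _ (LinearMap.id + s ∘ₗ q) (by
              intro x
              refine (hex _).1 ?_
              simp [ps, add_self_kk])
            s := s
            hi := eqv_subtype _
            hp := hq
            ri := ?_
            ps := ps
            split := ?_ }, fun a => rfl, fun b => rfl⟩
  · intro a
    apply Subtype.ext
    have : q a.1 = 0 := (hex _).2 a.2
    change a.1 + s (q a.1) = a.1
    rw [this, map_zero, add_zero]
  · intro b
    change b + s (q b) + s (q b) = b
    rw [add_assoc, add_self_kk, add_zero]

lemma rg_eqv {A B : GM L} {p : A.V →ₗ[kk] B.V} (hp : Eqv A B p) : Eqv A (rg hp) p.rangeRestrict := by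
  intro g x
  apply Subtype.ext
  exact hp g x

lemma ses_succ (n : ℕ) : ∃ E : SES (rg (X.ed (n + 1))) (X.P (n + 1)) (rg (X.ed n)),
    (∀ a, E.i a = a.1) ∧ ∀ b, E.p b = (X.d n).rangeRestrict b := by
  refine ses_exists (X.ed (n + 1)) (rg_eqv (X.ed n)) ?_ ?_
  · intro x
    rw [← X.exn n x]
    exact ⟨fun h => congrArg Subtype.val h, fun h => Subtype.ext h⟩
  · exact fun c => LinearMap.surjective_rangeRestrict _ c

lemma ses_zero : ∃ E : SES (rg (X.ed 0)) (X.P 0) M, (∀ a, E.i a = a.1) ∧ ∀ b, E.p b = X.ε b :=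
  ses_exists (X.ed 0) X.eε X.ex0 X.sur

lemma SS_iff (n : ℕ) : ∀ N : GM L, SS (rg (X.ed n)) N ↔ SS M (N ⊠ AA L (n + 1)) := by
  induction n with
  | zero =>
    intro N
    obtain ⟨E, -⟩ := X.ses_zero
    rw [SS_shift_Q E (X.NP 0)]
    have : Iso (QQ L) (AA L 1) := (Iso.rid (QQ L)).symm.trans (Iso.comm _ _)
    exact ⟨SS_iso_right ((Iso.refl N).tens this), SS_iso_right ((Iso.refl N).tens this.symm)⟩
  | succ n ih =>
    intro N
    obtain ⟨E, -⟩ := X.ses_succ n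
    rw [SS_shift_Q E (X.NP (n + 1)), ih]
    have : Iso ((N ⊠ QQ L) ⊠ AA L (n + 1)) (N ⊠ AA L (n + 1 + 1)) :=
      (Iso.right_comm _ _ _).trans (Iso.assoc _ _ _)
    exact ⟨SS_iso_right this, SS_iso_right this.symm⟩

theorem coc_iff (n : ℕ) (N : GM L) :
    (∀ φ : (X.P (n + 1)).V →ₗ[kk] N.V, Eqv (X.P (n + 1)) N φ → (∀ x, φ (X.d (n + 1) x) = 0) →
      ∃ ψ : (X.P n).V →ₗ[kk] N.V, Eqv (X.P n) N ψ ∧ ∀ x, φ x = ψ (X.d n x)) ↔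
    SS M (N ⊠ AA L (n + 1)) := by
  rw [← X.SS_iff n N]
  obtain ⟨C, E, hE⟩ : ∃ (C : GM L), ∃ E : SES (rg (X.ed n)) (X.P n) C, ∀ a, E.i a = a.1 := by
    cases n with
    | zero =>
      obtain ⟨E, h, -⟩ := X.ses_zero
      exact ⟨_, E, h⟩
    | succ n =>
      obtain ⟨E, h, -⟩ := X.ses_succ n
      exact ⟨_, E, h⟩
  rw [SS_ext E (X.NP n)]
  constructor
  · intro h f hf
    obtain ⟨ψ, hψ, h1⟩ := h (f ∘ₗ (X.d n).rangeRestrict) (hf.comp (rg_eqv (X.ed n))) (by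
      intro x
      have : (X.d n).rangeRestrict (X.d (n + 1) x) = 0 :=
        Subtype.ext ((X.exn n _).2 ⟨x, rfl⟩)
      rw [LinearMap.comp_apply, this, map_zero])
    refine ⟨ψ, hψ, ?_⟩
    rintro ⟨_, y, rfl⟩
    rw [hE]
    exact (h1 y).symm
  · intro h φ hφ h0
    obtain ⟨E', hE', hp'⟩ := X.ses_succ n
    obtain ⟨F, hF, h1⟩ := E'.desc hφ (by
      rintro ⟨_, y, rfl⟩
      rw [hE']
      exact h0 y)
    obtain ⟨ψ, hψ, h2⟩ := h F hF
    refine ⟨ψ, hψ, fun x => ?_⟩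
    rw [← h1, hp', ← h2, hE]
    rfl

end Rs
end shift
end S8
end
open TensorProduct
set_option linter.unusedSectionVars false
noncomputable section
namespace S8

section link
variable {G : Type} [Group G] [Fintype G]

abbrev RR (G : Type) [Group G] := MonoidAlgebra kk G

abbrev gl (g : G) : RR G := MonoidAlgebra.single g 1

lemma gl_one : gl (1 : G) = 1 := rfl
lemma gl_mul (g h : G) : gl (g * h) = gl g * gl h := by
  simp [gl, MonoidAlgebra.single_mul_single]

abbrev toMod (M : Type) [AddCommGroup M] [Module (RR G) M] : Module kk M :=
  Module.compHom M (algebraMap kk (RR G))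

def toGM (M : Type) [AddCommGroup M] [Module (RR G) M] : GM G :=
  letI : Module kk M := toMod (G := G) M
  { V := M
    ρ :=
      { toFun := fun g => AddMonoidHom.toZModLinearMap 2 (DistribSMul.toAddMonoidHom M (gl g))
        map_one' := by
          apply LinearMap.ext
          intro x
          change gl (1 : G) • x = x
          rw [gl_one, one_smul]
        map_mul' := by
          intro g h
          apply LinearMap.ext
          intro x
          change gl (g * h) • x = gl g • gl h • x
          rw [gl_mul, mul_smul] } }

section
variable {M N : Type} [AddCommGroup M] [Module (RR G) M] [AddCommGroup N] [Module (RR G) N]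

/-- linear map to GM map -/
def toL (f : M →ₗ[RR G] N) : (toGM (G := G) M).V →ₗ[kk] (toGM (G := G) N).V :=
  AddMonoidHom.toZModLinearMap (M := (toGM (G := G) M).V) (M₁ := (toGM (G := G) N).V) 2 f.toAddMonoidHom

lemma toL_apply (f : M →ₗ[RR G] N) (x : M) : toL f x = f x := rfl

lemma toGM_ρ (g : G) (x : M) : (toGM (G := G) M).ρ g x = gl g • x := rfl

lemma toL_eqv (f : M →ₗ[RR G] N) : Eqv (toGM (G := G) M) (toGM (G := G) N) (toL f) := by
  intro g x
  exact f.map_smul (gl g) x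

lemma kk_cases (c : kk) : c = 0 ∨ c = 1 := by
  revert c; decide

def ofL (φ : (toGM (G := G) M).V →ₗ[kk] (toGM (G := G) N).V)
    (h : Eqv (toGM (G := G) M) (toGM (G := G) N) φ) : M →ₗ[RR G] N where
  toFun := fun x => (φ x : (toGM (G := G) N).V)
  map_add' := fun x y => φ.map_add x y
  map_smul' := by
    intro r x
    change φ (r • x : M) = (r • (show N from φ x) : N)
    induction r using MonoidAlgebra.induction_linear with
    | zero =>
      rw [zero_smul, zero_smul]
      exact φ.map_zero
    | add a b ha hb =>
      rw [add_smul, add_smul, ← ha, ← hb]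
      exact φ.map_add _ _
    | single g c =>
      rcases kk_cases c with rfl | rfl
      · rw [MonoidAlgebra.single_zero, zero_smul, zero_smul]
        exact φ.map_zero
      · exact h g x

lemma ofL_apply (φ : (toGM (G := G) M).V →ₗ[kk] (toGM (G := G) N).V)
    (h : Eqv (toGM (G := G) M) (toGM (G := G) N) φ) (x : M) : ofL φ h x = φ x := rfl

end

/-- the coefficient at one -/
def c1 (a : RR G) : RR G := MonoidAlgebra.single 1 (a.coeff 1)

lemma c1_zero : c1 (0 : RR G) = 0 := by simp [c1]
lemma c1_add (a b : RR G) : c1 (a + b) = c1 a + c1 b := by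
  simp [c1, MonoidAlgebra.single_add]

lemma c1_sum (a : RR G) : ∑ g : G, gl g * c1 (gl g⁻¹ * a) = a := by
  classical
  induction a using MonoidAlgebra.induction_linear with
  | zero => simp [c1_zero]
  | add a b ha hb =>
    conv_rhs => rw [← ha, ← hb]
    rw [← Finset.sum_add_distrib]
    refine Finset.sum_congr rfl (fun g _ => ?_)
    rw [mul_add, c1_add, mul_add]
  | single h c =>
    rw [Finset.sum_eq_single h]
    · simp [c1, gl, MonoidAlgebra.single_mul_single]
    · intro g _ hg
      have : g⁻¹ * h ≠ 1 := by
        intro h1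
        exact hg (inv_mul_eq_one.1 h1)
      simp [c1, gl, MonoidAlgebra.single_mul_single, Finsupp.single_apply, this]
    · simp

lemma NO_of_projective (P : Type) [AddCommGroup P] [Module (RR G) P] [Module.Projective (RR G) P] :
    NO (toGM (G := G) P) := by
  obtain ⟨s, hs⟩ := Module.Projective.out (R := RR G) (P := P)
  let c1h : RR G →+ RR G := ⟨⟨c1, c1_zero⟩, c1_add⟩
  let φ : P →+ P := (Finsupp.linearCombination (RR G) (id : P → P)).toAddMonoidHom.comp
    ((Finsupp.mapRange.addMonoidHom c1h).comp s.toAddMonoidHom)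
  refine ⟨AddMonoidHom.toZModLinearMap (M := (toGM (G := G) P).V) (M₁ := (toGM (G := G) P).V) 2 φ, ?_⟩
  intro (v : P)
  have key : ∀ u : P →₀ RR G, ∑ g : G, gl g • (Finsupp.mapRange.addMonoidHom c1h (gl g⁻¹ • u)) = u := by
    intro u
    apply Finsupp.ext
    intro p
    rw [Finset.sum_apply']
    exact c1_sum (u p)
  have h1 : (v : P) = ∑ g : G, gl g • φ (gl g⁻¹ • (show P from v)) := by
    have h2 := congrArg (Finsupp.linearCombination (RR G) (id : P → P)) (key (s v))
    rw [map_sum, hs] at h2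
    refine h2.symm.trans (Finset.sum_congr rfl (fun g _ => ?_))
    rw [map_smul, ← map_smul s]
    rfl
  exact h1

end link
end S8
end
open TensorProduct
set_option linter.unusedSectionVars false
noncomputable section
namespace S8

section hom
variable {G : Type} [Group G] [Fintype G]

abbrev homGM (M X : GM G) : GM G := ⟨M.V →ₗ[kk] X.V, Representation.linHom M.ρ X.ρ⟩

lemma homGM_ρ (M X : GM G) (g : G) (f : M.V →ₗ[kk] X.V) (v : M.V) :
    ((homGM M X).ρ g f : M.V →ₗ[kk] X.V) v = X.ρ g (f (M.ρ g⁻¹ v)) := rfl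

lemma inv_hom_iff (M X : GM G) (f : M.V →ₗ[kk] X.V) : Inv (homGM M X) f ↔ Eqv M X f := by
  constructor
  · intro h g x
    have := LinearMap.congr_fun (h g) (M.ρ g x)
    rw [homGM_ρ, ρ_inv_self] at this
    exact this.symm
  · intro h g
    apply LinearMap.ext
    intro x
    rw [homGM_ρ, ← h, ρ_self_inv]

lemma nm_hom_iff (M X : GM G) (f : M.V →ₗ[kk] X.V) : IsNm (homGM M X) f ↔ Null M X f := by
  constructor
  · rintro ⟨φ, hφ⟩
    refine ⟨φ, fun v => ?_⟩
    rw [← hφ, nm_apply, LinearMap.sum_apply]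
    rfl
  · rintro ⟨φ, hφ⟩
    refine ⟨φ, ?_⟩
    rw [nm_apply]
    apply LinearMap.ext
    intro v
    rw [LinearMap.sum_apply, hφ]
    rfl

lemma SS_iff_TZ (M X : GM G) : SS M X ↔ TZ (homGM M X) := by
  constructor
  · intro h f hf
    exact (nm_hom_iff _ _ _).2 (h f ((inv_hom_iff _ _ _).1 hf))
  · intro h f hf
    exact (nm_hom_iff _ _ _).1 (h f ((inv_hom_iff _ _ _).2 hf))

lemma hom_tens (M N A : GM G) [Module.Finite kk M.V] :
    Iso (homGM M N ⊠ A) (homGM M (N ⊠ A)) := by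
  refine ⟨rTensorHomEquivHomRTensor kk M.V N.V A.V, ?_⟩
  intro g x
  induction x using TensorProduct.induction_on with
  | zero => simp
  | add x y hx hy => rw [map_add, LinearEquiv.coe_coe, map_add] at *; rw [hx, hy, ← map_add, ← map_add]
  | tmul f a =>
    rw [tens_ρ]
    apply LinearMap.ext
    intro v
    rw [homGM_ρ]
    simp only [LinearEquiv.coe_coe, rTensorHomEquivHomRTensor_apply, TensorProduct.rTensorHomToHomRTensor_apply]
    rw [tens_ρ]
    rfl

end hom

section ext
open CategoryTheory
variable {G : Type} [Group G] [Fintype G]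

variable (M N : ModuleCat.{0} (RR G)) (P : ProjectiveResolution M)

def rsP : Rs (toGM (G := G) M) where
  P := fun n => toGM (G := G) (P.complex.X n)
  NP := fun n => by
    have := (IsProjective.iff_projective (R := RR G) (P.complex.X n)).2 (P.projective n)
    exact NO_of_projective _
  ε := toL (P.π.f 0).hom
  d := fun n => toL (P.complex.d (n + 1) n).hom
  eε := toL_eqv _
  ed := fun n => toL_eqv _
  sur := (ModuleCat.epi_iff_surjective (P.π.f 0)).1 inferInstance
  ex0 := by
    intro x
    constructor
    · exact (ShortComplex.moduleCat_exact_iff _).1 P.exact₀ x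
    · rintro ⟨y, rfl⟩
      exact congrArg (fun f => f.hom y) P.complex_d_comp_π_f_zero
  exn := by
    intro n x
    constructor
    · exact (ShortComplex.moduleCat_exact_iff _).1 (P.exact_succ n) x
    · rintro ⟨y, rfl⟩
      exact congrArg (fun f => f.hom y) (P.complex.d_comp_d (n + 2) (n + 1) n)

lemma ext_iff (n : ℕ) :
    Subsingleton (((_root_.Ext kk (ModuleCat.{0} (RR G)) (n + 1)).obj (Opposite.op M)).obj N) ↔
      SS (toGM (G := G) M) (toGM (G := G) N ⊠ AA G (n + 1)) := by
  obtain ⟨P⟩ := (inferInstance : HasProjectiveResolution M).out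
  rw [← (rsP M P).coc_iff n, ModuleCat.isZero_iff_subsingleton.symm,
    (P.isoExt (R := kk) (n + 1) N).isZero_iff,
    ← HomologicalComplex.exactAt_iff_isZero_homology,
    HomologicalComplex.exactAt_iff' _ n (n + 1) (n + 2) (by simp) (by simp),
    ShortComplex.moduleCat_exact_iff]
  constructor
  · intro h φ hφ h0
    obtain ⟨ψ, hψ⟩ := h (ModuleCat.ofHom (ofL φ hφ) : P.complex.X (n + 1) ⟶ N) (by
      change P.complex.d (n + 2) (n + 1) ≫ ModuleCat.ofHom (ofL φ hφ) = 0
      ext x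
      exact h0 x)
    change P.complex.X n ⟶ N at ψ
    change P.complex.d (n + 1) n ≫ ψ = ModuleCat.ofHom (ofL φ hφ) at hψ
    refine ⟨toL ψ.hom, toL_eqv _, fun x => ?_⟩
    exact (congrArg (fun f => f.hom x) hψ).symm
  · intro h φ h0
    change P.complex.X (n + 1) ⟶ N at φ
    change P.complex.d (n + 2) (n + 1) ≫ φ = 0 at h0
    obtain ⟨ψ, hψ, h1⟩ := h (toL φ.hom) (toL_eqv _) (fun x => congrArg (fun f => f.hom x) h0)
    refine ⟨(ModuleCat.ofHom (ofL ψ hψ) : P.complex.X n ⟶ N), ?_⟩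
    change P.complex.d (n + 1) n ≫ ModuleCat.ofHom (ofL ψ hψ) = φ
    ext x
    exact (h1 x).symm

end ext

end S8
end
open TensorProduct
set_option linter.unusedSectionVars false
noncomputable section
namespace S8

lemma toGM_finite (M : Type) [AddCommGroup M] [Module (RR (Equiv.Perm (Fin 8))) M]
    [Module.Finite (RR (Equiv.Perm (Fin 8))) M] :
    Module.Finite kk (toGM (G := Equiv.Perm (Fin 8)) M).V := by
  have : Finite (RR (Equiv.Perm (Fin 8))) :=
    Finite.of_equiv _ (MonoidAlgebra.coeffEquiv (R := kk) (M := Equiv.Perm (Fin 8))).symm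
  have h : Finite M := Module.finite_of_finite (RR (Equiv.Perm (Fin 8)))
  have h' : Finite (toGM (G := Equiv.Perm (Fin 8)) M).V := h
  exact Module.Finite.of_finite

lemma ext_TZ (M N : Type) [AddCommGroup M] [Module (RR (Equiv.Perm (Fin 8))) M]
    [Module.Finite (RR (Equiv.Perm (Fin 8))) M]
    [AddCommGroup N] [Module (RR (Equiv.Perm (Fin 8))) N] (m : ℕ) (hm : 0 < m) :
    Subsingleton (((_root_.Ext kk (ModuleCat.{0} (RR (Equiv.Perm (Fin 8)))) m).obj
      (Opposite.op (ModuleCat.of _ M))).obj (ModuleCat.of _ N)) ↔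
      TZ (homGM (toGM (G := Equiv.Perm (Fin 8)) M) (toGM N) ⊠ AA (Equiv.Perm (Fin 8)) m) := by
  obtain ⟨n, rfl⟩ := Nat.exists_eq_succ_of_ne_zero hm.ne'
  have := toGM_finite M
  rw [Nat.succ_eq_add_one, ext_iff]
  refine (SS_iff_TZ (toGM (G := Equiv.Perm (Fin 8)) M) _).trans ?_
  have i := hom_tens (toGM (G := Equiv.Perm (Fin 8)) M) (toGM N) (AA (Equiv.Perm (Fin 8)) (n + 1))
  exact ⟨i.symm.TZ, i.TZ⟩

theorem main (M N : Type) [AddCommGroup M] [Module (RR (Equiv.Perm (Fin 8))) M]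
    [Module.Finite (RR (Equiv.Perm (Fin 8))) M]
    [AddCommGroup N] [Module (RR (Equiv.Perm (Fin 8))) N]
    (hm : ∃ m : ℕ, 0 < m ∧ Nontrivial (((_root_.Ext kk (ModuleCat.{0} (RR (Equiv.Perm (Fin 8)))) m).obj
      (Opposite.op (ModuleCat.of _ M))).obj (ModuleCat.of _ N))) :
    ∃ t : ℕ, t ≤ 419 ∧ ∃ m₀ : ℕ, ∀ m ≥ m₀, m % 420 = t →
      Nontrivial (((_root_.Ext kk (ModuleCat.{0} (RR (Equiv.Perm (Fin 8)))) m).obj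
      (Opposite.op (ModuleCat.of _ M))).obj (ModuleCat.of _ N)) := by
  by_contra hc
  push Not at hc
  obtain ⟨m, hm0, hm1⟩ := hm
  obtain ⟨w, hw, h0, hN, hrel⟩ := w_exists (ι := Fin 8)
  rw [Fintype.card_fin] at hN hrel
  refine not_subsingleton_iff_nontrivial.2 hm1 ((ext_TZ M N m hm0).2 ?_)
  refine alg_final w hw h0 hN hrel _ ?_ m
  intro i hi1 hi2 m
  obtain ⟨m', h1, h2, h3⟩ := hc (m % 420) (by omega) (m + 1)
  have hd : i ∣ 420 := by interval_cases i <;> decide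
  obtain ⟨n, hn⟩ : i ∣ m' - m :=
    hd.trans ((Nat.modEq_iff_dvd' (by omega)).1 (show m ≡ m' [MOD 420] from h2.symm))
  refine ⟨n, ?_⟩
  have : m + n * i = m' := by rw [mul_comm, ← hn]; omega
  rw [this]
  exact (ext_TZ M N m' (by omega)).1 (by
    first
    | exact h3
    | exact not_nontrivial_iff_subsingleton.1 h3)

end S8
end

open CategoryTheory

/-- **Statement 14.** Let `k = 𝔽₂` and `G = S₈` the symmetric group on eight letters, and
let `M, N` be finitely generated left `kG`-modules.  If `Ext_{kG}^m(M,N) ≠ 0` for some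
`m > 0`, then there are integers `t` with `0 ≤ t ≤ 419` and `m₀` such that
`Ext_{kG}^m(M,N) ≠ 0` for every `m ≥ m₀` with `m ≡ t (mod 420)`. -/
theorem stmt_15
    (M N : Type) [AddCommGroup M]
    [Module (MonoidAlgebra (ZMod 2) (Equiv.Perm (Fin 8))) M]
    [Module.Finite (MonoidAlgebra (ZMod 2) (Equiv.Perm (Fin 8))) M]
    [AddCommGroup N] [Module (MonoidAlgebra (ZMod 2) (Equiv.Perm (Fin 8))) N]
    [Module.Finite (MonoidAlgebra (ZMod 2) (Equiv.Perm (Fin 8))) N]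
    (hm : ∃ m : ℕ, 0 < m ∧ Nontrivial
      (((_root_.Ext (ZMod 2) (ModuleCat (MonoidAlgebra (ZMod 2) (Equiv.Perm (Fin 8)))) m).obj
        (Opposite.op (ModuleCat.of (MonoidAlgebra (ZMod 2) (Equiv.Perm (Fin 8))) M))).obj
        (ModuleCat.of (MonoidAlgebra (ZMod 2) (Equiv.Perm (Fin 8))) N))) :
    ∃ t : ℕ, t ≤ 419 ∧ ∃ m₀ : ℕ, ∀ m ≥ m₀, m % 420 = t → Nontrivial
      (((_root_.Ext (ZMod 2) (ModuleCat (MonoidAlgebra (ZMod 2) (Equiv.Perm (Fin 8)))) m).obj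
        (Opposite.op (ModuleCat.of (MonoidAlgebra (ZMod 2) (Equiv.Perm (Fin 8))) M))).obj
        (ModuleCat.of (MonoidAlgebra (ZMod 2) (Equiv.Perm (Fin 8))) N)) := by
  exact S8.main M N hm
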